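/- arXiv:1003.0625 — 2 statements merged into one kernel-verified Lean document; each statement's English description precedes it below -/
import Mathlib

section
/- Let N ∈ {3,4,5} and let v : ℝ^N → ℝ be continuously differentiable with ∇v ∈ L²(ℝ^N) and v ∈ L^{2N/(N−2)}(ℝ^N). If ∫_{ℝ^N}|∇v|² dx ≤ ∫_{ℝ^N}|∇W|² dx and E(v,0) ≤ E(W,0), then ∫_{ℝ^N}|∇v|² dx ≤ N·E(v,0). -/
open MeasureTheory Metric Filter Set

noncomputable section

/-- The ground state `W(x) = (1 + |x|²/(N(N-2)))^(-(N-2)/2)`. -/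
def W (N : ℕ) (x : EuclideanSpace ℝ (Fin N)) : ℝ :=
  (1 + ‖x‖ ^ 2 / ((N : ℝ) * ((N : ℝ) - 2))) ^ (-(((N : ℝ) - 2) / 2))

/-- The energy `E(v₀,v₁)`. -/
def energy (N : ℕ) (v₀ v₁ : EuclideanSpace ℝ (Fin N) → ℝ) : ℝ :=
  (1 / 2) * (∫ x, v₁ x ^ 2)
    + (1 / 2) * (∫ x, ‖gradient v₀ x‖ ^ 2)
    - ((N : ℝ) - 2) / (2 * (N : ℝ)) * (∫ x, |v₀ x| ^ (2 * (N : ℝ) / ((N : ℝ) - 2)))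

/-- The first coordinate of a point of `ℝ^N`. -/
def firstCoord {N : ℕ} (x : EuclideanSpace ℝ (Fin N)) : ℝ :=
  if h : 0 < N then x ⟨0, h⟩ else 0

/-- The Lorentz-transformed ground state `W_ℓ(t,x)`; the sum `x₂² + ⋯ + x_N²` is written
as `‖x‖² - x₁²`. -/
def Wl (N : ℕ) (ℓ : ℝ) (t : ℝ) (x : EuclideanSpace ℝ (Fin N)) : ℝ :=
  (1 + (firstCoord x - t * ℓ) ^ 2 / ((N : ℝ) * ((N : ℝ) - 2) * (1 - ℓ ^ 2))
     + (‖x‖ ^ 2 - firstCoord x ^ 2) / ((N : ℝ) * ((N : ℝ) - 2))) ^ (-(((N : ℝ) - 2) / 2))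

/-- The time derivative `∂ₜ W_ℓ(t,x)`. -/
def dtWl (N : ℕ) (ℓ : ℝ) (t : ℝ) (x : EuclideanSpace ℝ (Fin N)) : ℝ :=
  deriv (fun s => Wl N ℓ s x) t

/-- The second partial derivative `∂²f/∂xⱼ²` at `x`. -/
def d2 {N : ℕ} (f : EuclideanSpace ℝ (Fin N) → ℝ) (j : Fin N)
    (x : EuclideanSpace ℝ (Fin N)) : ℝ :=
  fderiv ℝ (fun y => fderiv ℝ f y (EuclideanSpace.single j 1)) x (EuclideanSpace.single j 1)

lemma knothe_one_dim {P : Type} [TopologicalSpace P] [FirstCountableTopology P]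
    (a b c d : ℝ) (hab : a < b) (hcd : c < d) (f g : P → ℝ → ℝ)
    (hf : Continuous (Function.uncurry f)) (hg : Continuous (Function.uncurry g))
    (hfp : ∀ p s, 0 < f p s) (hgp : ∀ p s, 0 < g p s)
    (hm : ∀ p, ∫ s in a..b, f p s = ∫ s in c..d, g p s) :
    ∃ T : P → ℝ → ℝ, Continuous (Function.uncurry T) ∧ ∀ p, T p a = c ∧ T p b = d ∧
      ∀ s ∈ Icc a b, T p s ∈ Icc c d ∧ HasDerivAt (T p) (f p s / g p (T p s)) s := by
  set f' : P → ℝ → ℝ := fun p s => f p (max a (min b s)) with hf'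
  set g' : P → ℝ → ℝ := fun p s => g p (max c (min d s)) with hg'
  have cf : Continuous (Function.uncurry f') := by
    have : Function.uncurry f' = Function.uncurry f ∘ (fun q : P × ℝ => (q.1, max a (min b q.2))) := by
      ext q; rfl
    rw [this]; exact hf.comp (by fun_prop)
  have cg : Continuous (Function.uncurry g') := by
    have : Function.uncurry g' = Function.uncurry g ∘ (fun q : P × ℝ => (q.1, max c (min d q.2))) := by
      ext q; rfl
    rw [this]; exact hg.comp (by fun_prop)
  have cfp : ∀ p, Continuous (f' p) := fun p => cf.comp (by fun_prop : Continuous fun s => (p, s))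
  have cgp : ∀ p, Continuous (g' p) := fun p => cg.comp (by fun_prop : Continuous fun s => (p, s))
  have fpos : ∀ p s, 0 < f' p s := fun p s => hfp _ _
  have gpos : ∀ p s, 0 < g' p s := fun p s => hgp _ _
  set Ψ : P → ℝ → ℝ := fun p s => ∫ x in a..s, f' p x with hΨ
  set Φ : P → ℝ → ℝ := fun p s => ∫ x in c..s, g' p x with hΦ
  have cΨ : Continuous (Function.uncurry Ψ) := by
    have := intervalIntegral.continuous_parametric_intervalIntegral_of_continuous
      (μ := volume) (f := fun (q : P × ℝ) x => f' q.1 x) (a₀ := a) (s := fun q => q.2)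
      (by exact cf.comp (by fun_prop : Continuous fun r : (P × ℝ) × ℝ => (r.1.1, r.2))) (by fun_prop)
    exact this
  have cΦ : Continuous (Function.uncurry Φ) := by
    have := intervalIntegral.continuous_parametric_intervalIntegral_of_continuous
      (μ := volume) (f := fun (q : P × ℝ) x => g' q.1 x) (a₀ := c) (s := fun q => q.2)
      (by exact cg.comp (by fun_prop : Continuous fun r : (P × ℝ) × ℝ => (r.1.1, r.2))) (by fun_prop)
    exact this
  have dΨ : ∀ p s, HasDerivAt (Ψ p) (f' p s) s := fun p s =>
    intervalIntegral.integral_hasDerivAt_right ((cfp p).intervalIntegrable _ _)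
      ((cfp p).stronglyMeasurableAtFilter _ _) (cfp p).continuousAt
  have dΦ : ∀ p s, HasDerivAt (Φ p) (g' p s) s := fun p s =>
    intervalIntegral.integral_hasDerivAt_right ((cgp p).intervalIntegrable _ _)
      ((cgp p).stronglyMeasurableAtFilter _ _) (cgp p).continuousAt
  have mΦ : ∀ p, StrictMono (Φ p) := fun p =>
    strictMono_of_hasDerivAt_pos (dΦ p) (gpos p)
  have mΨ : ∀ p, StrictMono (Ψ p) := fun p =>
    strictMono_of_hasDerivAt_pos (dΨ p) (fpos p)
  have sΦ : ∀ p, Function.Surjective (Φ p) := by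
    intro p
    obtain ⟨x0, hx0, hmin⟩ := isCompact_Icc.exists_isMinOn (nonempty_Icc.2 hcd.le)
      (cgp p).continuousOn
    have hlow : ∀ s, g' p x0 ≤ g' p s := by
      intro s
      have h1 : max c (min d s) ∈ Icc c d := ⟨le_max_left _ _, max_le hcd.le (min_le_left _ _)⟩
      have h2 := hmin h1
      have h3 : g' p (max c (min d s)) = g' p s := by
        simp only [hg']
        rw [min_eq_right h1.2, max_eq_right h1.1]
      simpa [h3] using h2
    have hmono : Monotone (fun s => Φ p s - g' p x0 * s) := by
      apply monotone_of_deriv_nonneg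
      · intro s; exact ((dΦ p s).sub ((hasDerivAt_id s).const_mul _)).differentiableAt
      · intro s
        have := ((dΦ p s).sub ((hasDerivAt_id s).const_mul (g' p x0))).deriv
        have h4 : deriv (fun s => Φ p s - g' p x0 * s) s = g' p s - g' p x0 * 1 := this
        rw [h4]; linarith [hlow s]
    have hc0 : Φ p c = 0 := by simp [hΦ]
    apply Continuous.surjective (cΦ.comp (by fun_prop : Continuous fun s => (p, s)))
    · refine tendsto_atTop_mono' _ ?_ (tendsto_atTop_add_const_right _ (- g' p x0 * c)
        (tendsto_id.const_mul_atTop (gpos p x0)))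
      filter_upwards [eventually_ge_atTop c] with s hs
      have := hmono hs
      simp only [hc0] at this
      simp only [id, Function.comp, Function.uncurry]; linarith
    · refine tendsto_atBot_mono' _ ?_ (tendsto_atBot_add_const_right _ (- g' p x0 * c)
        (tendsto_id.const_mul_atBot (gpos p x0)))
      filter_upwards [eventually_le_atBot c] with s hs
      have := hmono hs
      simp only [hc0] at this
      simp only [id, Function.comp, Function.uncurry]; linarith
  choose e he using sΦ
  have ce : ∀ p, Continuous (e p) := by
    intro p
    have hm' : StrictMono (e p) := by
      intro x y hxy
      rw [← (mΦ p).lt_iff_lt, he, he]; exact hxy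
    apply hm'.monotone.continuous_of_surjective
    intro s; exact ⟨Φ p s, (mΦ p).injective (he p _)⟩
  refine ⟨fun p s => e p (Ψ p s), ?_, ?_⟩
  · rw [continuous_iff_continuousAt]
    rintro ⟨p0, s0⟩
    rw [Metric.continuousAt_iff']
    intro ε hε
    simp only [Function.uncurry]
    set t0 := e p0 (Ψ p0 s0) with ht0
    have ht : Φ p0 t0 = Ψ p0 s0 := he _ _
    have h1 : Φ p0 (t0 - ε) < Ψ p0 s0 := by rw [← ht]; exact mΦ p0 (by linarith)
    have h2 : Ψ p0 s0 < Φ p0 (t0 + ε) := by rw [← ht]; exact mΦ p0 (by linarith)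
    have c1 : Continuous (fun q : P × ℝ => Φ q.1 (t0 - ε)) :=
      cΦ.comp (by fun_prop : Continuous fun q : P × ℝ => (q.1, t0 - ε))
    have c2 : Continuous (fun q : P × ℝ => Φ q.1 (t0 + ε)) :=
      cΦ.comp (by fun_prop : Continuous fun q : P × ℝ => (q.1, t0 + ε))
    have c3 : Continuous (fun q : P × ℝ => Ψ q.1 q.2) := cΨ
    filter_upwards [c1.continuousAt.eventually_lt c3.continuousAt (x₀ := (p0, s0)) h1,
      c3.continuousAt.eventually_lt c2.continuousAt (x₀ := (p0, s0)) h2] with q hq1 hq2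
    rw [← he q.1 (Ψ q.1 q.2), (mΦ _).lt_iff_lt] at hq1 hq2
    rw [Real.dist_eq, abs_lt]; constructor <;> linarith
  · intro p
    have hTa : e p (Ψ p a) = c := by
      apply (mΦ p).injective; rw [he]; simp [hΦ, hΨ]
    have hTb : e p (Ψ p b) = d := by
      apply (mΦ p).injective; rw [he]
      have e1 : Ψ p b = ∫ s in a..b, f p s := by
        apply intervalIntegral.integral_congr
        intro s hs; rw [uIcc_of_le hab.le] at hs
        simp only [hf']; rw [min_eq_right hs.2, max_eq_right hs.1]
      have e2 : Φ p d = ∫ s in c..d, g p s := by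
        apply intervalIntegral.integral_congr
        intro s hs; rw [uIcc_of_le hcd.le] at hs
        simp only [hg']; rw [min_eq_right hs.2, max_eq_right hs.1]
      rw [e1, e2, hm]
    have hmono : Monotone (fun s => e p (Ψ p s)) := by
      intro x y hxy
      rw [← (mΦ p).le_iff_le]; simp only [he]; exact (mΨ p).monotone hxy
    refine ⟨hTa, hTb, fun s hs => ?_⟩
    have hmem : e p (Ψ p s) ∈ Icc c d := ⟨by rw [← hTa]; exact hmono hs.1, by rw [← hTb]; exact hmono hs.2⟩
    refine ⟨hmem, ?_⟩
    have h1 : HasDerivAt (e p) (g' p (e p (Ψ p s)))⁻¹ (Ψ p s) :=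
      HasDerivAt.of_local_left_inverse (ce p).continuousAt (dΦ p _) (gpos _ _).ne'
        (Eventually.of_forall (he p))
    have h2 := h1.comp s (dΨ p s)
    have e1 : f' p s = f p s := by simp only [hf']; rw [min_eq_right hs.2, max_eq_right hs.1]
    have e2 : g' p (e p (Ψ p s)) = g p (e p (Ψ p s)) := by
      simp only [hg']; rw [min_eq_right hmem.2, max_eq_right hmem.1]
    rw [e1, e2] at h2
    rw [div_eq_inv_mul]
    exact h2

lemma cube_fubini (n : ℕ) (a b : ℝ) (hab : a ≤ b) (i : Fin (n+1)) (φ : (Fin (n+1) → ℝ) → ℝ)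
    (hφ : Continuous φ) :
    ∫ x in Icc (fun _ => a) (fun _ => b), φ x
      = ∫ s in a..b, ∫ y in Icc (fun _ : Fin n => a) (fun _ => b), φ (i.insertNth s y) := by
  set e : ℝ × (Fin n → ℝ) ≃ᵐ (Fin (n+1) → ℝ) :=
    (MeasurableEquiv.piFinSuccAbove (fun _ => ℝ) i).symm
  have hem : MeasurePreserving e :=
    (volume_preserving_piFinSuccAbove (fun _ : Fin (n + 1) => ℝ) i).symm _
  have heπ : (e ⁻¹' Icc (fun _ => a) fun _ => b) = Icc a b ×ˢ Icc (fun _ : Fin n => a) fun _ => b :=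
    ((Fin.insertNthOrderIso (fun _ => ℝ) i).preimage_Icc _ _).trans (Icc_prod_eq _ _)
  rw [← hem.map_eq, setIntegral_map_equiv, heπ, Measure.volume_eq_prod,
    setIntegral_prod, intervalIntegral.integral_of_le hab, integral_Icc_eq_integral_Ioc]
  · rfl
  · apply ContinuousOn.integrableOn_compact (isCompact_Icc.prod isCompact_Icc)
    apply Continuous.continuousOn
    apply hφ.comp
    show Continuous fun q : ℝ × (Fin n → ℝ) => (i.insertNth q.1 q.2 : Fin (n+1) → ℝ)
    fun_prop

lemma cube_insert_mem (n : ℕ) (a b : ℝ) (i : Fin (n+1)) (s : ℝ) (y : Fin n → ℝ) :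
    (i.insertNth s y : Fin (n+1) → ℝ) ∈ Icc (fun _ => a) (fun _ => b) ↔
      s ∈ Icc a b ∧ y ∈ Icc (fun _ => a) (fun _ => b) := by
  have heπ := ((Fin.insertNthOrderIso (fun _ => ℝ) i).preimage_Icc (fun _ => a) (fun _ => b)).trans
    (Icc_prod_eq _ _)
  have := Set.ext_iff.1 heπ (s, y)
  exact this

lemma cube_integral_pos (n : ℕ) (a b : ℝ) (hab : a < b) (φ : (Fin n → ℝ) → ℝ)
    (hφ : Continuous φ) (hpos : ∀ x, 0 < φ x) :
    0 < ∫ x in Icc (fun _ => a) (fun _ => b), φ x := by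
  rw [setIntegral_pos_iff_support_of_nonneg_ae]
  · have : Function.support φ = univ := by
      ext x; simp [(hpos x).ne']
    rw [this, univ_inter, Real.volume_Icc_pi]
    simp only [Finset.prod_const]
    exact ENNReal.pow_pos (by simpa using hab) _
  · exact Eventually.of_forall fun x => (hpos x).le
  · exact hφ.continuousOn.integrableOn_compact isCompact_Icc

lemma knothe (n : ℕ) (a b c d : ℝ) (hab : a < b) (hcd : c < d) :
    ∀ {P : Type} [TopologicalSpace P] [FirstCountableTopology P] [LocallyCompactSpace P]
      (F G : P → (Fin n → ℝ) → ℝ)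
      (_ : Continuous (Function.uncurry F)) (_ : Continuous (Function.uncurry G))
      (_ : ∀ p x, 0 < F p x) (_ : ∀ p x, 0 < G p x)
      (_ : ∀ p, ∫ x in Icc (fun _ => a) (fun _ => b), F p x
          = ∫ x in Icc (fun _ => c) (fun _ => d), G p x),
    ∃ T D : P → (Fin n → ℝ) → (Fin n → ℝ), Continuous (Function.uncurry T) ∧
      Continuous (Function.uncurry D) ∧
      (∀ p, ∀ x ∈ Icc (fun _ : Fin n => a) (fun _ => b),
        T p x ∈ Icc (fun _ : Fin n => c) (fun _ => d) ∧ (∀ i, 0 < D p x i) ∧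
        (∀ i, HasDerivAt (fun s => T p (Function.update x i s) i) (D p x i) (x i)) ∧
        (∏ i, D p x i) * G p (T p x) = F p x) ∧
      (∀ p, ∀ φ : (Fin n → ℝ) → ℝ, Continuous φ →
        ∫ x in Icc (fun _ => a) (fun _ => b), F p x * φ (T p x)
          = ∫ x in Icc (fun _ => c) (fun _ => d), G p x * φ x) := by
  induction n with
  | zero =>
    intro P _ _ _ F G hF hG hFp hGp hm
    have key : ∀ p x, F p x = G p x := by
      intro p x
      have h := hm p
      have e1 : Icc (fun _ : Fin 0 => a) (fun _ => b) = univ := by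
        ext y; simp
      have e2 : Icc (fun _ : Fin 0 => c) (fun _ => d) = univ := by
        ext y; simp
      rw [e1, e2, Measure.restrict_univ, volume_pi, Measure.pi_of_empty _ x,
        integral_dirac, integral_dirac] at h
      exact h
    refine ⟨fun _ x => x, fun _ x => x, by exact continuous_snd, by exact continuous_snd, ?_, ?_⟩
    · intro p x hx
      refine ⟨by simp, fun i => i.elim0, fun i => i.elim0, ?_⟩
      simp [key]
    · intro p φ hφ
      have e1 : Icc (fun _ : Fin 0 => a) (fun _ => b) = univ := by
        ext y; simp
      have e2 : Icc (fun _ : Fin 0 => c) (fun _ => d) = univ := by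
        ext y; simp
      rw [e1, e2]; simp only [key]
  | succ n ih =>
    intro P _ _ _ F G hF hG hFp hGp hm
    set I : Set (Fin n → ℝ) := Icc (fun _ => a) (fun _ => b) with hI
    set J : Set (Fin n → ℝ) := Icc (fun _ => c) (fun _ => d) with hJ
    have hcons : Continuous fun q : ℝ × (Fin n → ℝ) => ((0 : Fin (n+1)).insertNth q.1 q.2 : Fin (n+1) → ℝ) := by
      fun_prop
    have hFc : Continuous fun q : (P × ℝ) × (Fin n → ℝ) =>
        F q.1.1 ((0 : Fin (n+1)).insertNth q.1.2 q.2) :=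
      hF.comp (continuous_fst.fst.prodMk (hcons.comp (continuous_fst.snd.prodMk continuous_snd)))
    have hGc : Continuous fun q : (P × ℝ) × (Fin n → ℝ) =>
        G q.1.1 ((0 : Fin (n+1)).insertNth q.1.2 q.2) :=
      hG.comp (continuous_fst.fst.prodMk (hcons.comp (continuous_fst.snd.prodMk continuous_snd)))
    set F1 : P → ℝ → ℝ := fun p s => ∫ y in I, F p ((0 : Fin (n+1)).insertNth s y) with hF1
    set G1 : P → ℝ → ℝ := fun p s => ∫ y in J, G p ((0 : Fin (n+1)).insertNth s y) with hG1
    have cF1 : Continuous (Function.uncurry F1) :=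
      continuous_parametric_integral_of_continuous (μ := volume) (s := I)
        (f := fun (q : P × ℝ) y => F q.1 ((0 : Fin (n+1)).insertNth q.2 y)) hFc isCompact_Icc
    have cG1 : Continuous (Function.uncurry G1) :=
      continuous_parametric_integral_of_continuous (μ := volume) (s := J)
        (f := fun (q : P × ℝ) y => G q.1 ((0 : Fin (n+1)).insertNth q.2 y)) hGc isCompact_Icc
    have cFp : ∀ p, Continuous (F p) := fun p => hF.comp (by fun_prop : Continuous fun s => (p, s))
    have cGp : ∀ p, Continuous (G p) := fun p => hG.comp (by fun_prop : Continuous fun s => (p, s))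
    have F1pos : ∀ p s, 0 < F1 p s := fun p s =>
      cube_integral_pos n a b hab _ ((cFp p).comp (hcons.comp (by fun_prop : Continuous fun y => (s, y))))
        (fun y => hFp _ _)
    have G1pos : ∀ p s, 0 < G1 p s := fun p s =>
      cube_integral_pos n c d hcd _ ((cGp p).comp (hcons.comp (by fun_prop : Continuous fun y => (s, y))))
        (fun y => hGp _ _)
    obtain ⟨T0, cT0, hT0⟩ := knothe_one_dim a b c d hab hcd F1 G1 cF1 cG1 F1pos G1pos (by
      intro p
      rw [← cube_fubini n a b hab.le 0 _ (cFp p), ← cube_fubini n c d hcd.le 0 _ (cGp p), hm])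
    set D0 : P → ℝ → ℝ := fun p s => F1 p s / G1 p (T0 p s) with hD0
    have cGT : Continuous fun q : P × ℝ => G1 q.1 (T0 q.1 q.2) :=
      cG1.comp (continuous_fst.prodMk cT0)
    have cD0 : Continuous (Function.uncurry D0) :=
      cF1.div cGT (fun q => (G1pos _ _).ne')
    -- conditional densities
    obtain ⟨T', D', cT', cD', h', hφ'⟩ := ih (P := P × ℝ)
      (fun q y => F q.1 ((0 : Fin (n+1)).insertNth q.2 y) / F1 q.1 q.2)
      (fun q y => G q.1 ((0 : Fin (n+1)).insertNth (T0 q.1 q.2) y) / G1 q.1 (T0 q.1 q.2))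
      (hFc.div (cF1.comp continuous_fst) (fun q => (F1pos _ _).ne'))
      ((hG.comp (continuous_fst.fst.prodMk
        (hcons.comp ((cT0.comp continuous_fst).prodMk continuous_snd)))).div
          (cGT.comp continuous_fst) (fun q => (G1pos _ _).ne'))
      (fun q y => div_pos (hFp _ _) (F1pos _ _)) (fun q y => div_pos (hGp _ _) (G1pos _ _))
      (by
        intro q
        rw [integral_div, integral_div]
        rw [div_self (F1pos q.1 q.2).ne', div_self (G1pos q.1 (T0 q.1 q.2)).ne'])
    have ctail : Continuous fun x : Fin (n+1) → ℝ => Fin.tail x := by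
      unfold Fin.tail; fun_prop
    have cq : Continuous fun r : P × (Fin (n+1) → ℝ) => ((r.1, r.2 0), Fin.tail r.2) := by
      fun_prop
    refine ⟨fun p x => (0 : Fin (n+1)).insertNth (T0 p (x 0)) (T' (p, x 0) (Fin.tail x)),
      fun p x => (0 : Fin (n+1)).insertNth (D0 p (x 0)) (D' (p, x 0) (Fin.tail x)), ?_, ?_, ?_, ?_⟩
    · exact hcons.comp ((cT0.comp (by fun_prop : Continuous fun r : P × (Fin (n+1) → ℝ) => (r.1, r.2 0))).prodMk (cT'.comp cq))
    · exact hcons.comp ((cD0.comp (by fun_prop : Continuous fun r : P × (Fin (n+1) → ℝ) => (r.1, r.2 0))).prodMk (cD'.comp cq))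
    · intro p x hx
      have hx' : x = (0 : Fin (n+1)).insertNth (x 0) (Fin.tail x) := by
        rw [Fin.insertNth_zero']; simp
      rw [hx', cube_insert_mem] at hx
      obtain ⟨hx0, hxt⟩ := hx
      obtain ⟨hTm, hTd⟩ := (hT0 p).2.2 _ hx0
      obtain ⟨g1, g2, g3, g4⟩ := h' (p, x 0) _ hxt
      refine ⟨(cube_insert_mem _ _ _ _ _ _).2 ⟨hTm, g1⟩, ?_, ?_, ?_⟩
      · intro i
        refine Fin.cases ?_ (fun j => ?_) i
        · simpa [Fin.insertNth_zero'] using div_pos (F1pos p (x 0)) (G1pos _ _)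
        · simpa [Fin.insertNth_zero'] using g2 j
      · intro i
        refine Fin.cases ?_ (fun j => ?_) i
        · simpa [Fin.insertNth_zero'] using hTd
        · have := g3 j
          simp only [Fin.insertNth_zero', Fin.cons_succ, Fin.tail_update_succ]
          simp only [ne_eq, (Fin.succ_ne_zero j).symm, not_false_eq_true, Function.update_of_ne]
          exact this
      · rw [Fin.prod_univ_succ]
        simp only [Fin.insertNth_zero', Fin.cons_zero, Fin.cons_succ]
        simp only [Fin.insertNth_zero'] at g4
        rw [Fin.cons_self_tail] at g4
        have p1 := (F1pos p (x 0)).ne'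
        have p2 := (G1pos p (T0 p (x 0))).ne'
        simp only [hD0]
        field_simp at g4 ⊢
        linarith
    · intro p φ hφ
      have cTp : Continuous fun x : Fin (n+1) → ℝ => ((0 : Fin (n+1)).insertNth (T0 p (x 0)) (T' (p, x 0) (Fin.tail x)) : Fin (n+1) → ℝ) :=
        hcons.comp ((cT0.comp (by fun_prop : Continuous fun x : (Fin (n+1) → ℝ) => (p, x 0))).prodMk
          (cT'.comp (cq.comp (by fun_prop : Continuous fun x : (Fin (n+1) → ℝ) => (p, x)))))
      refine (cube_fubini n a b hab.le 0 _ ((cFp p).mul (hφ.comp cTp))).trans ?_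
      refine Eq.trans ?_ (cube_fubini n c d hcd.le 0 _ ((cGp p).mul hφ)).symm
      simp only [Pi.mul_apply, Function.comp]
      set ψ : ℝ → ℝ := fun t => ∫ y in J, G p ((0 : Fin (n+1)).insertNth t y) * φ ((0 : Fin (n+1)).insertNth t y) with hψ
      have cψ : Continuous ψ :=
        continuous_parametric_integral_of_continuous (μ := volume) (s := J)
          (f := fun (t : ℝ) y => G p ((0 : Fin (n+1)).insertNth t y) * φ ((0 : Fin (n+1)).insertNth t y))
          (((cGp p).comp hcons).mul (hφ.comp hcons)) isCompact_Icc
      have hsub : ∫ s in a..b, ψ (T0 p s) * D0 p s = ∫ t in c..d, ψ t := by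
        have := intervalIntegral.integral_comp_mul_deriv (a := a) (b := b) (f := T0 p) (f' := D0 p) (g := ψ)
          (fun s hs => ((hT0 p).2.2 s (by rwa [uIcc_of_le hab.le] at hs)).2)
          (cD0.comp (by fun_prop : Continuous fun s => (p, s))).continuousOn cψ
        rw [(hT0 p).1, (hT0 p).2.1] at this
        exact this
      rw [← hsub]
      apply intervalIntegral.integral_congr
      intro s hs
      have h1 := hφ' (p, s) (fun y => φ ((0 : Fin (n+1)).insertNth (T0 p s) y))
        (hφ.comp (hcons.comp (by fun_prop : Continuous fun y => (T0 p s, y))))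
      have e1 : ∀ y : Fin n → ℝ, Fin.tail ((0 : Fin (n+1)).insertNth s y : Fin (n+1) → ℝ) = y := by
        intro y; rw [Fin.insertNth_zero']; simp
      have e2 : ∀ y : Fin n → ℝ, ((0 : Fin (n+1)).insertNth s y : Fin (n+1) → ℝ) 0 = s := by
        intro y; rw [Fin.insertNth_zero']; simp
      simp only [e1, e2]
      simp only [div_mul_eq_mul_div, integral_div] at h1
      have p1 := (F1pos p s).ne'
      have p2 := (G1pos p (T0 p s)).ne'
      rw [div_eq_div_iff p1 p2] at h1
      simp only [hD0, hψ]
      field_simp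
      exact h1

lemma cube_fubini' (n : ℕ) (a b : ℝ) (hab : a ≤ b) (i : Fin (n+1)) (φ : (Fin (n+1) → ℝ) → ℝ)
    (hφ : Continuous φ) :
    ∫ x in Icc (fun _ => a) (fun _ => b), φ x
      = ∫ y in Icc (fun _ : Fin n => a) (fun _ => b), ∫ s in a..b, φ (i.insertNth s y) := by
  rw [cube_fubini n a b hab i φ hφ]
  simp only [intervalIntegral.integral_of_le hab]
  apply integral_integral_swap
  rw [Measure.prod_restrict]
  have : IntegrableOn (Function.uncurry fun (x : ℝ) (y : Fin n → ℝ) => φ (i.insertNth x y))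
      (Icc a b ×ˢ Icc (fun _ => a) (fun _ => b)) (volume.prod volume) := by
    apply ContinuousOn.integrableOn_compact (isCompact_Icc.prod isCompact_Icc)
    apply Continuous.continuousOn
    apply hφ.comp
    show Continuous fun q : ℝ × (Fin n → ℝ) => (i.insertNth q.1 q.2 : Fin (n+1) → ℝ)
    fun_prop
  exact this.mono_set (prod_mono Ioc_subset_Icc_self subset_rfl)

lemma cube_ibp (m : ℕ) (R S c : ℝ) (hR : 0 < R) (hS : 0 < S)
    (u τ D : (Fin (m+1) → ℝ) → ℝ) (i : Fin (m+1)) (hu : ContDiff ℝ 1 u)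
    (hτ : Continuous τ) (hD : Continuous D) (hu0 : ∀ x, 0 ≤ u x)
    (hder : ∀ x ∈ Icc (fun _ : Fin (m+1) => -R) (fun _ => R),
      HasDerivAt (fun s => τ (Function.update x i s)) (D x) (x i))
    (hτb : ∀ x ∈ Icc (fun _ : Fin (m+1) => -R) (fun _ => R), |τ x| ≤ S)
    (hface : ∀ x, |x i| = R → u x ≤ c) :
    ∫ x in Icc (fun _ => -R) (fun _ => R), u x * D x
      ≤ 2 * S * c * (2 * R) ^ m
        - ∫ x in Icc (fun _ => -R) (fun _ => R), fderiv ℝ u x (Pi.single i 1) * τ x := by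
  have hRR : -R ≤ R := by linarith
  have cu : Continuous u := hu.continuous
  have cdu : Continuous fun x => fderiv ℝ u x (Pi.single i 1) :=
    (hu.continuous_fderiv one_ne_zero).clm_apply continuous_const
  have i1 : IntegrableOn (fun x => u x * D x) (Icc (fun _ : Fin (m+1) => -R) (fun _ => R)) :=
    (cu.mul hD).continuousOn.integrableOn_compact isCompact_Icc
  have i2 : IntegrableOn (fun x => fderiv ℝ u x (Pi.single i 1) * τ x)
      (Icc (fun _ : Fin (m+1) => -R) (fun _ => R)) :=
    (cdu.mul hτ).continuousOn.integrableOn_compact isCompact_Icc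
  rw [le_sub_iff_add_le, ← integral_add i1 i2]
  have chi : Continuous fun x => u x * D x + fderiv ℝ u x (Pi.single i 1) * τ x := by fun_prop
  rw [cube_fubini' m (-R) R hRR i _ chi]
  have hins : Continuous fun q : ℝ × (Fin m → ℝ) => (i.insertNth q.1 q.2 : Fin (m+1) → ℝ) := by
    fun_prop
  have hupd : ∀ (s t : ℝ) (y : Fin m → ℝ), Function.update (i.insertNth s y : Fin (m+1) → ℝ) i t
      = i.insertNth t y := by
    intro s t y; simp
  have hinner : ∀ y ∈ Icc (fun _ : Fin m => -R) (fun _ => R),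
      ∫ s in -R..R, (u (i.insertNth s y) * D (i.insertNth s y)
        + fderiv ℝ u (i.insertNth s y) (Pi.single i 1) * τ (i.insertNth s y)) ≤ 2 * S * c := by
    intro y hy
    have hd : ∀ s ∈ uIcc (-R) R, HasDerivAt (fun s => u (i.insertNth s y) * τ (i.insertNth s y))
        (u (i.insertNth s y) * D (i.insertNth s y)
        + fderiv ℝ u (i.insertNth s y) (Pi.single i 1) * τ (i.insertNth s y)) s := by
      intro s hs
      rw [uIcc_of_le hRR] at hs
      have h1 := hder (i.insertNth s y) ((cube_insert_mem _ _ _ _ _ _).2 ⟨hs, hy⟩)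
      simp only [hupd, Fin.insertNth_apply_same] at h1
      have h2 : HasDerivAt (fun s => u (i.insertNth s y))
          (fderiv ℝ u (i.insertNth s y) (Pi.single i 1)) s := by
        have h3 := hasDerivAt_update (i.insertNth s y : Fin (m+1) → ℝ) i s
        have h4 : HasFDerivAt u (fderiv ℝ u (i.insertNth s y)) (Function.update (i.insertNth s y : Fin (m+1) → ℝ) i s) := by
          rw [hupd]; exact (hu.differentiable one_ne_zero _).hasFDerivAt
        have h5 := h4.comp_hasDerivAt s h3
        refine h5.congr_of_eventuallyEq (Eventually.of_forall fun t => ?_)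
        simp
      exact (h2.mul h1).congr_deriv (by ring)
    rw [intervalIntegral.integral_eq_sub_of_hasDerivAt hd
      ((chi.comp (hins.comp (by fun_prop : Continuous fun s => (s, y)))).intervalIntegrable _ _)]
    have b1 : |τ (i.insertNth R y)| ≤ S := hτb _ ((cube_insert_mem _ _ _ _ _ _).2 ⟨⟨hRR, le_rfl⟩, hy⟩)
    have b2 : |τ (i.insertNth (-R) y)| ≤ S := hτb _ ((cube_insert_mem _ _ _ _ _ _).2 ⟨⟨le_rfl, hRR⟩, hy⟩)
    have f1 : u (i.insertNth R y) ≤ c := hface _ (by simp [abs_of_pos hR])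
    have f2 : u (i.insertNth (-R) y) ≤ c := hface _ (by simp [abs_of_pos hR])
    have z1 := hu0 (i.insertNth R y)
    have z2 := hu0 (i.insertNth (-R) y)
    rw [abs_le] at b1 b2
    nlinarith
  calc _ ≤ ∫ y in Icc (fun _ : Fin m => -R) (fun _ => R), 2 * S * c := by
        apply setIntegral_mono_on _ _ measurableSet_Icc hinner
        · apply ContinuousOn.integrableOn_compact isCompact_Icc
          apply Continuous.continuousOn
          apply intervalIntegral.continuous_parametric_intervalIntegral_of_continuous' 
          exact chi.comp (hins.comp continuous_swap)
        · exact continuousOn_const.integrableOn_compact isCompact_Icc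
    _ = 2 * S * c * (2 * R) ^ m := by
        rw [setIntegral_const, measureReal_def, Real.volume_Icc_pi]
        simp only [Finset.prod_const, Finset.card_univ, Fintype.card_fin, smul_eq_mul]
        rw [ENNReal.toReal_pow, ENNReal.toReal_ofReal (by linarith)]
        ring

lemma transport_pointwise (m : ℕ) (D : Fin (m+1) → ℝ) (hD : ∀ i, 0 < D i) (F G : ℝ)
    (hF : 0 < F) (hG : 0 < G) (h : (∏ i, D i) * G = F) :
    F * G ^ (-(1 / ((m:ℝ)+1))) ≤ F ^ (1 - 1 / ((m:ℝ)+1)) * (∑ i, D i) / ((m:ℝ)+1) := by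
  have hm : (0:ℝ) < (m:ℝ) + 1 := by positivity
  have amgm := Real.geom_mean_le_arith_mean_weighted Finset.univ (fun _ : Fin (m+1) => 1 / ((m:ℝ)+1)) D
    (fun i _ => by positivity) (by simp; field_simp) (fun i _ => (hD i).le)
  rw [Real.finsetProd_rpow _ _ (fun i _ => (hD i).le), ← Finset.mul_sum] at amgm
  have hP : 0 < ∏ i, D i := Finset.prod_pos fun i _ => hD i
  have e1 : F * G ^ (-(1 / ((m:ℝ)+1))) = F ^ (1 - 1 / ((m:ℝ)+1)) * (∏ i, D i) ^ (1 / ((m:ℝ)+1)) := by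
    have : ∏ i, D i = F / G := by field_simp; exact h
    rw [this, Real.div_rpow hF.le hG.le, Real.rpow_neg hG.le, Real.rpow_sub hF, Real.rpow_one]
    have := (Real.rpow_pos_of_pos hF (1 / ((m:ℝ)+1))).ne'
    field_simp
  rw [e1, mul_div_assoc]
  apply mul_le_mul_of_nonneg_left _ (Real.rpow_nonneg hF.le _)
  calc _ ≤ _ := amgm
    _ = _ := by ring

lemma transport_ineq (m : ℕ) (R S c μ : ℝ) (hR : 0 < R) (hS : 0 < S) (hμ : 0 < μ)
    (F G u : (Fin (m+1) → ℝ) → ℝ) (hF : Continuous F) (hG : Continuous G)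
    (hFp : ∀ x, 0 < F x) (hGp : ∀ x, 0 < G x) (hu : ContDiff ℝ 1 u)
    (huF : ∀ x, u x = F x ^ (1 - 1 / ((m:ℝ)+1)))
    (hmass : ∫ x in Icc (fun _ => -R) (fun _ => R), F x = ∫ x in Icc (fun _ => -S) (fun _ => S), G x)
    (hface : ∀ x i, |x i| = R → u x ≤ c) :
    ((m:ℝ)+1) * ∫ y in Icc (fun _ => -S) (fun _ => S), G y ^ (1 - 1 / ((m:ℝ)+1))
      ≤ ((m:ℝ)+1) * (2 * S * c * (2 * R) ^ m)
        + μ / 2 * (∫ x in Icc (fun _ => -R) (fun _ => R), (∑ i, (fderiv ℝ u x (Pi.single i 1)) ^ 2) / F x)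
        + 1 / (2 * μ) * ∫ y in Icc (fun _ => -S) (fun _ => S), G y * ∑ i, (y i) ^ 2 := by
  have hm : (0:ℝ) < (m:ℝ) + 1 := by positivity
  obtain ⟨T, D, cT, cD, hT, hpush⟩ := knothe (m+1) (-R) R (-S) S (by linarith) (by linarith) (P := Unit)
    (fun _ => F) (fun _ => G) (hF.comp continuous_snd) (hG.comp continuous_snd)
    (fun _ => hFp) (fun _ => hGp) (fun _ => hmass)
  replace hT := hT ()
  replace hpush := hpush ()
  replace cT : Continuous (T ()) := cT.comp (by fun_prop : Continuous fun x => ((), x))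
  replace cD : Continuous (D ()) := cD.comp (by fun_prop : Continuous fun x => ((), x))
  generalize T () = T at *
  generalize D () = D at *
  have cdu : ∀ i, Continuous fun x => fderiv ℝ u x (Pi.single i 1) := fun i =>
    (hu.continuous_fderiv one_ne_zero).clm_apply continuous_const
  have cu := hu.continuous
  have cTi : ∀ i, Continuous fun x => T x i := fun i => (continuous_apply i).comp cT
  have cDi : ∀ i, Continuous fun x => D x i := fun i => (continuous_apply i).comp cD
  have hu0 : ∀ x, 0 ≤ u x := fun x => by rw [huF]; exact Real.rpow_nonneg (hFp x).le _
  set I : Set (Fin (m+1) → ℝ) := Icc (fun _ => -R) (fun _ => R) with hI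
  set J : Set (Fin (m+1) → ℝ) := Icc (fun _ => -S) (fun _ => S) with hJ
  have ci : ∀ {f : (Fin (m+1) → ℝ) → ℝ}, Continuous f → IntegrableOn f I := fun hf =>
    hf.continuousOn.integrableOn_compact isCompact_Icc
  -- step 1
  have cGr : Continuous fun y => G y ^ (-(1 / ((m:ℝ)+1))) :=
    hG.rpow_const (fun x => Or.inl (hGp x).ne')
  have s1 : ∫ y in J, G y ^ (1 - 1 / ((m:ℝ)+1)) = ∫ x in I, F x * G (T x) ^ (-(1 / ((m:ℝ)+1))) := by
    rw [hpush _ cGr]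
    apply setIntegral_congr_fun measurableSet_Icc
    intro y hy
    simp only
    rw [sub_eq_add_neg, Real.rpow_add (hGp y), Real.rpow_one]
  have s2 : ∫ x in I, F x * G (T x) ^ (-(1 / ((m:ℝ)+1)))
      ≤ ∫ x in I, u x * (∑ i, D x i) / ((m:ℝ)+1) := by
    apply setIntegral_mono_on _ _ measurableSet_Icc
    · intro x hx
      rw [huF]
      exact transport_pointwise m _ (hT x hx).2.1 _ _ (hFp x) (hGp _) (hT x hx).2.2.2
    · exact ci (hF.mul (cGr.comp cT))
    · exact ci (by fun_prop)
  have s3 : ∫ x in I, u x * (∑ i, D x i) / ((m:ℝ)+1) = (∑ i, ∫ x in I, u x * D x i) / ((m:ℝ)+1) := by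
    rw [integral_div]
    simp only [Finset.mul_sum]
    congr 1
    exact integral_finsetSum _ (fun i _ => ci (cu.mul (cDi i)))
  have s4 : ∀ i, ∫ x in I, u x * D x i ≤ 2 * S * c * (2 * R) ^ m
        - ∫ x in I, fderiv ℝ u x (Pi.single i 1) * T x i := by
    intro i
    apply cube_ibp m R S c hR hS u (fun x => T x i) (fun x => D x i) i hu (cTi i) (cDi i) hu0
      (fun x hx => (hT x hx).2.2.1 i) _ (fun x hx => hface x i hx)
    intro x hx
    rw [abs_le]
    exact ⟨(hT x hx).1.1 i, (hT x hx).1.2 i⟩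
  have s5 : ∑ i, ∫ x in I, u x * D x i ≤ ((m:ℝ)+1) * (2 * S * c * (2 * R) ^ m)
      + ∫ x in I, ∑ i, -(fderiv ℝ u x (Pi.single i 1) * T x i) := by
    have s5' : ∫ x in I, ∑ i, -(fderiv ℝ u x (Pi.single i 1) * T x i)
        = ∑ i, ∫ x in I, -(fderiv ℝ u x (Pi.single i 1) * T x i) :=
      integral_finsetSum _ (fun i _ => (ci ((cdu i).mul (cTi i))).neg)
    rw [s5']
    calc _ ≤ ∑ i : Fin (m+1), (2 * S * c * (2 * R) ^ m
        - ∫ x in I, fderiv ℝ u x (Pi.single i 1) * T x i) := Finset.sum_le_sum fun i _ => s4 i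
      _ = _ := by
        rw [Finset.sum_sub_distrib]
        simp only [integral_neg, Finset.sum_neg_distrib]
        simp; ring
  have s6 : ∫ x in I, ∑ i, -(fderiv ℝ u x (Pi.single i 1) * T x i) ≤
      ∫ x in I, (μ / 2 * ((∑ i, (fderiv ℝ u x (Pi.single i 1)) ^ 2) / F x)
        + 1 / (2 * μ) * (F x * ∑ i, (T x i) ^ 2)) := by
    apply setIntegral_mono_on _ _ measurableSet_Icc
    · intro x hx
      have hFx := hFp x
      rw [Finset.sum_div, Finset.mul_sum, Finset.mul_sum, Finset.mul_sum, ← Finset.sum_add_distrib]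
      apply Finset.sum_le_sum
      intro i _
      set p := fderiv ℝ u x (Pi.single i 1)
      set t := T x i
      have : μ / 2 * (p ^ 2 / F x) + 1 / (2 * μ) * (F x * t ^ 2) - (-(p * t))
        = (μ * p + F x * t) ^ 2 / (2 * μ * F x) := by
        field_simp; ring
      have h2 : 0 ≤ (μ * p + F x * t) ^ 2 / (2 * μ * F x) := by positivity
      linarith
    · exact ci (by fun_prop)
    · apply ci
      have : Continuous fun x => (∑ i, (fderiv ℝ u x (Pi.single i 1)) ^ 2) / F x :=
        Continuous.div (by fun_prop) hF (fun x => (hFp x).ne')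
      fun_prop
  have cQ : Continuous fun x => (∑ i, (fderiv ℝ u x (Pi.single i 1)) ^ 2) / F x :=
        Continuous.div (by fun_prop) hF (fun x => (hFp x).ne')
  have s7 : ∫ x in I, F x * ∑ i, (T x i) ^ 2 = ∫ y in J, G y * ∑ i, (y i) ^ 2 :=
    hpush (fun y => ∑ i, (y i) ^ 2) (by fun_prop)
  rw [integral_add ((ci cQ).const_mul _) ((ci (by fun_prop)).const_mul _), integral_const_mul,
    integral_const_mul, s7] at s6
  rw [s1]
  rw [s3] at s2
  have h9 := mul_le_mul_of_nonneg_left s2 hm.le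
  rw [mul_div_cancel₀ _ hm.ne'] at h9
  refine h9.trans (s5.trans ?_)
  rw [add_assoc]
  exact add_le_add le_rfl s6

lemma reg_pointwise (k v d δ : ℝ) (hk : 1 < k) (hδ : 0 < δ) :
    ((k / (k-1)) * (v^2+δ) ^ (k/(k-1) - 1) * (2 * v * d)) ^ 2 / (v^2+δ) ^ ((k+1)/(k-1))
      ≤ (2 * k/(k-1))^2 * d^2 := by
  have hz : 0 < v^2+δ := by positivity
  set z := v^2+δ with hzd
  have hk1 : k - 1 ≠ 0 := by linarith
  have e : z ^ ((k+1)/(k-1)) = z ^ (k/(k-1) - 1) * z ^ (k/(k-1) - 1) * z := by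
    rw [← Real.rpow_add hz]
    nth_rewrite 3 [← Real.rpow_one z]
    rw [← Real.rpow_add hz]
    congr 1; field_simp; ring
  have hp := Real.rpow_pos_of_pos hz (k/(k-1) - 1)
  rw [e]
  set y := z ^ (k/(k-1) - 1)
  have : (k / (k-1) * y * (2 * v * d)) ^ 2 / (y * y * z) = (2 * k/(k-1))^2 * d^2 * (v^2 / z) := by
    field_simp
  rw [this]
  have h1 : v^2 / z ≤ 1 := by rw [div_le_one hz, hzd]; linarith
  have h2 : 0 ≤ (2 * k/(k-1))^2 * d^2 := by positivity
  nlinarith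

lemma compact_step1 (m : ℕ) (hm2 : 2 ≤ m) (R S μ δ : ℝ) (hR : 0 < R) (hS : 0 < S) (hμ : 0 < μ) (hδ : 0 < δ)
    (v g : (Fin (m+1) → ℝ) → ℝ) (hv : ContDiff ℝ 1 v) (hvs : HasCompactSupport v)
    (hvR : ∀ x i, |x i| = R → v x = 0)
    (hg : Continuous g) (hgp : ∀ x, 0 < g x) (L : ℝ)
    (hL : L = (∫ x in Icc (fun _ => -R) (fun _ => R), (v x ^ 2 + δ) ^ (((m:ℝ)+1)/((m:ℝ)-1)))
      / ∫ y in Icc (fun _ => -S) (fun _ => S), g y) :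
    ((m:ℝ)+1) * (L ^ (1 - 1 / ((m:ℝ)+1)) * ∫ y in Icc (fun _ => -S) (fun _ => S), g y ^ (1 - 1 / ((m:ℝ)+1)))
      ≤ ((m:ℝ)+1) * (2 * S * δ ^ ((m:ℝ)/((m:ℝ)-1)) * (2 * R) ^ m)
        + μ / 2 * ((2 * (m:ℝ)/((m:ℝ)-1))^2 * ∫ x, ∑ i, (fderiv ℝ v x (Pi.single i 1)) ^ 2)
        + 1 / (2 * μ) * (L * ∫ y in Icc (fun _ => -S) (fun _ => S), g y * ∑ i, (y i) ^ 2) := by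
  have hk : (1:ℝ) < m := by exact_mod_cast hm2
  have hk1 : (0:ℝ) < (m:ℝ) - 1 := by linarith
  have hz : ∀ x, 0 < v x ^ 2 + δ := fun x => by positivity
  set F : (Fin (m+1) → ℝ) → ℝ := fun x => (v x ^ 2 + δ) ^ (((m:ℝ)+1)/((m:ℝ)-1)) with hFd
  set u : (Fin (m+1) → ℝ) → ℝ := fun x => (v x ^ 2 + δ) ^ ((m:ℝ)/((m:ℝ)-1)) with hud
  have cv := hv.continuous
  have cF : Continuous F := (by fun_prop : Continuous fun x => v x ^ 2 + δ).rpow_const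
    (fun x => Or.inl (hz x).ne')
  have Fpos : ∀ x, 0 < F x := fun x => Real.rpow_pos_of_pos (hz x) _
  have MF := cube_integral_pos (m+1) (-R) R (by linarith) F cF Fpos
  have MG := cube_integral_pos (m+1) (-S) S (by linarith) g hg hgp
  have Lpos : 0 < L := by rw [hL]; exact div_pos MF MG
  have cu : ContDiff ℝ 1 u := by
    apply ContDiff.rpow_const_of_ne _ (fun x => (hz x).ne')
    fun_prop
  have hdu : ∀ x w, fderiv ℝ u x w = (m:ℝ)/((m:ℝ)-1) * (v x ^ 2 + δ) ^ ((m:ℝ)/((m:ℝ)-1) - 1) * (2 * v x * fderiv ℝ v x w) := by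
    intro x w
    have h1 : HasFDerivAt (fun x => v x ^ 2 + δ) ((2 * v x) • fderiv ℝ v x) x := by
      have h0 := (hv.differentiable one_ne_zero x).hasFDerivAt
      have := (h0.pow 2).add_const δ
      simpa using this
    have h2 := h1.rpow_const (p := (m:ℝ)/((m:ℝ)-1)) (Or.inl (hz x).ne')
    rw [hud, h2.fderiv]
    simp
  have main := transport_ineq m R S (δ ^ ((m:ℝ)/((m:ℝ)-1))) μ hR hS hμ F (fun y => L * g y) u cF
    (by fun_prop) Fpos (fun x => mul_pos Lpos (hgp x)) cu
    (by
      intro x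
      simp only [hud, hFd]
      rw [← Real.rpow_mul (hz x).le]
      congr 1; field_simp; ring)
    (by rw [integral_const_mul, hL]; field_simp)
    (by
      intro x i hx
      simp [hud, hvR x i hx])
  have e1 : ∀ y, (L * g y) ^ (1 - 1 / ((m:ℝ)+1)) = L ^ (1 - 1 / ((m:ℝ)+1)) * g y ^ (1 - 1 / ((m:ℝ)+1)) :=
    fun y => Real.mul_rpow Lpos.le (hgp y).le
  simp only [e1, mul_assoc L, integral_const_mul] at main
  refine main.trans ?_
  have cdv : ∀ i, Continuous fun x => fderiv ℝ v x (Pi.single i 1) := fun i =>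
    (hv.continuous_fderiv one_ne_zero).clm_apply continuous_const
  have cdu : ∀ i, Continuous fun x => fderiv ℝ u x (Pi.single i 1) := fun i =>
    (cu.continuous_fderiv one_ne_zero).clm_apply continuous_const
  have hDint : Integrable fun x => ∑ i, (fderiv ℝ v x (Pi.single i 1)) ^ 2 := by
    apply Continuous.integrable_of_hasCompactSupport (by fun_prop)
    apply (hvs.fderiv (𝕜 := ℝ)).mono
    intro x hx
    simp only [Function.mem_support] at hx ⊢
    intro h; apply hx; simp [h]
  have key : ∫ x in Icc (fun _ => -R) (fun _ => R), (∑ i, (fderiv ℝ u x (Pi.single i 1)) ^ 2) / F x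
      ≤ (2 * (m:ℝ)/((m:ℝ)-1))^2 * ∫ x, ∑ i, (fderiv ℝ v x (Pi.single i 1)) ^ 2 := by
    rw [← integral_const_mul]
    refine le_trans ?_ (setIntegral_le_integral (s := Icc (fun _ => -R) (fun _ => R)) (hDint.const_mul _) ?_)
    · apply setIntegral_mono_on _ (hDint.const_mul _).integrableOn measurableSet_Icc
      · intro x _
        rw [Finset.sum_div, Finset.mul_sum]
        apply Finset.sum_le_sum
        intro i _
        rw [hdu]
        exact reg_pointwise m _ _ δ hk hδ
      · apply ContinuousOn.integrableOn_compact isCompact_Icc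
        apply Continuous.continuousOn
        exact Continuous.div (by fun_prop) cF (fun x => (Fpos x).ne')
    · exact Eventually.of_forall fun x => by positivity
  have h2 : (0:ℝ) ≤ μ / 2 := by positivity
  have h3 := mul_le_mul_of_nonneg_left key h2
  exact add_le_add (add_le_add le_rfl h3) le_rfl

lemma compact_step2 (m : ℕ) (hm2 : 2 ≤ m) (S μ : ℝ) (hS : 0 < S) (hμ : 0 < μ)
    (v g : (Fin (m+1) → ℝ) → ℝ) (hv : ContDiff ℝ 1 v) (hvs : HasCompactSupport v)
    (hg : Continuous g) (hgp : ∀ x, 0 < g x) (L : ℝ)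
    (hL : L = (∫ x, (v x ^ 2) ^ (((m:ℝ)+1)/((m:ℝ)-1)))
      / ∫ y in Icc (fun _ => -S) (fun _ => S), g y) :
    ((m:ℝ)+1) * (L ^ (1 - 1 / ((m:ℝ)+1)) * ∫ y in Icc (fun _ => -S) (fun _ => S), g y ^ (1 - 1 / ((m:ℝ)+1)))
      ≤ μ / 2 * ((2 * (m:ℝ)/((m:ℝ)-1))^2 * ∫ x, ∑ i, (fderiv ℝ v x (Pi.single i 1)) ^ 2)
        + 1 / (2 * μ) * (L * ∫ y in Icc (fun _ => -S) (fun _ => S), g y * ∑ i, (y i) ^ 2) := by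
  have hk : (1:ℝ) < m := by exact_mod_cast hm2
  have hk1 : (0:ℝ) < (m:ℝ) - 1 := by linarith
  have hκ : 0 < ((m:ℝ)+1)/((m:ℝ)-1) := by positivity
  have ha : 0 < (m:ℝ)/((m:ℝ)-1) := by positivity
  obtain ⟨r, hr⟩ := hvs.isBounded.subset_closedBall 0
  set R := max r 0 + 1 with hRd
  have hR : 0 < R := by positivity
  have hrR : r < R := by rw [hRd]; linarith [le_max_left r 0]
  have hv0 : ∀ x : Fin (m+1) → ℝ, r < ‖x‖ → v x = 0 := by
    intro x hx
    by_contra h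
    have := hr (subset_tsupport v h)
    rw [mem_closedBall_zero_iff] at this; linarith
  have hvR : ∀ (x : Fin (m+1) → ℝ) i, |x i| = R → v x = 0 := by
    intro x i h
    apply hv0
    have := norm_le_pi_norm x i
    rw [Real.norm_eq_abs, h] at this
    linarith
  have cv := hv.continuous
  have MG := cube_integral_pos (m+1) (-S) S (by linarith) g hg hgp
  set B := ∫ y in Icc (fun _ => -S) (fun _ => S), g y with hB
  set N : ℝ → ℝ := fun δ => (∫ x in Icc (fun _ => -R) (fun _ => R), (v x ^ 2 + δ) ^ (((m:ℝ)+1)/((m:ℝ)-1))) / B with hN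
  have cN : Continuous N := by
    apply Continuous.div_const
    apply continuous_parametric_integral_of_continuous (μ := volume)
      (f := fun (δ : ℝ) (x : Fin (m+1) → ℝ) => (v x ^ 2 + δ) ^ (((m:ℝ)+1)/((m:ℝ)-1))) _ isCompact_Icc
    apply Continuous.rpow_const _ (fun _ => Or.inr hκ.le)
    fun_prop
  have hN0 : N 0 = L := by
    simp only [hN, add_zero, hL]
    congr 1
    apply setIntegral_eq_integral_of_forall_compl_eq_zero
    intro x hx
    have : v x = 0 := by
      apply hv0
      by_contra hle
      apply hx
      have hle' : ‖x‖ ≤ R := by linarith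
      have h2 : ∀ i, |x i| ≤ R := fun i => (norm_le_pi_norm x i).trans hle'
      exact ⟨fun i => (abs_le.1 (h2 i)).1, fun i => (abs_le.1 (h2 i)).2⟩
    rw [this]; simp [Real.zero_rpow hκ.ne']
  have h1n : 0 ≤ 1 - 1 / ((m:ℝ)+1) := by
    rw [sub_nonneg, div_le_one (by linarith)]; linarith
  set A := ∫ x, ∑ i, (fderiv ℝ v x (Pi.single i 1)) ^ 2
  set C1 := ∫ y in Icc (fun _ => -S) (fun _ => S), g y ^ (1 - 1 / ((m:ℝ)+1))
  set C2 := ∫ y in Icc (fun _ => -S) (fun _ => S), g y * ∑ i, (y i) ^ 2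
  have cl : Continuous fun δ => ((m:ℝ)+1) * ((N δ) ^ (1 - 1 / ((m:ℝ)+1)) * C1) := by
    have := cN.rpow_const (p := 1 - 1 / ((m:ℝ)+1)) (fun _ => Or.inr h1n)
    fun_prop
  have cr : Continuous fun δ : ℝ => ((m:ℝ)+1) * (2 * S * δ ^ ((m:ℝ)/((m:ℝ)-1)) * (2 * R) ^ m)
        + μ / 2 * ((2 * (m:ℝ)/((m:ℝ)-1))^2 * A) + 1 / (2 * μ) * (N δ * C2) := by
    have := continuous_id.rpow_const (p := (m:ℝ)/((m:ℝ)-1)) (fun _ => Or.inr ha.le)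
    simp only [id] at this
    fun_prop
  have tl := (cl.tendsto 0).mono_left (nhdsWithin_le_nhds (s := Ioi 0))
  have tr := (cr.tendsto 0).mono_left (nhdsWithin_le_nhds (s := Ioi 0))
  have := le_of_tendsto_of_tendsto tl tr (by
    filter_upwards [self_mem_nhdsWithin] with δ hδ
    exact compact_step1 m hm2 R S μ δ hR hS hμ hδ v g hv hvs hvR hg hgp (N δ) rfl)
  simp only [hN0, Real.zero_rpow ha.ne'] at this
  simpa using this

lemma compact_ineq (m : ℕ) (hm2 : 2 ≤ m) (μ : ℝ) (hμ : 0 < μ)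
    (v g : (Fin (m+1) → ℝ) → ℝ) (hv : ContDiff ℝ 1 v) (hvs : HasCompactSupport v)
    (hg : Continuous g) (hgp : ∀ x, 0 < g x) (ig : Integrable g) (B0 : 0 < ∫ y, g y)
    (ig1 : Integrable fun y => g y ^ (1 - 1 / ((m:ℝ)+1)))
    (ig2 : Integrable fun y => g y * ∑ i, (y i) ^ 2) (L : ℝ)
    (hL : L = (∫ x, (v x ^ 2) ^ (((m:ℝ)+1)/((m:ℝ)-1))) / ∫ y, g y) :
    ((m:ℝ)+1) * (L ^ (1 - 1 / ((m:ℝ)+1)) * ∫ y, g y ^ (1 - 1 / ((m:ℝ)+1)))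
      ≤ μ / 2 * ((2 * (m:ℝ)/((m:ℝ)-1))^2 * ∫ x, ∑ i, (fderiv ℝ v x (Pi.single i 1)) ^ 2)
        + 1 / (2 * μ) * (L * ∫ y, g y * ∑ i, (y i) ^ 2) := by
  have h1n : 0 ≤ 1 - 1 / ((m:ℝ)+1) := by
    rw [sub_nonneg, div_le_one (by positivity)]; linarith [(Nat.cast_nonneg m : (0:ℝ) ≤ m)]
  have hcov : AECover (volume : Measure (Fin (m+1) → ℝ)) atTop
      (fun S : ℝ => Icc (fun _ : Fin (m+1) => -S) (fun _ => S)) := by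
    refine ⟨Eventually.of_forall fun x => ?_, fun S => measurableSet_Icc⟩
    filter_upwards [eventually_ge_atTop ‖x‖] with S hS
    have h2 : ∀ i, |x i| ≤ S := fun i => (norm_le_pi_norm x i).trans hS
    exact ⟨fun i => (abs_le.1 (h2 i)).1, fun i => (abs_le.1 (h2 i)).2⟩
  have t0 := hcov.integral_tendsto_of_countably_generated ig
  have t1 := hcov.integral_tendsto_of_countably_generated ig1
  have t2 := hcov.integral_tendsto_of_countably_generated ig2
  set M := ∫ x, (v x ^ 2) ^ (((m:ℝ)+1)/((m:ℝ)-1))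
  set A := ∫ x, ∑ i, (fderiv ℝ v x (Pi.single i 1)) ^ 2
  have tL : Tendsto (fun S : ℝ => M / ∫ y in Icc (fun _ => -S) (fun _ => S), g y) atTop (nhds L) := by
    rw [hL]; exact tendsto_const_nhds.div t0 B0.ne'
  have tLp := tL.rpow_const (p := 1 - 1 / ((m:ℝ)+1)) (Or.inr h1n)
  refine le_of_tendsto_of_tendsto ((tLp.mul t1).const_mul _)
    (((tL.mul t2).const_mul _).const_add _) ?_
  filter_upwards [eventually_gt_atTop 0] with S hS
  exact compact_step2 m hm2 S μ hS hμ v g hv hvs hg hgp _ rfl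

lemma norm_gradient_sq {m : ℕ} (v : EuclideanSpace ℝ (Fin m) → ℝ) (x : EuclideanSpace ℝ (Fin m)) :
    ‖gradient v x‖ ^ 2 = ∑ i, (fderiv ℝ v x (EuclideanSpace.single i 1)) ^ 2 := by
  rw [EuclideanSpace.real_norm_sq_eq]
  congr 1; ext i
  congr 1
  have h : inner ℝ (gradient v x) (EuclideanSpace.single i 1) = fderiv ℝ v x (EuclideanSpace.single i 1) := by
    simp only [gradient]
    exact InnerProductSpace.toDual_symm_apply
  rw [← h]
  generalize gradient v x = w
  simp [EuclideanSpace.inner_single_right]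

lemma norm_gradient_eq {m : ℕ} (v : EuclideanSpace ℝ (Fin m) → ℝ) (x : EuclideanSpace ℝ (Fin m)) :
    ‖gradient v x‖ = ‖fderiv ℝ v x‖ := by
  simp only [gradient]
  exact LinearIsometryEquiv.norm_map _ _

lemma int_toLp {m : ℕ} (f : EuclideanSpace ℝ (Fin m) → ℝ) :
    ∫ x : Fin m → ℝ, f (WithLp.toLp 2 x) = ∫ x, f x :=
  (PiLp.volume_preserving_toLp (Fin m)).integral_comp (MeasurableEquiv.toLp 2 (Fin m → ℝ)).measurableEmbedding f

lemma integrable_toLp {m : ℕ} {f : EuclideanSpace ℝ (Fin m) → ℝ} (hf : Integrable f) :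
    Integrable fun x : Fin m → ℝ => f (WithLp.toLp 2 x) :=
  ((PiLp.volume_preserving_toLp (Fin m)).integrable_comp_emb (MeasurableEquiv.toLp 2 (Fin m → ℝ)).measurableEmbedding).2 hf

lemma euclid_ineq (m : ℕ) (hm2 : 2 ≤ m) (μ : ℝ) (hμ : 0 < μ)
    (v g : EuclideanSpace ℝ (Fin (m+1)) → ℝ) (hv : ContDiff ℝ 1 v) (hvs : HasCompactSupport v)
    (hg : Continuous g) (hgp : ∀ x, 0 < g x) (ig : Integrable g) (B0 : 0 < ∫ y, g y)
    (ig1 : Integrable fun y => g y ^ (1 - 1 / ((m:ℝ)+1)))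
    (ig2 : Integrable fun y => g y * ‖y‖ ^ 2) (L : ℝ)
    (hL : L = (∫ x, (v x ^ 2) ^ (((m:ℝ)+1)/((m:ℝ)-1))) / ∫ y, g y) :
    ((m:ℝ)+1) * (L ^ (1 - 1 / ((m:ℝ)+1)) * ∫ y, g y ^ (1 - 1 / ((m:ℝ)+1)))
      ≤ μ / 2 * ((2 * (m:ℝ)/((m:ℝ)-1))^2 * ∫ x, ‖gradient v x‖ ^ 2)
        + 1 / (2 * μ) * (L * ∫ y, g y * ‖y‖ ^ 2) := by
  have ct : Continuous fun x : Fin (m+1) → ℝ => (WithLp.toLp 2 x : EuclideanSpace ℝ (Fin (m+1))) := by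
    fun_prop
  have hder : ∀ (x : Fin (m+1) → ℝ) i, fderiv ℝ (fun x => v (WithLp.toLp 2 x)) x (Pi.single i 1)
      = fderiv ℝ v (WithLp.toLp 2 x) (EuclideanSpace.single i 1) := by
    intro x i
    have h1 : HasFDerivAt (fun x : Fin (m+1) → ℝ => (WithLp.toLp 2 x : EuclideanSpace ℝ (Fin (m+1))))
      ((PiLp.continuousLinearEquiv 2 ℝ (fun _ : Fin (m+1) => ℝ)).symm : (Fin (m+1) → ℝ) →L[ℝ] EuclideanSpace ℝ (Fin (m+1))) x :=
      (PiLp.continuousLinearEquiv 2 ℝ (fun _ : Fin (m+1) => ℝ)).symm.hasFDerivAt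
    have h2 := (hv.differentiable one_ne_zero (WithLp.toLp 2 x)).hasFDerivAt.comp x h1
    have h3 := h2.fderiv
    simp only [Function.comp_def] at h3
    rw [h3]
    rfl
  have nsq : ∀ y : Fin (m+1) → ℝ, ∑ i, (y i) ^ 2 = ‖(WithLp.toLp 2 y : EuclideanSpace ℝ (Fin (m+1)))‖ ^ 2 := by
    intro y; rw [EuclideanSpace.real_norm_sq_eq]
  have key := compact_ineq m hm2 μ hμ (fun x => v (WithLp.toLp 2 x)) (fun x => g (WithLp.toLp 2 x))
    (hv.comp (PiLp.continuousLinearEquiv 2 ℝ (fun _ : Fin (m+1) => ℝ)).symm.contDiff)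
    (hvs.comp_homeomorph (PiLp.continuousLinearEquiv 2 ℝ (fun _ : Fin (m+1) => ℝ)).symm.toHomeomorph)
    (hg.comp ct) (fun x => hgp _) (integrable_toLp ig) (by rw [int_toLp g]; exact B0)
    (integrable_toLp ig1)
    (by simp only [nsq]; exact integrable_toLp ig2) L
    (by rw [hL, ← int_toLp, ← int_toLp g])
  simp only [hder] at key
  rw [int_toLp (fun y => g y ^ (1 - 1 / ((m:ℝ)+1))),
    int_toLp (fun x => ∑ i, (fderiv ℝ v x (EuclideanSpace.single i 1)) ^ 2)] at key
  have e1 : ∫ y : Fin (m+1) → ℝ, g (WithLp.toLp 2 y) * ∑ i, (y i) ^ 2 = ∫ y, g y * ‖y‖ ^ 2 := by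
    rw [← int_toLp]
    simp only [nsq]
  rw [e1] at key
  simp only [norm_gradient_sq]
  exact key

lemma rho_integrable (m : ℕ) (hm2 : 2 ≤ m) (K : ℝ) (hK : 1 ≤ K) :
    Integrable (fun y : EuclideanSpace ℝ (Fin (m+1)) => ((1 + ‖y‖^2/K)^m)⁻¹) := by
  have h := integrable_rpow_neg_one_add_norm_sq (E := EuclideanSpace ℝ (Fin (m+1))) (μ := volume)
    (r := 2 * (m:ℝ)) (by
      rw [finrank_euclideanSpace_fin]; push_cast
      have : (2:ℝ) ≤ m := by exact_mod_cast hm2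
      linarith)
  have h' := h.const_mul (K^m)
  refine h'.mono' ?_ ?_
  · have : Continuous (fun y : EuclideanSpace ℝ (Fin (m+1)) => ((1 + ‖y‖^2/K)^m)⁻¹) := by
      refine Continuous.inv₀ (by fun_prop) (fun y => ?_)
      positivity
    exact this.aestronglyMeasurable
  · refine Eventually.of_forall fun y => ?_
    have e : (1 + ‖y‖^2) ^ (-(2*(m:ℝ))/2) = ((1+‖y‖^2)^m)⁻¹ := by
      rw [show -(2*(m:ℝ))/2 = -(m:ℝ) by ring, Real.rpow_neg (by positivity), Real.rpow_natCast]
    rw [e, Real.norm_of_nonneg (by positivity)]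
    rw [← inv_inv (K^m), ← mul_inv, ← inv_pow K, ← mul_pow]
    refine inv_anti₀ (by positivity) ?_
    refine pow_le_pow_left₀ (by positivity) ?_ m
    have : K⁻¹ ≤ 1 := inv_le_one_of_one_le₀ hK
    rw [mul_add, div_eq_mul_inv]
    linarith

lemma radial_identity (m : ℕ) (hm2 : 2 ≤ m) (K : ℝ) (hK : 1 ≤ K)  
    (i0 : IntegrableOn (fun r : ℝ => r^m * ((1 + r^2/K)^(m+1))⁻¹) (Ioi 0))
    (i1 : IntegrableOn (fun r : ℝ => r^m * ((1 + r^2/K)^m)⁻¹) (Ioi 0)) :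
    2 * (m:ℝ) * (∫ r in Ioi (0:ℝ), r^m * ((1 + r^2/K)^(m+1))⁻¹)
      = ((m:ℝ)-1) * ∫ r in Ioi (0:ℝ), r^m * ((1 + r^2/K)^m)⁻¹ := by
  have hK0 : 0 < K := by linarith
  have hd : ∀ r ∈ Ici (0:ℝ), HasDerivAt (fun r : ℝ => r^(m+1) * ((1 + r^2/K)^m)⁻¹)
      (2 * (m:ℝ) * (r^m * ((1 + r^2/K)^(m+1))⁻¹) - ((m:ℝ)-1) * (r^m * ((1 + r^2/K)^m)⁻¹)) r := by
    intro r _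
    have hr : (1 + r^2/K) ≠ 0 := by positivity
    obtain ⟨k, rfl⟩ : ∃ k, m = k + 1 := ⟨m-1, by omega⟩
    have a0 : HasDerivAt (fun r : ℝ => 1 + r^2/K) (2*r/K) r := by
      have := ((hasDerivAt_pow 2 r).div_const K).const_add 1
      simpa using this
    have a : HasDerivAt (fun r : ℝ => (1 + r^2/K)^(k+1)) (((k:ℝ)+1) * (1 + r^2/K)^k * (2*r/K)) r := by
      have := a0.fun_pow (k+1)
      simpa using this
    have b : HasDerivAt (fun r : ℝ => r^(k+1+1) * ((1 + r^2/K)^(k+1))⁻¹)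
        (((k:ℝ)+1+1) * r^(k+1) * ((1 + r^2/K)^(k+1))⁻¹ + r^(k+1+1) *
          (-(((k:ℝ)+1) * (1 + r^2/K)^k * (2*r/K)) / ((1 + r^2/K)^(k+1))^2)) r := by
      have := (hasDerivAt_pow (k+1+1) r).fun_mul (a.fun_inv (pow_ne_zero _ hr))
      simpa using this
    refine b.congr_deriv ?_
    have hs : r^2/K = (1 + r^2/K) - 1 := by ring
    have e : r^(k+1+1) * (2*r/K) = 2 * r^(k+1) * ((1 + r^2/K) - 1) := by rw [← hs]; ring
    have e' : r^(k+1+1) * (-(((k:ℝ)+1) * (1 + r^2/K)^k * (2*r/K)) / ((1 + r^2/K)^(k+1))^2)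
      = -((k:ℝ)+1) * (1 + r^2/K)^k * (r^(k+1+1) * (2*r/K)) / ((1 + r^2/K)^(k+1))^2 := by ring
    rw [e', e]
    generalize 1 + r^2/K = s at *
    push_cast
    field_simp
    ring
  have ht : Tendsto (fun r : ℝ => r^(m+1) * ((1 + r^2/K)^m)⁻¹) atTop (nhds 0) := by
    have h0 : Tendsto (fun r : ℝ => K^m * r⁻¹) atTop (nhds 0) := by
      simpa using tendsto_inv_atTop_zero.const_mul (K^m)
    refine squeeze_zero' ?_ ?_ h0
    · filter_upwards [eventually_gt_atTop 0] with r hr; positivity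
    · filter_upwards [eventually_ge_atTop 1] with r hr
      have hr0 : 0 < r := by linarith
      rw [← div_eq_mul_inv, ← div_eq_mul_inv, div_le_div_iff₀ (by positivity) hr0, ← mul_pow]
      calc r^(m+1)*r = r^(m+2) := by ring
        _ ≤ r^(2*m) := pow_le_pow_right₀ hr (by omega)
        _ = (r^2)^m := by rw [pow_mul]
        _ ≤ _ := by
          refine pow_le_pow_left₀ (by positivity) ?_ m
          rw [mul_add, mul_div_cancel₀ _ hK0.ne']
          linarith
  have := integral_Ioi_of_hasDerivAt_of_tendsto' hd ((i0.const_mul _).sub (i1.const_mul _)) ht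
  rw [integral_sub (i0.const_mul _) (i1.const_mul _), integral_const_mul, integral_const_mul] at this
  simp at this
  linarith

lemma W_ints (m : ℕ) (hm2 : 2 ≤ m) (K : ℝ) (hK : 1 ≤ K) :
    Integrable (fun y : EuclideanSpace ℝ (Fin (m+1)) => ((1 + ‖y‖^2/K)^(m+1))⁻¹) ∧
    Integrable (fun y : EuclideanSpace ℝ (Fin (m+1)) => ((1 + ‖y‖^2/K)^(m+1))⁻¹ * ‖y‖^2) ∧
    (0 < ∫ y : EuclideanSpace ℝ (Fin (m+1)), ((1 + ‖y‖^2/K)^(m+1))⁻¹) ∧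
    (2 * (m:ℝ) * (∫ y : EuclideanSpace ℝ (Fin (m+1)), ((1 + ‖y‖^2/K)^(m+1))⁻¹)
      = ((m:ℝ)-1) * ∫ y : EuclideanSpace ℝ (Fin (m+1)), ((1 + ‖y‖^2/K)^m)⁻¹) ∧
    ((∫ y : EuclideanSpace ℝ (Fin (m+1)), ((1 + ‖y‖^2/K)^(m+1))⁻¹ * ‖y‖^2)
      = K * ((∫ y : EuclideanSpace ℝ (Fin (m+1)), ((1 + ‖y‖^2/K)^m)⁻¹)
        - ∫ y : EuclideanSpace ℝ (Fin (m+1)), ((1 + ‖y‖^2/K)^(m+1))⁻¹)) := by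
  have hK0 : 0 < K := by linarith
  have i1 := rho_integrable m hm2 K hK
  have hc : Continuous (fun y : EuclideanSpace ℝ (Fin (m+1)) => ((1 + ‖y‖^2/K)^(m+1))⁻¹) := by
    refine Continuous.inv₀ (by fun_prop) (fun y => ?_)
    positivity
  have i0 : Integrable (fun y : EuclideanSpace ℝ (Fin (m+1)) => ((1 + ‖y‖^2/K)^(m+1))⁻¹) := by
    refine i1.mono' hc.aestronglyMeasurable (Eventually.of_forall fun y => ?_)
    rw [Real.norm_of_nonneg (by positivity)]
    refine inv_anti₀ (by positivity) ?_
    refine pow_le_pow_right₀ ?_ (by omega)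
    have : 0 ≤ ‖y‖^2/K := by positivity
    linarith
  have e2 : (fun y : EuclideanSpace ℝ (Fin (m+1)) => ((1 + ‖y‖^2/K)^(m+1))⁻¹ * ‖y‖^2)
      = fun y => K * (((1 + ‖y‖^2/K)^m)⁻¹ - ((1 + ‖y‖^2/K)^(m+1))⁻¹) := by
    ext y
    have : (1 + ‖y‖^2/K) ≠ 0 := by positivity
    rw [pow_succ]
    field_simp
    ring
  refine ⟨i0, ?_, ?_, ?_, ?_⟩
  · rw [e2]; exact (i1.sub i0).const_mul K
  · exact integral_pos_of_integrable_nonneg_nonzero (x := 0) hc i0 (fun y => by positivity) (by positivity)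
  · have j0 := (integrable_fun_norm_addHaar (volume : Measure (EuclideanSpace ℝ (Fin (m+1))))
      (f := fun r : ℝ => ((1 + r^2/K)^(m+1))⁻¹)).1 i0
    have j1 := (integrable_fun_norm_addHaar (volume : Measure (EuclideanSpace ℝ (Fin (m+1))))
      (f := fun r : ℝ => ((1 + r^2/K)^m)⁻¹)).1 i1
    rw [integral_fun_norm_addHaar (volume : Measure (EuclideanSpace ℝ (Fin (m+1))))
      (fun r : ℝ => ((1 + r^2/K)^(m+1))⁻¹), integral_fun_norm_addHaar (volume : Measure (EuclideanSpace ℝ (Fin (m+1))))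
      (fun r : ℝ => ((1 + r^2/K)^m)⁻¹)]
    simp only [finrank_euclideanSpace_fin, Nat.add_sub_cancel, smul_eq_mul, nsmul_eq_mul] at j0 j1 ⊢
    have := radial_identity m hm2 K hK j0 j1
    generalize (volume : Measure (EuclideanSpace ℝ (Fin (m+1)))).real (ball 0 1) = V at *
    linear_combination ((m+1:ℕ):ℝ) * V * this
  · rw [e2, integral_const_mul, integral_sub i1 i0]

lemma sobolev_compact (m : ℕ) (hm2 : 2 ≤ m) (K : ℝ) (hK : K = ((m:ℝ)+1)*((m:ℝ)-1))
    (v : EuclideanSpace ℝ (Fin (m+1)) → ℝ) (hv : ContDiff ℝ 1 v) (hvs : HasCompactSupport v) (B : ℝ)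
    (hB : B = ∫ y : EuclideanSpace ℝ (Fin (m+1)), ((1 + ‖y‖^2/K)^(m+1))⁻¹) :
    ((∫ x, (v x ^ 2) ^ (((m:ℝ)+1)/((m:ℝ)-1))) / B) ^ (((m:ℝ)-1)/((m:ℝ)+1)) * B
      ≤ ∫ x, ‖gradient v x‖ ^ 2 := by
  have hm : (2:ℝ) ≤ m := by exact_mod_cast hm2
  have hK1 : 1 ≤ K := by rw [hK]; nlinarith
  have hm1 : (0:ℝ) < (m:ℝ) - 1 := by linarith
  obtain ⟨i0, i2, B0, h1, h2⟩ := W_ints m hm2 K hK1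
  have i1 := rho_integrable m hm2 K hK1
  have hgp : ∀ y : EuclideanSpace ℝ (Fin (m+1)), 0 < ((1 + ‖y‖^2/K)^(m+1))⁻¹ := fun y => by positivity
  have hc : Continuous (fun y : EuclideanSpace ℝ (Fin (m+1)) => ((1 + ‖y‖^2/K)^(m+1))⁻¹) := by
    refine Continuous.inv₀ (by fun_prop) (fun y => ?_)
    positivity
  have eg : ∀ y : EuclideanSpace ℝ (Fin (m+1)), (((1 + ‖y‖^2/K)^(m+1))⁻¹) ^ (1 - 1 / ((m:ℝ)+1))
      = ((1 + ‖y‖^2/K)^m)⁻¹ := by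
    intro y
    have : 0 ≤ 1 + ‖y‖^2/K := by positivity
    rw [Real.inv_rpow (by positivity), ← Real.rpow_natCast, ← Real.rpow_mul this]
    congr 1
    rw [← Real.rpow_natCast _ m]
    congr 1
    push_cast; field_simp; ring
  have key := fun μ hμ => euclid_ineq m hm2 μ hμ v (fun y => ((1 + ‖y‖^2/K)^(m+1))⁻¹) hv hvs hc hgp
    i0 B0 (by simp only [eg]; exact i1) i2 _ rfl
  simp only [eg] at key
  rw [← hB] at *
  set C1 := ∫ y : EuclideanSpace ℝ (Fin (m+1)), ((1 + ‖y‖^2/K)^m)⁻¹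
  set C2 := ∫ y : EuclideanSpace ℝ (Fin (m+1)), ((1 + ‖y‖^2/K)^(m+1))⁻¹ * ‖y‖^2
  set A := ∫ x, ‖gradient v x‖ ^ 2
  set M := ∫ x, (v x ^ 2) ^ (((m:ℝ)+1)/((m:ℝ)-1))
  have hA : 0 ≤ A := integral_nonneg fun x => by positivity
  have hM : 0 ≤ M := integral_nonneg fun x => by positivity
  have hL : 0 ≤ M / B := by positivity
  generalize M / B = L at *
  rcases hL.eq_or_lt with hL | hL
  · rw [← hL, Real.zero_rpow (by positivity)]; linarith
  have hC1 : C1 = 2 * m / (m - 1) * B := by field_simp; linarith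
  have hC2 : C2 = (m+1)^2 * B := by
    rw [h2, hC1, hK]; field_simp; ring
  set l := L ^ (1/((m:ℝ)+1)) with hl
  have hlp : 0 < l := Real.rpow_pos_of_pos hL _
  set t := L ^ (((m:ℝ)-1)/((m:ℝ)+1)) with ht
  have htp : 0 < t := Real.rpow_pos_of_pos hL _
  have e1 : L ^ (1 - 1/((m:ℝ)+1)) = t * l := by
    rw [ht, hl, ← Real.rpow_add hL]; congr 1; field_simp; ring
  have e2 : L = t * l * l := by
    rw [← e1, hl, ← Real.rpow_add hL]
    conv_lhs => rw [← Real.rpow_one L]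
    congr 1; ring
  set q := 2 * (m:ℝ) / (m - 1) with hq
  have hqp : 0 < q := by positivity
  have k := key ((m+1) * l / q) (by positivity)
  rw [e1, hC1, hC2] at k
  have r : 1 / (2 * (((m:ℝ)+1) * l / q)) * (L * (((m:ℝ)+1)^2 * B)) = (m+1) * q / 2 * (t * l * B) := by
    rw [e2]; field_simp
  rw [r] at k
  have r2 : ((m:ℝ)+1) * l / q / 2 * (q^2 * A) = (m+1) * q / 2 * (l * A) := by
    field_simp
  rw [r2] at k
  have pos : 0 < ((m:ℝ)+1) * q / 2 * l := by positivity
  have : (((m:ℝ)+1) * q / 2 * l) * (t * B) ≤ (((m:ℝ)+1) * q / 2 * l) * A := by linarith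
  exact le_of_mul_le_mul_left this pos

lemma cutoff (m : ℕ) : ∃ C : ℝ, 0 ≤ C ∧ ∀ n : ℕ, 1 ≤ n → ∃ χ : EuclideanSpace ℝ (Fin m) → ℝ,
    ContDiff ℝ 1 χ ∧ HasCompactSupport χ ∧ (∀ x, 0 ≤ χ x) ∧ (∀ x, χ x ≤ 1) ∧
    (∀ x, ‖x‖ < n → χ x = 1) ∧ (∀ x, ‖fderiv ℝ χ x‖ ≤ C / n) ∧
    (∀ x, ‖x‖ < n → fderiv ℝ χ x = 0) ∧ (∀ x, 2 * (n:ℝ) < ‖x‖ → fderiv ℝ χ x = 0) := by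
  let φ : ContDiffBump (0 : EuclideanSpace ℝ (Fin m)) := ⟨1, 2, one_pos, one_lt_two⟩
  have hφ : ContDiff ℝ 1 φ := φ.contDiff
  obtain ⟨C, hC⟩ := (hφ.continuous_fderiv one_ne_zero).bounded_above_of_compact_support
    (φ.hasCompactSupport.fderiv ℝ)
  have hC0 : 0 ≤ C := (norm_nonneg _).trans (hC 0)
  refine ⟨C, hC0, fun n hn => ?_⟩
  have hn0 : (0:ℝ) < n := by exact_mod_cast hn
  have hd : ∀ x, HasFDerivAt (fun x => φ ((n:ℝ)⁻¹ • x)) ((n:ℝ)⁻¹ • fderiv ℝ φ ((n:ℝ)⁻¹ • x)) x := by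
    intro x
    have h1 : HasFDerivAt (fun x : EuclideanSpace ℝ (Fin m) => (n:ℝ)⁻¹ • x)
      ((n:ℝ)⁻¹ • ContinuousLinearMap.id ℝ _) x := (hasFDerivAt_id x).fun_const_smul _
    have h2 := ((hφ.differentiable one_ne_zero) ((n:ℝ)⁻¹ • x)).hasFDerivAt.comp x h1
    refine h2.congr_fderiv ?_
    ext y; simp
  have hnorm : ∀ x : EuclideanSpace ℝ (Fin m), ‖(n:ℝ)⁻¹ • x‖ = ‖x‖ / n := by
    intro x; rw [norm_smul, norm_inv, Real.norm_natCast]; field_simp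
  have h1 : ∀ x : EuclideanSpace ℝ (Fin m), ‖x‖ < n → φ ((n:ℝ)⁻¹ • x) = 1 := by
    intro x hx
    apply φ.one_of_mem_closedBall
    rw [mem_closedBall_zero_iff, hnorm]
    change _ ≤ (1:ℝ)
    rw [div_le_one hn0]; exact hx.le
  have h0 : ∀ x : EuclideanSpace ℝ (Fin m), 2 * (n:ℝ) < ‖x‖ → φ ((n:ℝ)⁻¹ • x) = 0 := by
    intro x hx
    apply φ.zero_of_le_dist
    rw [dist_zero_right, hnorm]
    change (2:ℝ) ≤ _
    rw [le_div_iff₀ hn0]; exact hx.le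
  refine ⟨fun x => φ ((n:ℝ)⁻¹ • x), by fun_prop, ?_, fun x => φ.nonneg, fun x => φ.le_one, h1, ?_, ?_, ?_⟩
  · refine HasCompactSupport.of_support_subset_isCompact (isCompact_closedBall 0 (2 * (n:ℝ))) ?_
    intro x hx
    rw [mem_closedBall_zero_iff]
    by_contra h
    exact hx (h0 x (not_le.1 h))
  · intro x
    rw [(hd x).fderiv, norm_smul, norm_inv, Real.norm_natCast, div_eq_inv_mul]
    gcongr
    exact hC _
  · intro x hx
    have : (fun x => φ ((n:ℝ)⁻¹ • x)) =ᶠ[nhds x] fun _ => 1 := by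
      filter_upwards [(isOpen_lt continuous_norm continuous_const).mem_nhds hx] with y hy using h1 y hy
    rw [this.fderiv_eq]; simp
  · intro x hx
    have : (fun x => φ ((n:ℝ)⁻¹ • x)) =ᶠ[nhds x] fun _ => 0 := by
      filter_upwards [(isOpen_lt continuous_const continuous_norm).mem_nhds hx] with y hy using h0 y hy
    rw [this.fderiv_eq]; simp

lemma young_cut (m : ℕ) (hm2 : 2 ≤ m) (δ a b : ℝ) (hδ : 0 < δ) (ha : 0 ≤ a) (hb : 0 ≤ b) :
    a * b ^ 2 ≤ (δ⁻¹) ^ (((m:ℝ)+1)/((m:ℝ)-1)) * a ^ (((m:ℝ)+1)/((m:ℝ)-1))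
      + δ ^ (((m:ℝ)+1)/2) * b ^ (m+1) := by
  have hm : (2:ℝ) ≤ m := by exact_mod_cast hm2
  have hm1 : (0:ℝ) < (m:ℝ) - 1 := by linarith
  have hc : (((m:ℝ)+1)/((m:ℝ)-1)).HolderConjugate (((m:ℝ)+1)/2) := by
    rw [Real.holderConjugate_iff]
    refine ⟨by rw [lt_div_iff₀ hm1]; linarith, by field_simp; ring⟩
  have h := Real.young_inequality_of_nonneg (a := δ⁻¹ * a) (b := δ * b^2) (by positivity) (by positivity) hc
  rw [Real.mul_rpow (by positivity) ha, Real.mul_rpow hδ.le (by positivity)] at h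
  have e : (b^2) ^ (((m:ℝ)+1)/2) = b ^ (m+1) := by
    rw [← Real.rpow_natCast b 2, ← Real.rpow_mul hb, ← Real.rpow_natCast b (m+1)]
    congr 1; push_cast; field_simp
  rw [e] at h
  have e2 : δ⁻¹ * a * (δ * b^2) = a * b^2 := by field_simp
  rw [e2] at h
  refine h.trans (add_le_add ?_ ?_)
  · refine div_le_self (by positivity) ?_
    rw [le_div_iff₀ hm1]; linarith
  · refine div_le_self (by positivity) ?_
    linarith

lemma cut_pointwise (η c a : ℝ) (E : Type*) [NormedAddCommGroup E] [NormedSpace ℝ E] (f g : E)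
    (hη : 0 < η) (hc : 0 ≤ c) (hc1 : c ≤ 1) :
    ‖c • f + a • g‖ ^ 2 ≤ (1+η) * ‖f‖^2 + (1 + 1/η) * (a^2 * ‖g‖^2) := by
  have h1 : ‖c • f + a • g‖ ≤ ‖f‖ + |a| * ‖g‖ := by
    refine (norm_add_le _ _).trans ?_
    rw [norm_smul, norm_smul, Real.norm_of_nonneg hc, Real.norm_eq_abs]
    gcongr
    exact mul_le_of_le_one_left (norm_nonneg _) hc1
  have h2 : ‖c • f + a • g‖^2 ≤ (‖f‖ + |a| * ‖g‖)^2 := pow_le_pow_left₀ (norm_nonneg _) h1 2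
  refine h2.trans ?_
  rw [← sq_abs a, ← mul_pow]
  generalize |a| * ‖g‖ = t
  generalize ‖f‖ = s
  have : (1+η) * s^2 + (1 + 1/η) * t^2 - (s+t)^2 = (η * s - t)^2 / η := by field_simp; ring
  have : 0 ≤ (η * s - t)^2 / η := by positivity
  linarith

lemma tail_tendsto {m : ℕ} (F : EuclideanSpace ℝ (Fin m) → ℝ) (hF : Integrable F) :
    Tendsto (fun n : ℕ => ∫ x, indicator {x | (n:ℝ) ≤ ‖x‖} F x) atTop (nhds 0) := by
  have h : Tendsto (fun n : ℕ => ∫ x, indicator {x | (n:ℝ) ≤ ‖x‖} F x) atTop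
      (nhds (∫ x : EuclideanSpace ℝ (Fin m), (0:ℝ))) := by
    refine tendsto_integral_of_dominated_convergence (fun x => ‖F x‖) ?_ hF.norm ?_ ?_
    · intro n
      exact hF.aestronglyMeasurable.indicator (measurableSet_le measurable_const measurable_norm)
    · intro n
      exact Eventually.of_forall fun x => norm_indicator_le_norm_self _ _
    · refine Eventually.of_forall fun x => ?_
      refine tendsto_const_nhds.congr' ?_
      obtain ⟨k, hk⟩ := exists_nat_gt ‖x‖
      filter_upwards [eventually_ge_atTop k] with n hn
      rw [indicator_of_notMem]
      have : (k:ℝ) ≤ n := by exact_mod_cast hn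
      exact not_le.2 (show ‖x‖ < (n:ℝ) by linarith)
  simpa using h

lemma sobolev_eta (m : ℕ) (hm2 : 2 ≤ m) (K : ℝ) (hK : K = ((m:ℝ)+1)*((m:ℝ)-1))
    (v : EuclideanSpace ℝ (Fin (m+1)) → ℝ) (hv : ContDiff ℝ 1 v) (B : ℝ)
    (hB : B = ∫ y : EuclideanSpace ℝ (Fin (m+1)), ((1 + ‖y‖^2/K)^(m+1))⁻¹)
    (hA : Integrable fun x => ‖gradient v x‖^2)
    (hM : Integrable fun x => (v x ^ 2) ^ (((m:ℝ)+1)/((m:ℝ)-1))) :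
    ∃ D : ℝ, ∀ η δ : ℝ, 0 < η → 0 < δ →
    ((∫ x, (v x ^ 2) ^ (((m:ℝ)+1)/((m:ℝ)-1))) / B) ^ (((m:ℝ)-1)/((m:ℝ)+1)) * B
      ≤ (1+η) * (∫ x, ‖gradient v x‖ ^ 2) + (1+1/η) * (δ ^ (((m:ℝ)+1)/2) * D) := by
  have hm : (2:ℝ) ≤ m := by exact_mod_cast hm2
  have hm1 : (0:ℝ) < (m:ℝ) - 1 := by linarith
  obtain ⟨C, hC0, hcut⟩ := cutoff (m+1)
  have hcut' : ∀ n : ℕ, ∃ χ : EuclideanSpace ℝ (Fin (m+1)) → ℝ, 1 ≤ n → 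
    (ContDiff ℝ 1 χ ∧ HasCompactSupport χ ∧ (∀ x, 0 ≤ χ x) ∧ (∀ x, χ x ≤ 1) ∧
    (∀ x, ‖x‖ < n → χ x = 1) ∧ (∀ x, ‖fderiv ℝ χ x‖ ≤ C / n) ∧
    (∀ x, ‖x‖ < n → fderiv ℝ χ x = 0) ∧ (∀ x, 2 * (n:ℝ) < ‖x‖ → fderiv ℝ χ x = 0)) := by
    intro n
    by_cases h : 1 ≤ n
    · obtain ⟨χ, hχ⟩ := hcut n h
      exact ⟨χ, fun _ => hχ⟩
    · exact ⟨0, fun h' => absurd h' h⟩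
  choose χ hχ using hcut'
  set V := (volume : Measure (EuclideanSpace ℝ (Fin (m+1)))).real (closedBall 0 1)
  refine ⟨(2*C)^(m+1) * V, fun η δ hη hδ => ?_⟩
  set F := fun x => (v x ^ 2) ^ (((m:ℝ)+1)/((m:ℝ)-1)) with hFdef
  set κ := ((m:ℝ)+1)/((m:ℝ)-1) with hκ
  have hκ0 : 0 < κ := by positivity
  have hF0 : ∀ x, 0 ≤ F x := fun x => by positivity
  -- bound for each n
  have step : ∀ n : ℕ, 1 ≤ n →
      ((∫ x, ((χ n x * v x) ^ 2) ^ κ) / B) ^ (((m:ℝ)-1)/((m:ℝ)+1)) * B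
      ≤ (1+η) * (∫ x, ‖gradient v x‖ ^ 2) + (1+1/η) *
        ((δ⁻¹) ^ κ * (∫ x, indicator {x | (n:ℝ) ≤ ‖x‖} F x) + δ ^ (((m:ℝ)+1)/2) * ((2*C)^(m+1) * V)) := by
    intro n hn
    have hn0 : (0:ℝ) < n := by exact_mod_cast hn
    obtain ⟨c1, c2, c3, c4, c5, c6, c7, c8⟩ := hχ n hn
    refine (sobolev_compact m hm2 K hK (fun x => χ n x * v x) (c1.mul hv) (c2.mul_right) B hB).trans ?_
    have iI : Integrable (indicator {x : EuclideanSpace ℝ (Fin (m+1)) | (n:ℝ) ≤ ‖x‖} F) :=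
      hM.indicator (measurableSet_le measurable_const measurable_norm)
    have iJ : Integrable (indicator (closedBall (0:EuclideanSpace ℝ (Fin (m+1))) (2*(n:ℝ))) (fun _ => (C/n)^(m+1))) :=
      (integrable_indicator_iff measurableSet_closedBall).2 
        (integrableOn_const (measure_closedBall_lt_top.ne))
    have eJ : ∫ x, (indicator (closedBall (0:EuclideanSpace ℝ (Fin (m+1))) (2*(n:ℝ))) (fun _ => (C/n)^(m+1))) x
        = (2*C)^(m+1) * V := by
      rw [integral_indicator measurableSet_closedBall, setIntegral_const, smul_eq_mul]
      rw [Measure.addHaar_real_closedBall _ _ (by positivity), finrank_euclideanSpace_fin]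
      have : (volume : Measure (EuclideanSpace ℝ (Fin (m+1)))).real (ball 0 1) = V := by
        have := Measure.addHaar_real_closedBall (volume : Measure (EuclideanSpace ℝ (Fin (m+1)))) 0 zero_le_one
        simp at this
        exact this.symm
      rw [this, mul_right_comm, ← mul_pow]
      congr 2
      field_simp
    have iT : Integrable (fun x => (1+1/η) * ((δ⁻¹) ^ κ * indicator {x : EuclideanSpace ℝ (Fin (m+1)) | (n:ℝ) ≤ ‖x‖} F x
        + δ ^ (((m:ℝ)+1)/2) *
      (indicator (closedBall (0:EuclideanSpace ℝ (Fin (m+1))) (2*(n:ℝ))) (fun _ => (C/n)^(m+1))) x)) :=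
      (((iI.const_mul _).add (iJ.const_mul _)).const_mul _)
    rw [← eJ, ← integral_const_mul, ← integral_const_mul, ← integral_const_mul, ← integral_add (iI.const_mul _) (iJ.const_mul _),
      ← integral_const_mul, ← integral_add (hA.const_mul _) iT]
    refine integral_mono_of_nonneg (Eventually.of_forall fun x => by positivity)
      ((hA.const_mul _).add iT) (Eventually.of_forall fun x => ?_)
    simp only [norm_gradient_eq]
    have hd : fderiv ℝ (fun x => χ n x * v x) x = χ n x • fderiv ℝ v x + v x • fderiv ℝ (χ n) x :=
      fderiv_fun_mul (c1.differentiable one_ne_zero x) (hv.differentiable one_ne_zero x)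
    rw [hd]
    refine (cut_pointwise η (χ n x) (v x) _ _ _ hη (c3 x) (c4 x)).trans ?_
    gcongr
    have nonn : 0 ≤ (δ⁻¹) ^ κ * indicator {x : EuclideanSpace ℝ (Fin (m+1)) | (n:ℝ) ≤ ‖x‖} F x + δ ^ (((m:ℝ)+1)/2) *
      (indicator (closedBall (0:EuclideanSpace ℝ (Fin (m+1))) (2*(n:ℝ))) (fun _ => (C/n)^(m+1))) x := by
      have a1 := indicator_nonneg (s := {x : EuclideanSpace ℝ (Fin (m+1)) | (n:ℝ) ≤ ‖x‖}) (fun x _ => hF0 x) x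
      have a2 : 0 ≤ (indicator (closedBall (0:EuclideanSpace ℝ (Fin (m+1))) (2*(n:ℝ))) (fun _ => (C/n)^(m+1))) x :=
        indicator_nonneg (fun x _ => by positivity) x
      positivity
    by_cases hx1 : ‖x‖ < n
    · rw [c7 x hx1]; simpa using nonn
    by_cases hx2 : 2 * (n:ℝ) < ‖x‖
    · rw [c8 x hx2]; simpa using nonn
    rw [indicator_of_mem (by simpa using hx1), indicator_of_mem (by simpa using hx2)]
    calc v x ^ 2 * ‖fderiv ℝ (χ n) x‖^2 ≤ v x ^ 2 * (C/n)^2 := by gcongr; exact c6 x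
      _ ≤ _ := young_cut m hm2 δ _ _ hδ (by positivity) (by positivity)
  -- limit
  have l1 : Tendsto (fun n : ℕ => ∫ x, ((χ n x * v x) ^ 2) ^ κ) atTop (nhds (∫ x, F x)) := by
    refine tendsto_integral_filter_of_dominated_convergence F ?_ ?_ hM ?_
    · filter_upwards [eventually_ge_atTop 1] with n hn
      have : Continuous fun x => ((χ n x * v x) ^ 2) ^ κ := by
        have c1 := (hχ n hn).1.continuous
        have := hv.continuous
        exact Continuous.rpow_const (by fun_prop) (fun _ => Or.inr hκ0.le)
      exact this.aestronglyMeasurable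
    · filter_upwards [eventually_ge_atTop 1] with n hn
      obtain ⟨c1, c2, c3, c4, c5, c6, c7, c8⟩ := hχ n hn
      refine Eventually.of_forall fun x => ?_
      rw [Real.norm_of_nonneg (by positivity)]
      refine Real.rpow_le_rpow (by positivity) ?_ hκ0.le
      rw [mul_pow]
      exact mul_le_of_le_one_left (by positivity) (pow_le_one₀ (c3 x) (c4 x))
    · refine Eventually.of_forall fun x => ?_
      refine tendsto_const_nhds.congr' ?_
      obtain ⟨k, hk⟩ := exists_nat_gt ‖x‖
      filter_upwards [eventually_ge_atTop k, eventually_ge_atTop 1] with n hn hn1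
      have : (k:ℝ) ≤ n := by exact_mod_cast hn
      obtain ⟨c1, c2, c3, c4, c5, c6, c7, c8⟩ := hχ n hn1
      rw [c5 x (by linarith), one_mul]
  have l2 : Tendsto (fun n : ℕ => ((∫ x, ((χ n x * v x) ^ 2) ^ κ) / B) ^ (((m:ℝ)-1)/((m:ℝ)+1)) * B) atTop
      (nhds (((∫ x, F x) / B) ^ (((m:ℝ)-1)/((m:ℝ)+1)) * B)) :=
    ((l1.div_const B).rpow_const (Or.inr (by positivity))).mul_const B
  have l3 : Tendsto (fun n : ℕ => (1+η) * (∫ x, ‖gradient v x‖ ^ 2) + (1+1/η) *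
        ((δ⁻¹) ^ κ * (∫ x, indicator {x | (n:ℝ) ≤ ‖x‖} F x) + δ ^ (((m:ℝ)+1)/2) * ((2*C)^(m+1) * V))) atTop
      (nhds ((1+η) * (∫ x, ‖gradient v x‖ ^ 2) + (1+1/η) *
        ((δ⁻¹) ^ κ * 0 + δ ^ (((m:ℝ)+1)/2) * ((2*C)^(m+1) * V)))) :=
    ((((tail_tendsto F hM).const_mul _).add_const _).const_mul _).const_add _
  rw [mul_zero, zero_add] at l3
  exact le_of_tendsto_of_tendsto l2 l3 (by filter_upwards [eventually_ge_atTop 1] with n hn using step n hn)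

lemma sobolev_full (m : ℕ) (hm2 : 2 ≤ m) (K : ℝ) (hK : K = ((m:ℝ)+1)*((m:ℝ)-1))
    (v : EuclideanSpace ℝ (Fin (m+1)) → ℝ) (hv : ContDiff ℝ 1 v) (B : ℝ)
    (hB : B = ∫ y : EuclideanSpace ℝ (Fin (m+1)), ((1 + ‖y‖^2/K)^(m+1))⁻¹)
    (hA : Integrable fun x => ‖gradient v x‖^2)
    (hM : Integrable fun x => (v x ^ 2) ^ (((m:ℝ)+1)/((m:ℝ)-1))) :
    ((∫ x, (v x ^ 2) ^ (((m:ℝ)+1)/((m:ℝ)-1))) / B) ^ (((m:ℝ)-1)/((m:ℝ)+1)) * B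
      ≤ ∫ x, ‖gradient v x‖ ^ 2 := by
  obtain ⟨D, hD⟩ := sobolev_eta m hm2 K hK v hv B hB hA hM
  generalize ((∫ x, (v x ^ 2) ^ (((m:ℝ)+1)/((m:ℝ)-1))) / B) ^ (((m:ℝ)-1)/((m:ℝ)+1)) * B = S at *
  generalize ∫ x, ‖gradient v x‖ ^ 2 = A at *
  have s1 : ∀ η : ℝ, 0 < η → S ≤ (1+η) * A := by
    intro η hη
    have l0 : Tendsto (fun δ : ℝ => δ ^ (((m:ℝ)+1)/2)) (nhdsWithin 0 (Ioi 0)) (nhds 0) := by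
      have : Tendsto (fun δ : ℝ => δ ^ (((m:ℝ)+1)/2)) (nhds 0) (nhds (0 ^ (((m:ℝ)+1)/2))) :=
        (tendsto_id (α := ℝ)).rpow_const (Or.inr (by positivity))
      rw [Real.zero_rpow (by positivity)] at this
      exact this.mono_left nhdsWithin_le_nhds
    have l1 := ((l0.mul_const D).const_mul (1+1/η)).const_add ((1+η)*A)
    simp only [zero_mul, mul_zero, add_zero] at l1
    exact ge_of_tendsto l1 (by filter_upwards [self_mem_nhdsWithin] with δ hδ using hD η δ hη hδ)
  have l2 : Tendsto (fun η : ℝ => (1+η) * A) (nhdsWithin 0 (Ioi 0)) (nhds A) := by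
    have : Continuous fun η : ℝ => (1+η)*A := by fun_prop
    have h := this.tendsto 0
    simp only [add_zero, one_mul] at h
    exact h.mono_left nhdsWithin_le_nhds
  exact ge_of_tendsto l2 (by filter_upwards [self_mem_nhdsWithin] with η hη using s1 η hη)

lemma gradW_sq (m : ℕ) (hm2 : 2 ≤ m) (x : EuclideanSpace ℝ (Fin (m+1))) :
    ‖gradient (W (m+1)) x‖ ^ 2
      = (1/((m:ℝ)+1)^2) * (((1 + ‖x‖^2/(((m:ℝ)+1)*((m:ℝ)-1)))^(m+1))⁻¹ * ‖x‖^2) := by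
  have hm : (2:ℝ) ≤ m := by exact_mod_cast hm2
  have hm1 : (0:ℝ) < (m:ℝ) - 1 := by linarith
  have hW : W (m+1) = fun x => (1 + ‖x‖^2/(((m:ℝ)+1)*((m:ℝ)-1))) ^ (-(((m:ℝ)-1)/2)) := by
    ext x
    unfold W
    push_cast
    rw [show (m:ℝ)+1-2 = m - 1 by ring]
  rw [hW, norm_gradient_eq]
  set K := ((m:ℝ)+1)*((m:ℝ)-1) with hK
  have hK0 : 0 < K := by positivity
  have hr : 0 < 1 + ‖x‖^2/K := by positivity
  have h1 : HasFDerivAt (fun x : EuclideanSpace ℝ (Fin (m+1)) => ‖x‖^2) ((2:ℝ) • innerSL ℝ x) x := by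
    have := (hasStrictFDerivAt_norm_sq x).hasFDerivAt
    rwa [← Nat.cast_smul_eq_nsmul ℝ] at this
  have h2 : HasFDerivAt (fun x : EuclideanSpace ℝ (Fin (m+1)) => 1 + ‖x‖^2/K) (K⁻¹ • ((2:ℝ) • innerSL ℝ x)) x := by
    have := (h1.const_mul K⁻¹).const_add 1
    simpa only [div_eq_inv_mul] using this
  have h3 := h2.rpow_const (p := -(((m:ℝ)-1)/2)) (Or.inl hr.ne')
  rw [h3.fderiv, norm_smul, norm_smul, norm_smul, innerSL_apply_norm]
  rw [mul_pow, Real.norm_eq_abs, sq_abs, mul_pow, ← Real.rpow_natCast (_ ^ _) 2, ← Real.rpow_mul hr.le]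
  rw [show (-(((m:ℝ)-1)/2) - 1) * ((2:ℕ):ℝ) = -((m+1:ℕ):ℝ) by push_cast; ring, Real.rpow_neg hr.le, Real.rpow_natCast]
  rw [Real.norm_of_nonneg (by positivity), Real.norm_of_nonneg (by positivity)]
  have : (-(((m:ℝ)-1)/2))^2 * (K⁻¹ * 2)^2 = 1/((m:ℝ)+1)^2 := by
    rw [hK]; field_simp
  rw [← this]
  ring

lemma main_m (m : ℕ) (hm2 : 2 ≤ m) (v : EuclideanSpace ℝ (Fin (m+1)) → ℝ)
    (hv : ContDiff ℝ 1 v)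
    (hgrad : Integrable (fun x => ‖gradient v x‖ ^ 2))
    (hLp : Integrable (fun x => |v x| ^ (2 * ((m+1:ℕ) : ℝ) / (((m+1:ℕ) : ℝ) - 2))))
    (h1 : (∫ x, ‖gradient v x‖ ^ 2) ≤ ∫ x, ‖gradient (W (m+1)) x‖ ^ 2) :
    (∫ x, ‖gradient v x‖ ^ 2) ≤ ((m+1:ℕ) : ℝ) * energy (m+1) v 0 := by
  have hm : (2:ℝ) ≤ m := by exact_mod_cast hm2
  have hm1 : (0:ℝ) < (m:ℝ) - 1 := by linarith
  have hpow : ∀ x, |v x| ^ (2 * ((m+1:ℕ) : ℝ) / (((m+1:ℕ) : ℝ) - 2)) = (v x ^ 2) ^ (((m:ℝ)+1)/((m:ℝ)-1)) := by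
    intro x
    rw [← sq_abs, ← Real.rpow_natCast _ 2, ← Real.rpow_mul (abs_nonneg _)]
    congr 1
    push_cast
    rw [show (m:ℝ)+1-2 = m - 1 by ring]
    ring
  unfold energy
  simp only [hpow] at hLp ⊢
  simp only [Pi.zero_apply]
  obtain ⟨K, hK⟩ : ∃ K, K = ((m:ℝ)+1)*((m:ℝ)-1) := ⟨_, rfl⟩
  have hK1 : 1 ≤ K := by rw [hK]; nlinarith
  obtain ⟨i0, i2, B0, e1, e2⟩ := W_ints m hm2 K hK1
  have hS := sobolev_full m hm2 K hK v hv _ rfl hgrad hLp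
  have hAW : ∫ x, ‖gradient (W (m+1)) x‖ ^ 2 = ∫ y : EuclideanSpace ℝ (Fin (m+1)), ((1 + ‖y‖^2/K)^(m+1))⁻¹ := by
    simp only [gradW_sq m hm2]
    rw [integral_const_mul, ← hK, e2]
    have hC1 : ∫ y : EuclideanSpace ℝ (Fin (m+1)), ((1 + ‖y‖^2/K)^m)⁻¹ = 2 * (m:ℝ) / ((m:ℝ) - 1) *
      ∫ y : EuclideanSpace ℝ (Fin (m+1)), ((1 + ‖y‖^2/K)^(m+1))⁻¹ := by
      rw [div_mul_eq_mul_div, eq_div_iff hm1.ne', e1]; ring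
    rw [hC1]
    generalize (∫ y : EuclideanSpace ℝ (Fin (m+1)), ((1 + ‖y‖^2/K)^(m+1))⁻¹) = B
    rw [hK]; field_simp; ring
  rw [hAW] at h1
  have hM : 0 ≤ ∫ x, (v x ^ 2) ^ (((m:ℝ)+1)/((m:ℝ)-1)) := integral_nonneg fun x => by positivity
  generalize (∫ y : EuclideanSpace ℝ (Fin (m+1)), ((1 + ‖y‖^2/K)^(m+1))⁻¹) = B at *
  generalize (∫ x, (v x ^ 2) ^ (((m:ℝ)+1)/((m:ℝ)-1))) = M at *
  generalize (∫ x, ‖gradient v x‖ ^ 2) = A at *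
  have hMA : M ≤ A := by
    set L := M / B with hL
    have hL0 : 0 ≤ L := by positivity
    have hML : M = L * B := by rw [hL]; field_simp
    have ht : L ^ (((m:ℝ)-1)/((m:ℝ)+1)) ≤ 1 := by
      have : L ^ (((m:ℝ)-1)/((m:ℝ)+1)) * B ≤ 1 * B := by linarith
      exact le_of_mul_le_mul_right this B0
    have hs : 0 < ((m:ℝ)-1)/((m:ℝ)+1) := by positivity
    have hL1 : L ≤ 1 := by
      by_contra hcon
      exact absurd (Real.one_lt_rpow (not_le.1 hcon) hs) (not_lt.2 ht)
    have hLs : L ≤ L ^ (((m:ℝ)-1)/((m:ℝ)+1)) := by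
      rcases hL0.eq_or_lt with h0 | h0
      · rw [← h0]; positivity
      · conv_lhs => rw [← Real.rpow_one L]
        refine Real.rpow_le_rpow_of_exponent_ge h0 hL1 ?_
        rw [div_le_one (by positivity)]; linarith
    rw [hML]
    exact (mul_le_mul_of_nonneg_right hLs B0.le).trans hS
  push_cast
  have : ((m:ℝ)+1) * (1/2 * (∫ x : EuclideanSpace ℝ (Fin (m+1)), (0:ℝ)^2) + 1/2 * A - ((m:ℝ)+1-2)/(2*((m:ℝ)+1)) * M)
    = A + (m-1)/2 * (A - M) := by
    simp
    field_simp
    ring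
  rw [this]
  have : 0 ≤ ((m:ℝ)-1)/2 * (A - M) := by
    apply mul_nonneg <;> linarith
  linarith

/-- Claim 2.2, first part: variational estimate below the ground state.  If
`‖∇v‖² ≤ ‖∇W‖²` and `E(v,0) ≤ E(W,0)` then `‖∇v‖² ≤ N E(v,0)`. -/
theorem stmt0 (N : ℕ) (hN : N = 3 ∨ N = 4 ∨ N = 5)
    (v : EuclideanSpace ℝ (Fin N) → ℝ)
    (hv : ContDiff ℝ 1 v)
    (hgrad : Integrable (fun x => ‖gradient v x‖ ^ 2))
    (hLp : Integrable (fun x => |v x| ^ (2 * (N : ℝ) / ((N : ℝ) - 2))))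
    (h1 : (∫ x, ‖gradient v x‖ ^ 2) ≤ ∫ x, ‖gradient (W N) x‖ ^ 2)
    (h2 : energy N v 0 ≤ energy N (W N) 0) :
    (∫ x, ‖gradient v x‖ ^ 2) ≤ (N : ℝ) * energy N v 0 := by
  obtain ⟨m, rfl⟩ : ∃ m, N = m + 1 := ⟨N - 1, by omega⟩
  exact main_m m (by omega) v hv hgrad hLp h1

end
end

section
/- Let N ∈ {3,4,5}. There exist constants c > 0 and ε₀ > 0 such that for every ε ∈ (0, ε₀] and every continuously differentiable v : ℝ^N → ℝ with ∇v ∈ L²(ℝ^N) and v ∈ L^{2N/(N−2)}(ℝ^N) satisfying ε ≤ ∫_{ℝ^N}|∇v|² dx ≤ (N/(N−2))^{(N−2)/2} ∫_{ℝ^N}|∇W|² dx − ε, one has E(v,0) ≥ c·ε. -/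
open MeasureTheory Metric Filter Set

noncomputable section

structure Fam {X : Type*} [TopologicalSpace X] (f : X → ℝ → ℝ) : Prop where
  cont : Continuous (Function.uncurry f)
  pos : ∀ x s, 0 < f x s
  bd : ∃ C : ℝ, ∀ x s, f x s ≤ C * (1 + s ^ 2)⁻¹

def mass {X : Type*} (f : X → ℝ → ℝ) (x : X) : ℝ := ∫ s, f x s

def cdf' {X : Type*} (f : X → ℝ → ℝ) (x : X) (s : ℝ) : ℝ :=
  ((∫ t in Iic (0:ℝ), f x t) + ∫ t in (0:ℝ)..s, f x t) / mass f x

section fam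
variable {X : Type*} [TopologicalSpace X] [FirstCountableTopology X] {f : X → ℝ → ℝ}

lemma Fam.cont1 (hf : Fam f) (x : X) : Continuous (f x) :=
  hf.cont.comp (Continuous.prodMk_right x)

lemma Fam.int (hf : Fam f) (x : X) : Integrable (f x) := by
  obtain ⟨C, hC⟩ := hf.bd
  refine Integrable.mono' (integrable_inv_one_add_sq.const_mul C)
    (hf.cont1 x).aestronglyMeasurable (ae_of_all _ fun s => ?_)
  rw [Real.norm_of_nonneg (hf.pos x s).le]
  exact hC x s

lemma Fam.mass_pos (hf : Fam f) (x : X) : 0 < mass f x := by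
  rw [mass, integral_pos_iff_support_of_nonneg (fun s => (hf.pos x s).le) (hf.int x)]
  have : Function.support (f x) = univ := by
    ext s; simp [(hf.pos x s).ne']
  rw [this]; simp

lemma Fam.mass_cont (hf : Fam f) : Continuous (mass f) := by
  obtain ⟨C, hC⟩ := hf.bd
  refine continuous_of_dominated (bound := fun s => C * (1 + s ^ 2)⁻¹)
    (fun x => (hf.cont1 x).aestronglyMeasurable) (fun x => ae_of_all _ fun s => ?_)
    (integrable_inv_one_add_sq.const_mul C)
    (ae_of_all _ fun s => hf.cont.comp (Continuous.prodMk_left s))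
  rw [Real.norm_of_nonneg (hf.pos x s).le]
  exact hC x s

lemma Fam.cdf_cont (hf : Fam f) : Continuous (fun p : X × ℝ => cdf' f p.1 p.2) := by
  unfold cdf'
  refine Continuous.div (Continuous.add ?_ ?_) (hf.mass_cont.comp continuous_fst)
    (fun p => (hf.mass_pos p.1).ne')
  · have : Continuous (fun x => ∫ t in Iic (0:ℝ), f x t) := by
      obtain ⟨C, hC⟩ := hf.bd
      refine continuous_of_dominated (bound := fun s => C * (1 + s ^ 2)⁻¹)
        (fun x => (hf.cont1 x).aestronglyMeasurable) (fun x => ae_of_all _ fun s => ?_)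
        (integrable_inv_one_add_sq.const_mul C).integrableOn
        (ae_of_all _ fun s => hf.cont.comp (Continuous.prodMk_left s))
      rw [Real.norm_of_nonneg (hf.pos x s).le]
      exact hC x s
    exact this.comp continuous_fst
  · refine intervalIntegral.continuous_parametric_intervalIntegral_of_continuous
      (f := fun (p : X × ℝ) t => f p.1 t) ?_ continuous_snd
    exact hf.cont.comp ((continuous_fst.comp continuous_fst).prodMk continuous_snd)

lemma Fam.cdf_deriv (hf : Fam f) (x : X) (s : ℝ) :
    HasDerivAt (cdf' f x) (f x s / mass f x) s := by
  unfold cdf'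
  refine HasDerivAt.div_const (HasDerivAt.const_add _ ?_) _
  exact intervalIntegral.integral_hasDerivAt_right
    ((hf.cont1 x).intervalIntegrable _ _)
    ((hf.cont1 x).stronglyMeasurableAtFilter _ _) (hf.cont1 x).continuousAt

lemma Fam.cdf_strictMono (hf : Fam f) (x : X) : StrictMono (cdf' f x) := by
  refine strictMono_of_deriv_pos fun s => ?_
  rw [(hf.cdf_deriv x s).deriv]
  exact div_pos (hf.pos x s) (hf.mass_pos x)

lemma Fam.cdf_top (hf : Fam f) (x : X) : Tendsto (cdf' f x) atTop (nhds 1) := by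
  have h1 := intervalIntegral_tendsto_integral_Ioi (0:ℝ) (hf.int x).integrableOn tendsto_id
  have h2 := (h1.const_add (∫ t in Iic (0:ℝ), f x t)).div_const (mass f x)
  have h3 : ((∫ t in Iic (0:ℝ), f x t) + ∫ t in Ioi (0:ℝ), f x t) = mass f x :=
    intervalIntegral.integral_Iic_add_Ioi (hf.int x).integrableOn (hf.int x).integrableOn
  rw [h3, div_self (hf.mass_pos x).ne'] at h2
  exact h2

lemma Fam.cdf_bot (hf : Fam f) (x : X) : Tendsto (cdf' f x) atBot (nhds 0) := by
  have h1 := intervalIntegral_tendsto_integral_Iic (0:ℝ) (hf.int x).integrableOn tendsto_id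
  have h2 := (h1.const_sub (∫ t in Iic (0:ℝ), f x t)).div_const (mass f x)
  rw [sub_self, zero_div] at h2
  refine h2.congr fun s => ?_
  simp only [id, cdf', intervalIntegral.integral_symm s 0, sub_neg_eq_add]
  ring

lemma Fam.cdf_mem (hf : Fam f) (x : X) (s : ℝ) : cdf' f x s ∈ Ioo (0:ℝ) 1 := by
  have hm := hf.cdf_strictMono x
  constructor
  · exact lt_of_le_of_lt (hm.monotone.le_of_tendsto (hf.cdf_bot x) (s - 1)) (hm (by linarith))
  · exact lt_of_lt_of_le (hm (by linarith : s < s + 1))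
      (hm.monotone.ge_of_tendsto (hf.cdf_top x) (s + 1))

lemma Fam.cdf_surj (hf : Fam f) (x : X) (r : ℝ) (hr : r ∈ Ioo (0:ℝ) 1) : ∃ s, cdf' f x s = r := by
  have hc : Continuous (cdf' f x) :=
    continuous_iff_continuousAt.2 fun s => (hf.cdf_deriv x s).continuousAt
  obtain ⟨a, ha⟩ := ((hf.cdf_bot x).eventually (gt_mem_nhds hr.1)).exists
  obtain ⟨b, hb⟩ := ((hf.cdf_top x).eventually (lt_mem_nhds hr.2)).exists
  exact mem_range_of_exists_le_of_exists_ge hc ⟨a, ha.le⟩ ⟨b, hb.le⟩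

/-- inverse distribution function -/
def qtl (f : X → ℝ → ℝ) (x : X) (r : ℝ) : ℝ := Function.invFun (cdf' f x) r

lemma Fam.cdf_qtl (hf : Fam f) (x : X) (r : ℝ) (hr : r ∈ Ioo (0:ℝ) 1) :
    cdf' f x (qtl f x r) = r :=
  Function.invFun_eq (hf.cdf_surj x r hr)

lemma Fam.qtl_cont (hf : Fam f) (x : X) (r : ℝ) (hr : r ∈ Ioo (0:ℝ) 1) :
    ContinuousAt (fun p : X × ℝ => qtl f p.1 p.2) (x, r) := by
  have hC := hf.cdf_cont
  have hI : ∀ᶠ p : X × ℝ in nhds (x, r), p.2 ∈ Ioo (0:ℝ) 1 :=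
    continuous_snd.continuousAt.eventually (isOpen_Ioo.mem_nhds hr)
  refine tendsto_order.2 ⟨fun a ha => ?_, fun a ha => ?_⟩
  · have h1 : cdf' f x a < r := by
      rw [← hf.cdf_qtl x r hr]; exact hf.cdf_strictMono x ha
    have hc : Continuous fun p : X × ℝ => cdf' f p.1 a :=
      hC.comp (continuous_fst.prodMk continuous_const)
    have := hc.continuousAt.eventually_lt continuous_snd.continuousAt (x₀ := (x, r)) h1
    filter_upwards [this, hI] with p hp hp2
    rw [← hf.cdf_qtl p.1 p.2 hp2] at hp
    exact (hf.cdf_strictMono p.1).lt_iff_lt.1 hp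
  · have h1 : r < cdf' f x a := by
      conv_lhs => rw [← hf.cdf_qtl x r hr]
      exact hf.cdf_strictMono x ha
    have hc : Continuous fun p : X × ℝ => cdf' f p.1 a :=
      hC.comp (continuous_fst.prodMk continuous_const)
    have := continuous_snd.continuousAt.eventually_lt hc.continuousAt (x₀ := (x, r)) h1
    filter_upwards [this, hI] with p hp hp2
    rw [← hf.cdf_qtl p.1 p.2 hp2] at hp
    exact (hf.cdf_strictMono p.1).lt_iff_lt.1 hp

variable {Y : Type*} [TopologicalSpace Y] [FirstCountableTopology Y] {g : Y → ℝ → ℝ}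

def tr (f : X → ℝ → ℝ) (g : Y → ℝ → ℝ) (τ : X → Y) (x : X) (s : ℝ) : ℝ :=
  qtl g (τ x) (cdf' f x s)

lemma cdf_tr (hf : Fam f) (hg : Fam g) (τ : X → Y) (x : X) (s : ℝ) :
    cdf' g (τ x) (tr f g τ x s) = cdf' f x s :=
  hg.cdf_qtl _ _ (hf.cdf_mem x s)

lemma tr_cont (hf : Fam f) (hg : Fam g) (τ : X → Y) (hτ : Continuous τ) :
    Continuous (fun p : X × ℝ => tr f g τ p.1 p.2) := by
  refine continuous_iff_continuousAt.2 fun p => ?_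
  exact ContinuousAt.comp (f := fun p : X × ℝ => (τ p.1, cdf' f p.1 p.2))
    (g := fun p : Y × ℝ => qtl g p.1 p.2)
    (hg.qtl_cont _ _ (hf.cdf_mem p.1 p.2))
    ((hτ.comp continuous_fst).prodMk hf.cdf_cont).continuousAt

lemma tr_deriv (hf : Fam f) (hg : Fam g) (τ : X → Y) (x : X) (s : ℝ) :
    HasDerivAt (tr f g τ x)
      ((g (τ x) (tr f g τ x s) / mass g (τ x))⁻¹ * (f x s / mass f x)) s := by
  have hr := hf.cdf_mem x s
  have h1 : HasDerivAt (qtl g (τ x)) ((g (τ x) (tr f g τ x s) / mass g (τ x))⁻¹) (cdf' f x s) := by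
    refine HasDerivAt.of_local_left_inverse (f := cdf' g (τ x)) ?_ (hg.cdf_deriv _ _)
      (div_pos (hg.pos _ _) (hg.mass_pos _)).ne' ?_
    · exact ContinuousAt.comp (f := fun r => (τ x, r)) (g := fun p : Y × ℝ => qtl g p.1 p.2)
        (hg.qtl_cont _ _ hr) (Continuous.prodMk_right _).continuousAt
    · filter_upwards [isOpen_Ioo.mem_nhds hr] with r hr
      exact hg.cdf_qtl _ _ hr
  exact h1.comp s (hf.cdf_deriv x s)

lemma tr_inj (hf : Fam f) (hg : Fam g) (τ : X → Y) (x : X) :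
    Function.Injective (tr f g τ x) := fun a b h => by
  have := congrArg (cdf' g (τ x)) h
  rw [cdf_tr hf hg, cdf_tr hf hg] at this
  exact (hf.cdf_strictMono x).injective this

lemma tr_surj (hf : Fam f) (hg : Fam g) (τ : X → Y) (x : X) :
    Function.Surjective (tr f g τ x) := fun t => by
  obtain ⟨s, hs⟩ := hf.cdf_surj x _ (hg.cdf_mem (τ x) t)
  exact ⟨s, (hg.cdf_strictMono (τ x)).injective (by rw [cdf_tr hf hg, hs])⟩

lemma tr_lint (hf : Fam f) (hg : Fam g) (τ : X → Y) (x : X) (φ : ℝ → ENNReal)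
    (hφ : Measurable φ) :
    ∫⁻ s, φ (tr f g τ x s) * ENNReal.ofReal (f x s)
      = ENNReal.ofReal (mass f x) * (ENNReal.ofReal (mass g (τ x))⁻¹ *
          ∫⁻ t, φ t * ENNReal.ofReal (g (τ x) t)) := by
  have hd := tr_deriv hf hg τ x
  have h := lintegral_image_eq_lintegral_abs_deriv_mul MeasurableSet.univ
    (fun s _ => (hd s).hasDerivWithinAt) ((tr_inj hf hg τ x).injOn)
    (fun t => φ t * ENNReal.ofReal (g (τ x) t))
  rw [image_univ, (tr_surj hf hg τ x).range_eq, Measure.restrict_univ] at h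
  have hgm : Measurable (g (τ x)) := (hg.cont1 _).measurable
  have htm : Measurable (tr f g τ x) :=
    (continuous_iff_continuousAt.2 fun s => (hd s).continuousAt).measurable
  have hfm : Measurable (f x) := (hf.cont1 _).measurable
  rw [h, ← lintegral_const_mul _ (by fun_prop), ← lintegral_const_mul _ (by fun_prop)]
  refine lintegral_congr fun s => ?_
  have e1 := hf.pos x s
  have e2 := hg.pos (τ x) (tr f g τ x s)
  have e3 := hf.mass_pos x
  have e4 := hg.mass_pos (τ x)
  rw [abs_of_pos (by positivity)]
  have : f x s = mass f x * ((mass g (τ x))⁻¹ *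
      (((g (τ x) (tr f g τ x s) / mass g (τ x))⁻¹ * (f x s / mass f x)) *
        (g (τ x) (tr f g τ x s)))) := by field_simp
  conv_lhs => rw [this]
  rw [ENNReal.ofReal_mul e3.le, ENNReal.ofReal_mul (by positivity),
    ENNReal.ofReal_mul (by positivity)]
  ring

end fam


structure Good {n : ℕ} (F : (Fin n → ℝ) → ℝ) : Prop where
  cont : Continuous F
  pos : ∀ x, 0 < F x
  bd : ∃ C : ℝ, ∀ x, F x ≤ C * ∏ i, (1 + x i ^ 2)⁻¹

lemma Good.int {n : ℕ} {F : (Fin n → ℝ) → ℝ} (hF : Good F) : Integrable F := by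
  obtain ⟨C, hC⟩ := hF.bd
  have : Integrable (fun x : Fin n → ℝ => ∏ i, (1 + x i ^ 2)⁻¹) :=
    Integrable.fintype_prod (f := fun _ s => (1 + s ^ 2)⁻¹) (fun _ => integrable_inv_one_add_sq)
  refine Integrable.mono' (this.const_mul C) hF.cont.aestronglyMeasurable (ae_of_all _ fun s => ?_)
  rw [Real.norm_of_nonneg (hF.pos s).le]
  exact hC s

def fm {n : ℕ} (F : (Fin (n+1) → ℝ) → ℝ) (x : Fin n → ℝ) (s : ℝ) : ℝ := F (Fin.cons s x)

lemma cons_cont {n : ℕ} : Continuous (fun p : (Fin n → ℝ) × ℝ => (Fin.cons p.2 p.1 : Fin (n+1) → ℝ)) := by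
  refine continuous_pi fun i => ?_
  refine Fin.cases ?_ (fun j => ?_) i
  · simpa using continuous_snd
  · simp only [Fin.cons_succ]
    exact (continuous_apply j).comp continuous_fst

lemma prod_inv_le_one {n : ℕ} (x : Fin n → ℝ) : ∏ i, (1 + x i ^ 2)⁻¹ ≤ 1 := by
  refine Finset.prod_le_one (fun i _ => by positivity) (fun i _ => ?_)
  exact inv_le_one_of_one_le₀ (by nlinarith [sq_nonneg (x i)])

lemma Good.C_nonneg {n : ℕ} {F : (Fin n → ℝ) → ℝ} (hF : Good F) :
    ∃ C : ℝ, 0 ≤ C ∧ ∀ x, F x ≤ C * ∏ i, (1 + x i ^ 2)⁻¹ := by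
  obtain ⟨C, hC⟩ := hF.bd
  refine ⟨C, ?_, hC⟩
  have := (hF.pos 0).trans_le (hC 0)
  simpa using this.le

lemma Good.fam {n : ℕ} {F : (Fin (n+1) → ℝ) → ℝ} (hF : Good F) : Fam (fm F) := by
  refine ⟨hF.cont.comp cons_cont, fun x s => hF.pos _, ?_⟩
  obtain ⟨C, hC0, hC⟩ := hF.C_nonneg
  refine ⟨C, fun x s => (hC _).trans ?_⟩
  rw [Fin.prod_univ_succ]
  simp only [Fin.cons_zero, Fin.cons_succ]
  have h := prod_inv_le_one x
  have h2 : 0 ≤ (1 + s ^ 2)⁻¹ := by positivity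
  exact mul_le_mul_of_nonneg_left (mul_le_of_le_one_right h2 h) hC0

lemma Good.marg {n : ℕ} {F : (Fin (n+1) → ℝ) → ℝ} (hF : Good F) : Good (mass (fm F)) := by
  refine ⟨hF.fam.mass_cont, hF.fam.mass_pos, ?_⟩
  obtain ⟨C, hC0, hC⟩ := hF.C_nonneg
  refine ⟨C * ∫ s : ℝ, (1 + s ^ 2)⁻¹, fun x => ?_⟩
  have : ∀ s, fm F x s ≤ (C * ∏ i, (1 + x i ^ 2)⁻¹) * (1 + s ^ 2)⁻¹ := fun s => by
    refine (hC _).trans ?_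
    rw [Fin.prod_univ_succ]
    simp only [Fin.cons_zero, Fin.cons_succ]
    exact le_of_eq (by ring)
  have h := integral_mono (hF.fam.int x) (integrable_inv_one_add_sq.const_mul _) this
  rw [integral_const_mul] at h
  exact h.trans (le_of_eq (by ring))

lemma cons_mp (n : ℕ) : MeasurePreserving
    (fun p : ℝ × (Fin n → ℝ) => (Fin.cons p.1 p.2 : Fin (n+1) → ℝ)) volume volume := by
  have := (volume_preserving_piFinSuccAbove (fun _ : Fin (n+1) => ℝ) 0).symm
  have e : (fun p : ℝ × (Fin n → ℝ) => (Fin.cons p.1 p.2 : Fin (n+1) → ℝ))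
      = (MeasurableEquiv.piFinSuccAbove (fun _ : Fin (n+1) => ℝ) 0).symm := by
    funext p
    simp [MeasurableEquiv.piFinSuccAbove_symm_apply]
    rfl
  rw [e]
  exact this

lemma cons_me (n : ℕ) : MeasurableEmbedding
    (fun p : ℝ × (Fin n → ℝ) => (Fin.cons p.1 p.2 : Fin (n+1) → ℝ)) := by
  have := (MeasurableEquiv.piFinSuccAbove (fun _ : Fin (n+1) => ℝ) 0).symm.measurableEmbedding
  have e : (fun p : ℝ × (Fin n → ℝ) => (Fin.cons p.1 p.2 : Fin (n+1) → ℝ))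
      = (MeasurableEquiv.piFinSuccAbove (fun _ : Fin (n+1) => ℝ) 0).symm := by
    funext p
    simp [MeasurableEquiv.piFinSuccAbove_symm_apply]
    rfl
  rw [e]
  exact this

lemma lint_cons {n : ℕ} (φ : (Fin (n+1) → ℝ) → ENNReal) (hφ : Measurable φ) :
    ∫⁻ x, φ x = ∫⁻ x' : Fin n → ℝ, ∫⁻ s : ℝ, φ (Fin.cons s x') := by
  rw [← (cons_mp n).lintegral_comp hφ]
  exact lintegral_prod_symm' _ (hφ.comp (cons_mp n).measurable)

lemma Good.int_marg {n : ℕ} {F : (Fin (n+1) → ℝ) → ℝ} (hF : Good F) :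
    ∫ x, mass (fm F) x = ∫ x, F x := by
  rw [← (cons_mp n).integral_comp (cons_me n)]
  have hi : Integrable (fun p : ℝ × (Fin n → ℝ) => F (Fin.cons p.1 p.2)) :=
    (cons_mp n).integrable_comp_of_integrable hF.int
  exact (integral_prod_symm _ hi).symm

structure Knothe {n : ℕ} (F G : (Fin n → ℝ) → ℝ) (T : (Fin n → ℝ) → (Fin n → ℝ))
    (p : Fin n → (Fin n → ℝ) → ℝ) : Prop where
  cont : Continuous T
  pcont : ∀ i, Continuous (p i)
  ppos : ∀ i x, 0 < p i x
  deriv : ∀ i x, HasLineDerivAt ℝ (fun x => T x i) (p i x) x (Pi.single i 1)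
  jac : ∀ x, G (T x) * ∏ i, p i x = F x
  push : ∀ φ : (Fin n → ℝ) → ENNReal, Measurable φ →
    ∫⁻ x, φ (T x) * ENNReal.ofReal (F x) = ∫⁻ y, φ y * ENNReal.ofReal (G y)

lemma cons_self_tail {n : ℕ} (x : Fin (n+1) → ℝ) : (Fin.cons (x 0) (Fin.tail x) : Fin (n+1) → ℝ) = x :=
  Fin.cons_self_tail x

lemma tail_cont {n : ℕ} : Continuous (fun x : Fin (n+1) → ℝ => Fin.tail x) :=
  continuous_pi fun i => continuous_apply i.succ

theorem knothe_exists (n : ℕ) : ∀ (F G : (Fin n → ℝ) → ℝ), Good F → Good G →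
    ∫ x, F x = ∫ x, G x → ∃ T p, Knothe F G T p := by
  induction n with
  | zero =>
    intro F G hF hG h
    have e : F = G := by
      have hv : (volume : Measure (Fin 0 → ℝ)) = Measure.dirac default := by
        rw [volume_pi]; exact Measure.pi_of_empty _ _
      rw [hv, integral_dirac, integral_dirac] at h
      ext x; rw [Subsingleton.elim x default, h]
    subst e
    exact ⟨id, fun i => i.elim0, ⟨continuous_id, fun i => i.elim0, fun i => i.elim0,
      fun i => i.elim0, by simp, by simp⟩⟩
  | succ n ih =>
    intro F G hF hG h
    obtain ⟨T', p', hK⟩ := ih (mass (fm F)) (mass (fm G)) hF.marg hG.marg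
      (by rw [hF.int_marg, hG.int_marg, h])
    have hf := hF.fam
    have hg := hG.fam
    have hT0 : Continuous (fun x : Fin (n+1) → ℝ => tr (fm F) (fm G) T' (Fin.tail x) (x 0)) :=
      (tr_cont hf hg T' hK.cont).comp (tail_cont.prodMk (continuous_apply 0))
    have hTt : Continuous (fun x : Fin (n+1) → ℝ => T' (Fin.tail x)) := hK.cont.comp tail_cont
    refine ⟨fun x => Fin.cons (tr (fm F) (fm G) T' (Fin.tail x) (x 0)) (T' (Fin.tail x)),
      Fin.cons (fun x => ((fm G) (T' (Fin.tail x)) (tr (fm F) (fm G) T' (Fin.tail x) (x 0)) /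
        mass (fm G) (T' (Fin.tail x)))⁻¹ * (fm F (Fin.tail x) (x 0) / mass (fm F) (Fin.tail x)))
        (fun i x => p' i (Fin.tail x)), ?_, ?_, ?_, ?_, ?_, ?_⟩
    · exact cons_cont.comp (hTt.prodMk hT0)
    · intro i
      refine Fin.cases ?_ (fun j => ?_) i
      · simp only [Fin.cons_zero]
        refine Continuous.mul (Continuous.inv₀ (Continuous.div ?_ ?_ ?_) ?_) (Continuous.div ?_ ?_ ?_)
        · exact hg.cont.comp (hTt.prodMk hT0)
        · exact hg.mass_cont.comp hTt
        · exact fun x => (hg.mass_pos _).ne'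
        · exact fun x => (div_pos (hg.pos _ _) (hg.mass_pos _)).ne'
        · exact hf.cont.comp (tail_cont.prodMk (continuous_apply 0))
        · exact hf.mass_cont.comp tail_cont
        · exact fun x => (hf.mass_pos _).ne'
      · simp only [Fin.cons_succ]
        exact (hK.pcont j).comp tail_cont
    · intro i x
      refine Fin.cases ?_ (fun j => ?_) i
      · simp only [Fin.cons_zero]
        exact mul_pos (inv_pos.2 (div_pos (hg.pos _ _) (hg.mass_pos _)))
          (div_pos (hf.pos _ _) (hf.mass_pos _))
      · simp only [Fin.cons_succ]
        exact hK.ppos j _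
    · intro i x
      refine Fin.cases ?_ (fun j => ?_) i
      · simp only [Fin.cons_zero, HasLineDerivAt]
        have hd := tr_deriv hf hg T' (Fin.tail x) (x 0)
        have h2 : HasDerivAt (fun t : ℝ => x 0 + t) 1 0 := (hasDerivAt_id (0:ℝ)).const_add (x 0)
        have h3 : ∀ t : ℝ, Fin.tail (x + t • (Pi.single 0 1 : Fin (n+1) → ℝ)) = Fin.tail x := by
          intro t; ext k; simp [Fin.tail]
        have h4 : ∀ t : ℝ, (x + t • (Pi.single 0 1 : Fin (n+1) → ℝ)) 0 = x 0 + t := by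
          intro t; simp
        simp only [h3, h4]
        have h5 := HasDerivAt.comp (h₂ := tr (fm F) (fm G) T' (Fin.tail x)) (0:ℝ)
          (by rw [add_zero]; exact hd) h2
        rw [mul_one] at h5
        exact h5
      · simp only [Fin.cons_succ, HasLineDerivAt]
        have hd := hK.deriv j (Fin.tail x)
        have h3 : ∀ t : ℝ, Fin.tail (x + t • (Pi.single j.succ 1 : Fin (n+1) → ℝ))
            = Fin.tail x + t • (Pi.single j 1 : Fin n → ℝ) := by
          intro t; ext k
          simp [Fin.tail, Pi.single_apply]
        simp only [h3]
        exact hd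
    · intro x
      rw [Fin.prod_univ_succ]
      simp only [Fin.cons_zero, Fin.cons_succ]
      have hj := hK.jac (Fin.tail x)
      have e : fm F (Fin.tail x) (x 0) = F x := by simp [fm, cons_self_tail]
      have e1 := hg.pos (T' (Fin.tail x)) (tr (fm F) (fm G) T' (Fin.tail x) (x 0))
      have e2 := hg.mass_pos (T' (Fin.tail x))
      have e3 := hf.mass_pos (Fin.tail x)
      have e5 : (∏ i, p' i (Fin.tail x)) = mass (fm F) (Fin.tail x) / mass (fm G) (T' (Fin.tail x)) := by
        rw [← hj]; field_simp
      rw [e5, e]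
      change fm G _ _ * _ = _
      field_simp
    · intro φ hφ
      have hm1 : Measurable (fun x : Fin (n+1) → ℝ =>
          φ (Fin.cons (tr (fm F) (fm G) T' (Fin.tail x) (x 0)) (T' (Fin.tail x)) : Fin (n+1) → ℝ) *
            ENNReal.ofReal (F x)) :=
        (hφ.comp (cons_cont.comp (hTt.prodMk hT0)).measurable).mul
          hF.cont.measurable.ennreal_ofReal
      have hm2 : Measurable (fun x : Fin (n+1) → ℝ => φ x * ENNReal.ofReal (G x)) :=
        hφ.mul hG.cont.measurable.ennreal_ofReal
      rw [lint_cons _ hm1, lint_cons _ hm2]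
      simp only [Fin.tail_cons, Fin.cons_zero]
      have hcm : Measurable fun p : (Fin n → ℝ) × ℝ => (Fin.cons p.2 p.1 : Fin (n+1) → ℝ) :=
        cons_cont.measurable
      have key : ∀ x' : Fin n → ℝ,
          ∫⁻ s, φ (Fin.cons (tr (fm F) (fm G) T' x' s) (T' x') : Fin (n+1) → ℝ) *
            ENNReal.ofReal (F (Fin.cons s x'))
          = (fun y' => ENNReal.ofReal (mass (fm G) y')⁻¹ *
              ∫⁻ t, φ (Fin.cons t y') * ENNReal.ofReal (fm G y' t)) (T' x') *
            ENNReal.ofReal (mass (fm F) x') := by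
        intro x'
        have := tr_lint hf hg T' x' (fun t => φ (Fin.cons t (T' x')))
          (hφ.comp (hcm.comp measurable_prodMk_left))
        rw [mul_comm]
        exact this
      refine (lintegral_congr key).trans ((hK.push (fun y' => ENNReal.ofReal (mass (fm G) y')⁻¹ *
              ∫⁻ t, φ (Fin.cons t y') * ENNReal.ofReal (fm G y' t)) ?_).trans ?_)
      rotate_left
      · refine lintegral_congr fun y' => ?_
        rw [mul_comm, ← mul_assoc, ← ENNReal.ofReal_mul (hg.mass_pos y').le,
          mul_inv_cancel₀ (hg.mass_pos y').ne', ENNReal.ofReal_one, one_mul]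
        rfl
      · refine Measurable.mul ?_ ?_
        · exact (hg.mass_cont.measurable.inv).ennreal_ofReal
        · refine Measurable.lintegral_prod_right'
            (f := fun p : (Fin n → ℝ) × ℝ => φ (Fin.cons p.2 p.1) * ENNReal.ofReal (fm G p.1 p.2)) ?_
          exact (hφ.comp hcm).mul hg.cont.measurable.ennreal_ofReal


structure KnotheE {n : ℕ} (F G : EuclideanSpace ℝ (Fin n) → ℝ)
    (T : EuclideanSpace ℝ (Fin n) → EuclideanSpace ℝ (Fin n))
    (p : Fin n → EuclideanSpace ℝ (Fin n) → ℝ) : Prop where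
  cont : Continuous T
  pcont : ∀ i, Continuous (p i)
  ppos : ∀ i x, 0 < p i x
  deriv : ∀ i x, HasLineDerivAt ℝ (fun x => T x i) (p i x) x (EuclideanSpace.single i 1)
  jac : ∀ x, G (T x) * ∏ i, p i x = F x
  push : ∀ φ : EuclideanSpace ℝ (Fin n) → ENNReal, Measurable φ →
    ∫⁻ x, φ (T x) * ENNReal.ofReal (F x) = ∫⁻ y, φ y * ENNReal.ofReal (G y)

def GoodE {n : ℕ} (F : EuclideanSpace ℝ (Fin n) → ℝ) : Prop :=
  Good (fun x : Fin n → ℝ => F (WithLp.toLp 2 x))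

lemma mp_toLp (n : ℕ) : MeasurePreserving (WithLp.toLp 2 : (Fin n → ℝ) → EuclideanSpace ℝ (Fin n))
    volume volume := PiLp.volume_preserving_toLp (Fin n)

lemma me_toLp (n : ℕ) : MeasurableEmbedding
    (WithLp.toLp 2 : (Fin n → ℝ) → EuclideanSpace ℝ (Fin n)) :=
  (MeasurableEquiv.toLp 2 (Fin n → ℝ)).measurableEmbedding

theorem knotheE_exists {n : ℕ} {F G : EuclideanSpace ℝ (Fin n) → ℝ} (hF : GoodE F) (hG : GoodE G)
    (h : ∫ x, F x = ∫ x, G x) : ∃ T p, KnotheE F G T p := by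
  obtain ⟨T, p, hK⟩ := knothe_exists n _ _ hF hG (by
    rw [(mp_toLp n).integral_comp (me_toLp n) F, (mp_toLp n).integral_comp (me_toLp n) G, h])
  have c1 : Continuous (WithLp.toLp 2 : (Fin n → ℝ) → EuclideanSpace ℝ (Fin n)) :=
    PiLp.continuous_toLp 2 _
  have c2 : Continuous (WithLp.ofLp : EuclideanSpace ℝ (Fin n) → (Fin n → ℝ)) :=
    PiLp.continuous_ofLp 2 _
  have hFc : Continuous F := by
    have := hF.cont.comp c2
    exact this
  have hGc : Continuous G := by
    have := hG.cont.comp c2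
    exact this
  refine ⟨fun x => WithLp.toLp 2 (T x.ofLp), fun i x => p i x.ofLp, c1.comp (hK.cont.comp c2),
    fun i => (hK.pcont i).comp c2, fun i x => hK.ppos i _, fun i x => ?_, fun x => hK.jac _,
    fun φ hφ => ?_⟩
  · have := hK.deriv i x.ofLp
    simp only [HasLineDerivAt] at this ⊢
    simpa using this
  · have := hK.push (fun x => φ (WithLp.toLp 2 x)) (hφ.comp c1.measurable)
    rw [← (mp_toLp n).lintegral_comp, ← (mp_toLp n).lintegral_comp]
    · exact this
    · exact hφ.mul hGc.measurable.ennreal_ofReal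
    · exact (hφ.comp (c1.comp (hK.cont.comp c2)).measurable).mul hFc.measurable.ennreal_ofReal

lemma KnotheE.ibp {n : ℕ} {F G : EuclideanSpace ℝ (Fin n) → ℝ} {T p} (hK : KnotheE F G T p)
    {h : EuclideanSpace ℝ (Fin n) → ℝ} (hh : ContDiff ℝ 1 h) (hs : HasCompactSupport h) :
    ∫ x, h x * ∑ i, p i x = - ∫ x, fderiv ℝ h x (T x) := by
  have hd : Continuous (fderiv ℝ h) := hh.continuous_fderiv one_ne_zero
  have hs' : HasCompactSupport (fderiv ℝ h) := hs.fderiv ℝ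
  have hTi : ∀ i, Continuous fun x => T x i := fun i =>
    (EuclideanSpace.proj i : EuclideanSpace ℝ (Fin n) →L[ℝ] ℝ).continuous.comp hK.cont
  have hdi : ∀ i, Continuous fun x => fderiv ℝ h x (EuclideanSpace.single i 1) := fun i =>
    hd.clm_apply continuous_const
  have hsi : ∀ i, HasCompactSupport fun x => fderiv ℝ h x (EuclideanSpace.single i 1) := fun i =>
    hs'.comp_left (g := fun L : EuclideanSpace ℝ (Fin n) →L[ℝ] ℝ => L (EuclideanSpace.single i 1)) rfl
  have i1 : ∀ i, Integrable fun x => fderiv ℝ h x (EuclideanSpace.single i 1) * T x i := fun i =>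
    ((hdi i).mul (hTi i)).integrable_of_hasCompactSupport (hsi i).mul_right
  have i2 : ∀ i, Integrable fun x => h x * p i x := fun i =>
    (hh.continuous.mul (hK.pcont i)).integrable_of_hasCompactSupport hs.mul_right
  have i3 : ∀ i, Integrable fun x => h x * T x i := fun i =>
    (hh.continuous.mul (hTi i)).integrable_of_hasCompactSupport hs.mul_right
  have key : ∀ i, ∫ x, h x * p i x = - ∫ x, fderiv ℝ h x (EuclideanSpace.single i 1) * T x i := by
    intro i
    exact integral_bilinear_hasLineDerivAt_right_eq_neg_left_of_integrable
      (B := ContinuousLinearMap.mul ℝ ℝ) (i1 i) (i2 i) (i3 i)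
      (fun x _ => ((hh.differentiable one_ne_zero) x).hasFDerivAt.hasLineDerivAt _)
      (fun x _ => hK.deriv i x)
  have e : ∀ x, fderiv ℝ h x (T x) = ∑ i, fderiv ℝ h x (EuclideanSpace.single i 1) * T x i := by
    intro x
    have : T x = ∑ i, T x i • EuclideanSpace.single i (1:ℝ) := by
      ext j; simp [Pi.single_apply]
    conv_lhs => rw [this]
    simp [map_sum, mul_comm]
  simp only [e, Finset.mul_sum]
  rw [integral_finsetSum _ (fun i _ => i2 i), integral_finsetSum _ (fun i _ => i1 i),
    ← Finset.sum_neg_distrib]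
  exact Finset.sum_congr rfl fun i _ => key i

lemma cs {α : Type*} [MeasurableSpace α] {μ : Measure α} {f g : α → ℝ}
    (hf0 : ∀ x, 0 ≤ f x) (hg0 : ∀ x, 0 ≤ g x)
    (hfm : AEStronglyMeasurable f μ) (hgm : AEStronglyMeasurable g μ)
    (hf : Integrable (fun x => f x ^ 2) μ) (hg : Integrable (fun x => g x ^ 2) μ) :
    Integrable (fun x => f x * g x) μ ∧
    ∫ x, f x * g x ∂μ ≤ √(∫ x, f x ^ 2 ∂μ) * √(∫ x, g x ^ 2 ∂μ) := by
  have hf2 : MemLp f 2 μ := (memLp_two_iff_integrable_sq hfm).2 hf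
  have hg2 : MemLp g 2 μ := (memLp_two_iff_integrable_sq hgm).2 hg
  refine ⟨hf2.integrable_mul hg2, ?_⟩
  have := integral_mul_le_Lp_mul_Lq_of_nonneg (μ := μ) Real.HolderConjugate.two_two
    (ae_of_all _ hf0) (ae_of_all _ hg0) (by simpa using hf2) (by simpa using hg2)
  simpa [Real.sqrt_eq_rpow] using this

lemma exists_cutoff (n : ℕ) : ∃ (χ : ℝ → EuclideanSpace ℝ (Fin n) → ℝ) (C : ℝ), 0 ≤ C ∧
    ∀ R > 0, ContDiff ℝ 1 (χ R) ∧ HasCompactSupport (χ R) ∧ (∀ x, 0 ≤ χ R x) ∧ (∀ x, χ R x ≤ 1) ∧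
      (∀ x, ‖x‖ ≤ R → χ R x = 1) ∧ (∀ x, ‖fderiv ℝ (χ R) x‖ ≤ C / R) ∧
      (∀ x, ‖x‖ < R → fderiv ℝ (χ R) x = 0) ∧ (∀ x, 2 * R < ‖x‖ → fderiv ℝ (χ R) x = 0) := by
  let b : ContDiffBump (0 : EuclideanSpace ℝ (Fin n)) := ⟨1, 2, by norm_num, by norm_num⟩
  have hb : ContDiff ℝ 1 b := b.contDiff
  have hbd : Continuous (fderiv ℝ b) := hb.continuous_fderiv one_ne_zero
  obtain ⟨C, hC⟩ := hbd.bounded_above_of_compact_support (b.hasCompactSupport.fderiv ℝ)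
  have hC0 : 0 ≤ C := (norm_nonneg _).trans (hC 0)
  refine ⟨fun R x => b (R⁻¹ • x), C, hC0, fun R hR => ?_⟩
  have hfd : ∀ x, fderiv ℝ (fun x => b (R⁻¹ • x)) x = R⁻¹ • fderiv ℝ b (R⁻¹ • x) := fun x =>
    fderiv_comp_smul _
  have hcd : ContDiff ℝ 1 (fun x => b (R⁻¹ • x)) := hb.comp (contDiff_const_smul _)
  have h1 : ∀ x : EuclideanSpace ℝ (Fin n), ‖x‖ ≤ R → b (R⁻¹ • x) = 1 := fun x hx => by
    apply b.one_of_mem_closedBall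
    rw [mem_closedBall_zero_iff, norm_smul, norm_inv, Real.norm_of_nonneg hR.le]
    change R⁻¹ * ‖x‖ ≤ 1
    rw [inv_mul_le_iff₀ hR]; linarith
  have h0 : ∀ x : EuclideanSpace ℝ (Fin n), 2 * R < ‖x‖ → b (R⁻¹ • x) = 0 := fun x hx => by
    apply b.zero_of_le_dist
    rw [dist_zero_right, norm_smul, norm_inv, Real.norm_of_nonneg hR.le]
    change 2 ≤ R⁻¹ * ‖x‖
    rw [le_inv_mul_iff₀ hR]; linarith
  refine ⟨hcd, ?_, fun x => b.nonneg, fun x => b.le_one, h1, fun x => ?_, fun x hx => ?_, fun x hx => ?_⟩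
  · exact b.hasCompactSupport.comp_smul (inv_ne_zero hR.ne')
  · rw [hfd, norm_smul, norm_inv, Real.norm_of_nonneg hR.le, div_eq_inv_mul]
    exact mul_le_mul_of_nonneg_left (hC _) (inv_nonneg.2 hR.le)
  · have : (fun x => b (R⁻¹ • x)) =ᶠ[nhds x] fun _ => (1:ℝ) := by
      filter_upwards [(isOpen_lt continuous_norm continuous_const).mem_nhds hx] with y hy
      exact h1 y (le_of_lt hy)
    rw [this.fderiv_eq]; simp
  · have : (fun x => b (R⁻¹ • x)) =ᶠ[nhds x] fun _ => (0:ℝ) := by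
      filter_upwards [(isOpen_lt continuous_const continuous_norm).mem_nhds hx] with y hy
      exact h0 y hy
    rw [this.fderiv_eq]; simp


lemma cut_tendsto {N : ℕ} (hN : 3 ≤ N) {χ : ℝ → EuclideanSpace ℝ (Fin N) → ℝ} {C : ℝ} (hC : 0 ≤ C)
    (hχ : ∀ R > 0, ContDiff ℝ 1 (χ R) ∧ HasCompactSupport (χ R) ∧ (∀ x, 0 ≤ χ R x) ∧ (∀ x, χ R x ≤ 1) ∧
      (∀ x, ‖x‖ ≤ R → χ R x = 1) ∧ (∀ x, ‖fderiv ℝ (χ R) x‖ ≤ C / R) ∧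
      (∀ x, ‖x‖ < R → fderiv ℝ (χ R) x = 0) ∧ (∀ x, 2 * R < ‖x‖ → fderiv ℝ (χ R) x = 0))
    {w : EuclideanSpace ℝ (Fin N) → ℝ} (hw : Continuous w)
    (hwi : Integrable (fun x => |w x| ^ (2 * (N : ℝ) / ((N : ℝ) - 2)))) :
    Tendsto (fun R => ∫ x, (|w x| * ‖fderiv ℝ (χ R) x‖) ^ 2) atTop (nhds 0) := by
  have hN' : (3:ℝ) ≤ N := by exact_mod_cast hN
  have hN2 : (0:ℝ) < (N:ℝ) - 2 := by linarith
  have hN0 : (0:ℝ) < (N:ℝ) := by linarith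
  set P : ℝ := (N:ℝ) / ((N:ℝ) - 2) with hP
  set Q : ℝ := (N:ℝ) / 2 with hQ
  have hP0 : 0 < P := by positivity
  have hQ0 : 0 < Q := by positivity
  have hPQ : P.HolderConjugate Q := by
    rw [Real.holderConjugate_iff]
    constructor
    · rw [hP, lt_div_iff₀ hN2]; linarith
    · rw [hP, hQ]; field_simp; ring
  set V : ℝ := (volume : Measure (EuclideanSpace ℝ (Fin N))).real (closedBall 0 1) with hV
  -- tail
  have htail : Tendsto (fun R : ℝ => ∫ x in {x : EuclideanSpace ℝ (Fin N) | R ≤ ‖x‖},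
      |w x| ^ (2 * (N : ℝ) / ((N : ℝ) - 2))) atTop (nhds 0) := by
    have h := tendsto_setIntegral_of_antitone (μ := (volume : Measure (EuclideanSpace ℝ (Fin N))))
      (s := fun R : ℝ => {x : EuclideanSpace ℝ (Fin N) | R ≤ ‖x‖})
      (f := fun x => |w x| ^ (2 * (N : ℝ) / ((N : ℝ) - 2)))
      (fun R => (isClosed_le continuous_const continuous_norm).measurableSet)
      (fun a b hab x hx => le_trans hab hx) ⟨0, hwi.integrableOn⟩
    have e : (⋂ R : ℝ, {x : EuclideanSpace ℝ (Fin N) | R ≤ ‖x‖}) = ∅ := by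
      ext x
      simp only [mem_iInter, mem_setOf_eq, mem_empty_iff_false, iff_false, not_forall, not_le]
      exact ⟨‖x‖ + 1, by linarith⟩
    rw [e, Measure.restrict_empty, integral_zero_measure] at h
    exact h
  have hlim : Tendsto (fun R : ℝ => (∫ x in {x : EuclideanSpace ℝ (Fin N) | R ≤ ‖x‖},
      |w x| ^ (2 * (N : ℝ) / ((N : ℝ) - 2))) ^ (1 / P) * ((C * 2) ^ N * V) ^ (1 / Q)) atTop (nhds 0) := by
    have h1 := htail.rpow_const (p := 1 / P) (Or.inr (by positivity))
    rw [Real.zero_rpow (by positivity)] at h1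
    simpa using h1.mul_const (((C * 2) ^ N * V) ^ (1 / Q))
  refine squeeze_zero' (Eventually.of_forall fun R => integral_nonneg fun x => by positivity) ?_ hlim
  filter_upwards [eventually_gt_atTop 0] with R hR
  obtain ⟨hcd, hcs, -, -, -, hb, hz1, hz2⟩ := hχ R hR
  have hdc : Continuous (fderiv ℝ (χ R)) := hcd.continuous_fderiv one_ne_zero
  set S : Set (EuclideanSpace ℝ (Fin N)) := {x | R ≤ ‖x‖} with hS
  have hSm : MeasurableSet S := (isClosed_le continuous_const continuous_norm).measurableSet
  have e1 : ∀ x, (|w x| * ‖fderiv ℝ (χ R) x‖) ^ 2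
      = S.indicator (fun x => |w x| ^ 2) x * ‖fderiv ℝ (χ R) x‖ ^ 2 := by
    intro x
    by_cases hx : x ∈ S
    · rw [indicator_of_mem hx, mul_pow]
    · rw [indicator_of_notMem hx, hz1 x (not_le.1 hx)]; simp
  have e2 : ∀ x, (S.indicator (fun x => |w x| ^ 2) x) ^ P
      = S.indicator (fun x => |w x| ^ (2 * (N : ℝ) / ((N : ℝ) - 2))) x := by
    intro x
    by_cases hx : x ∈ S
    · rw [indicator_of_mem hx, indicator_of_mem hx, ← Real.rpow_natCast, ← Real.rpow_mul (abs_nonneg _)]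
      congr 1; rw [hP]; push_cast; ring
    · rw [indicator_of_notMem hx, indicator_of_notMem hx, Real.zero_rpow hP0.ne']
  have e3 : ∀ x, (‖fderiv ℝ (χ R) x‖ ^ 2) ^ Q = ‖fderiv ℝ (χ R) x‖ ^ N := by
    intro x
    rw [← Real.rpow_natCast, ← Real.rpow_mul (norm_nonneg _), ← Real.rpow_natCast]
    congr 1; rw [hQ]; push_cast; ring
  have hf0 : ∀ x, 0 ≤ S.indicator (fun x => |w x| ^ 2) x := fun x =>
    indicator_nonneg (fun x _ => by positivity) x
  have hfm : AEStronglyMeasurable (S.indicator (fun x => |w x| ^ 2)) volume :=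
    (hw.abs.pow 2).aestronglyMeasurable.indicator hSm
  have m1 : MemLp (S.indicator (fun x => |w x| ^ 2)) (ENNReal.ofReal P) volume := by
    rw [← integrable_norm_rpow_iff hfm (by simpa using hP0) ENNReal.ofReal_ne_top,
      ENNReal.toReal_ofReal hP0.le]
    refine (hwi.indicator hSm).congr (ae_of_all _ fun x => ?_)
    simp only
    rw [← e2 x, Real.norm_of_nonneg (hf0 x)]
  have hgc : Continuous fun x => ‖fderiv ℝ (χ R) x‖ ^ 2 := hdc.norm.pow 2
  have hgs : HasCompactSupport fun x => ‖fderiv ℝ (χ R) x‖ ^ 2 :=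
    (hcs.fderiv ℝ).comp_left (g := fun L => ‖L‖ ^ 2) (by simp)
  have m2 : MemLp (fun x => ‖fderiv ℝ (χ R) x‖ ^ 2) (ENNReal.ofReal Q) volume :=
    hgc.memLp_of_hasCompactSupport hgs
  have hH := integral_mul_le_Lp_mul_Lq_of_nonneg hPQ (ae_of_all _ hf0)
    (ae_of_all _ fun x => by positivity) m1 m2
  simp only [e2, e3] at hH
  rw [integral_indicator hSm] at hH
  simp only [e1]
  refine hH.trans (mul_le_mul_of_nonneg_left ?_ (Real.rpow_nonneg
    (integral_nonneg fun x => by positivity) _))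
  refine Real.rpow_le_rpow (integral_nonneg fun x => by positivity) ?_ (by positivity)
  have e4 : ∀ x, ‖fderiv ℝ (χ R) x‖ ^ N ≤ (closedBall (0 : EuclideanSpace ℝ (Fin N)) (2 * R)).indicator
      (fun _ => (C / R) ^ N) x := by
    intro x
    by_cases hx : x ∈ closedBall (0 : EuclideanSpace ℝ (Fin N)) (2 * R)
    · rw [indicator_of_mem hx]; exact pow_le_pow_left₀ (norm_nonneg _) (hb x) N
    · rw [indicator_of_notMem hx, hz2 x (by simpa using hx)]
      simp [show N ≠ 0 by omega]
  have hi : Integrable ((closedBall (0 : EuclideanSpace ℝ (Fin N)) (2 * R)).indicator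
      (fun _ => (C / R) ^ N)) :=
    (integrable_indicator_iff measurableSet_closedBall).2
      (integrableOn_const (measure_closedBall_lt_top.ne))
  have h5 := integral_mono_of_nonneg (ae_of_all _ fun x => by positivity) hi (ae_of_all _ e4)
  refine h5.trans (le_of_eq ?_)
  rw [integral_indicator measurableSet_closedBall, setIntegral_const, smul_eq_mul, measureReal_def,
    Measure.addHaar_closedBall' _ _ (by positivity), ENNReal.toReal_mul, ← measureReal_def, ← hV,
    ENNReal.toReal_ofReal (by positivity), finrank_euclideanSpace_fin]
  have e9 : (C * 2) ^ N = (2 * R) ^ N * (C / R) ^ N := by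
    rw [← mul_pow]; congr 1; field_simp
  rw [e9]; ring

/-- The bracket. -/
def JJ (N : ℕ) (x : EuclideanSpace ℝ (Fin N)) : ℝ := 1 + ‖x‖ ^ 2 / ((N : ℝ) * ((N : ℝ) - 2))

section WW
variable {N : ℕ} (hN : 3 ≤ N)
include hN

lemma cpos : (0:ℝ) < (N:ℝ) * ((N:ℝ) - 2) ∧ (3:ℝ) ≤ (N:ℝ) * ((N:ℝ) - 2) ∧ (0:ℝ) < N ∧ (0:ℝ) < (N:ℝ) - 2
    ∧ (3:ℝ) ≤ N := by
  have hN' : (3:ℝ) ≤ N := by exact_mod_cast hN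
  refine ⟨by nlinarith, by nlinarith, by linarith, by linarith, hN'⟩

lemma JJ_pos (x : EuclideanSpace ℝ (Fin N)) : 0 < JJ N x := by
  have := (cpos hN).1
  unfold JJ; positivity

lemma JJ_ge (x : EuclideanSpace ℝ (Fin N)) :
    (1 + ‖x‖ ^ 2) / ((N : ℝ) * ((N : ℝ) - 2)) ≤ JJ N x := by
  obtain ⟨h1, h2, -⟩ := cpos hN
  unfold JJ
  rw [add_div]
  gcongr
  rw [div_le_one h1]; linarith

lemma JJ_contDiff : ContDiff ℝ 1 (JJ N) := by
  unfold JJ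
  exact contDiff_const.add ((contDiff_norm_sq ℝ).div_const _)

lemma W_pos (x : EuclideanSpace ℝ (Fin N)) : 0 < W N x := Real.rpow_pos_of_pos (JJ_pos hN x) _

lemma W_contDiff : ContDiff ℝ 1 (W N) := by
  have := (JJ_contDiff hN).rpow_const_of_ne (p := -(((N : ℝ) - 2) / 2)) (fun x => (JJ_pos hN x).ne')
  exact this

lemma W_rpow (x : EuclideanSpace ℝ (Fin N)) :
    W N x ^ (2 * (N : ℝ) / ((N : ℝ) - 2)) = (JJ N x ^ N)⁻¹ := by
  obtain ⟨h1, h2, h3, h4, -⟩ := cpos hN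
  change (JJ N x ^ (-(((N : ℝ) - 2) / 2))) ^ (2 * (N : ℝ) / ((N : ℝ) - 2)) = _
  rw [← Real.rpow_mul (JJ_pos hN x).le, ← Real.rpow_natCast, ← Real.rpow_neg (JJ_pos hN x).le]
  congr 1
  field_simp

lemma W_grad (x : EuclideanSpace ℝ (Fin N)) :
    ‖gradient (W N) x‖ ^ 2 = ‖x‖ ^ 2 / (N:ℝ) ^ 2 * (JJ N x ^ N)⁻¹ := by
  obtain ⟨h1, h2, h3, h4, -⟩ := cpos hN
  have hJ := JJ_pos hN x
  have d1 : HasFDerivAt (JJ N) ((((N : ℝ) * ((N : ℝ) - 2))⁻¹ * 2) • innerSL ℝ x) x := by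
    have h := ((hasStrictFDerivAt_norm_sq x).hasFDerivAt.mul_const (((N : ℝ) * ((N : ℝ) - 2))⁻¹)).const_add 1
    have e : JJ N = fun x => 1 + ‖x‖ ^ 2 * ((N : ℝ) * ((N : ℝ) - 2))⁻¹ := by
      funext y; simp [JJ, div_eq_mul_inv]
    rw [e]
    refine h.congr_fderiv ?_
    ext y; simp; ring
  have d2 : HasFDerivAt (W N) _ x := d1.rpow_const (p := -(((N : ℝ) - 2) / 2)) (Or.inl hJ.ne')
  have e1 : ‖gradient (W N) x‖ = ‖fderiv ℝ (W N) x‖ := by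
    unfold gradient; simp
  rw [e1, d2.fderiv, smul_smul, norm_smul, mul_pow, Real.norm_eq_abs, sq_abs, innerSL_apply_norm]
  have e3 : (JJ N x ^ (-(((N : ℝ) - 2) / 2) - 1)) ^ 2 = (JJ N x ^ N)⁻¹ := by
    rw [← Real.rpow_natCast, ← Real.rpow_mul hJ.le, ← Real.rpow_natCast, ← Real.rpow_neg hJ.le]
    congr 1; push_cast; ring
  rw [← e3]
  field_simp

lemma int_J1 : Integrable (fun x : EuclideanSpace ℝ (Fin N) => JJ N x * (JJ N x ^ N)⁻¹) := by
  obtain ⟨h1, h2, h3, h4, h5⟩ := cpos hN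
  have h := integrable_rpow_neg_one_add_norm_sq (E := EuclideanSpace ℝ (Fin N)) (μ := volume)
    (r := 2 * ((N:ℝ) - 1)) (by rw [finrank_euclideanSpace_fin]; linarith)
  refine Integrable.mono' (h.const_mul (((N : ℝ) * ((N : ℝ) - 2)) ^ (N - 1))) ?_ (ae_of_all _ fun x => ?_)
  · have hc := (JJ_contDiff hN).continuous
    exact (hc.mul ((hc.pow N).inv₀ fun x => (pow_pos (JJ_pos hN x) _).ne')).aestronglyMeasurable
  · have hJ := JJ_pos hN x
    rw [Real.norm_of_nonneg (by positivity)]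
    have e : JJ N x * (JJ N x ^ N)⁻¹ = (JJ N x ^ (N - 1))⁻¹ := by
      have : JJ N x ^ N = JJ N x ^ (N - 1) * JJ N x := by
        rw [← pow_succ]; congr 1; omega
      rw [this]; field_simp
    have e2 : (1 + ‖x‖ ^ 2) ^ (-(2 * ((N:ℝ) - 1)) / 2) = ((1 + ‖x‖ ^ 2) ^ (N - 1))⁻¹ := by
      rw [← Real.rpow_natCast (1 + ‖x‖ ^ 2) (N - 1), ← Real.rpow_neg (by positivity)]
      congr 1
      rw [Nat.cast_sub (by omega)]; push_cast; ring
    rw [e, e2]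
    have h6 : (1 + ‖x‖ ^ 2) ^ (N-1) ≤ ((N : ℝ) * ((N : ℝ) - 2)) ^ (N - 1) * JJ N x ^ (N-1) := by
      rw [← mul_pow]
      refine pow_le_pow_left₀ (by positivity) ?_ _
      have := JJ_ge hN x
      rwa [div_le_iff₀' h1] at this
    rw [inv_le_iff_one_le_mul₀ (by positivity)]
    rw [mul_assoc, mul_comm, mul_assoc, ← div_eq_inv_mul, one_le_div (by positivity), mul_comm]
    exact h6

lemma int_J0 : Integrable (fun x : EuclideanSpace ℝ (Fin N) => (JJ N x ^ N)⁻¹) := by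
  obtain ⟨h1, h2, h3, h4, h5⟩ := cpos hN
  refine Integrable.mono' (int_J1 hN) ?_ (ae_of_all _ fun x => ?_)
  · have hc := (JJ_contDiff hN).continuous
    exact ((hc.pow N).inv₀ fun x => (pow_pos (JJ_pos hN x) _).ne').aestronglyMeasurable
  · have hJ := JJ_pos hN x
    rw [Real.norm_of_nonneg (by positivity)]
    have : 1 ≤ JJ N x := by
      unfold JJ
      have : 0 ≤ ‖x‖ ^ 2 / ((N : ℝ) * ((N : ℝ) - 2)) := by positivity
      linarith
    exact le_mul_of_one_le_left (by positivity) this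

lemma int_J2 : Integrable (fun x : EuclideanSpace ℝ (Fin N) => ‖x‖ ^ 2 * (JJ N x ^ N)⁻¹) := by
  obtain ⟨h1, h2, h3, h4, h5⟩ := cpos hN
  refine (((int_J1 hN).sub (int_J0 hN)).const_mul ((N : ℝ) * ((N : ℝ) - 2))).congr
    (ae_of_all _ fun x => ?_)
  simp only [Pi.sub_apply]
  have hJ := JJ_pos hN x
  unfold JJ at *
  field_simp
  ring

lemma pohozaev : ∫ x : EuclideanSpace ℝ (Fin N), ‖x‖ ^ 2 * (JJ N x ^ N)⁻¹
    = (N:ℝ) ^ 2 * ∫ x : EuclideanSpace ℝ (Fin N), (JJ N x ^ N)⁻¹ := by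
  obtain ⟨h1, h2, h3, h4, h5⟩ := cpos hN
  have : Nontrivial (EuclideanSpace ℝ (Fin N)) := by
    apply Module.nontrivial_of_finrank_pos (R := ℝ)
    rw [finrank_euclideanSpace_fin]; omega
  set c : ℝ := (N : ℝ) * ((N : ℝ) - 2) with hc
  have hi := (((int_J0 hN).const_mul ((N:ℝ)^2)).sub (int_J2 hN))
  have e0 : ∫ x : EuclideanSpace ℝ (Fin N),
      ((N:ℝ) ^ 2 * (JJ N x ^ N)⁻¹ - ‖x‖ ^ 2 * (JJ N x ^ N)⁻¹) = 0 := by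
    let f : ℝ → ℝ := fun r => (N:ℝ)^2 * ((1 + r ^ 2 / c) ^ N)⁻¹ - r ^ 2 * ((1 + r ^ 2 / c) ^ N)⁻¹
    have hr : ∫ x : EuclideanSpace ℝ (Fin N), f ‖x‖ = _ :=
      integral_fun_norm_addHaar (volume : Measure (EuclideanSpace ℝ (Fin N))) f
    have hri : IntegrableOn (fun y : ℝ => y ^ (Module.finrank ℝ (EuclideanSpace ℝ (Fin N)) - 1) • f y)
        (Ioi 0) := by
      rw [← integrable_fun_norm_addHaar (volume : Measure (EuclideanSpace ℝ (Fin N)))]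
      exact hi
    change ∫ x : EuclideanSpace ℝ (Fin N), f ‖x‖ = 0
    rw [hr]
    rw [finrank_euclideanSpace_fin] at hri ⊢
    have key : ∫ y in Ioi (0:ℝ), y ^ (N - 1) • f y = 0 - (fun r : ℝ => (N:ℝ) * (r ^ N * (1 + r ^ 2 / c) * ((1 + r ^ 2 / c) ^ N)⁻¹)) 0 := by
      refine integral_Ioi_of_hasDerivAt_of_tendsto
        (f := fun r : ℝ => (N:ℝ) * (r ^ N * (1 + r ^ 2 / c) * ((1 + r ^ 2 / c) ^ N)⁻¹)) ?_ ?_ hri ?_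
      · refine Continuous.continuousWithinAt ?_
        refine continuous_const.mul (Continuous.mul (by fun_prop) (Continuous.inv₀ (by fun_prop) ?_))
        intro r; positivity
      · intro r hr
        have hr0 : (0:ℝ) < r := hr
        obtain ⟨k, rfl⟩ : ∃ k, N = k + 1 := ⟨N - 1, by omega⟩
        have hJ : (0:ℝ) < 1 + r ^ 2 / c := by positivity
        have d1 : HasDerivAt (fun r : ℝ => 1 + r ^ 2 / c) (2 * r / c) r := by
          have := ((hasDerivAt_pow 2 r).div_const c).const_add 1
          simpa using this
        have d2 := (((hasDerivAt_pow (k+1) r).mul d1).mul ((d1.pow (k+1)).inv (pow_pos hJ _).ne')).const_mul ((k+1:ℕ):ℝ)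
        refine d2.congr_deriv ?_
        simp only [f, smul_eq_mul, Nat.add_sub_cancel, Pi.mul_apply, Pi.pow_apply, Pi.inv_apply]
        have hc0 : c ≠ 0 := h1.ne'
        have hJ' : c + r ^ 2 ≠ 0 := by positivity
        push_cast at hc ⊢
        have hcc : ((k:ℝ) + 1) * (k - 1) = c := by rw [hc]; ring
        have e6 : ∀ J : ℝ, 0 < J → J = 1 + r ^ 2 / c → ((k:ℝ) + 1) * ((((k:ℝ) + 1) * r ^ k * J + r ^ (k + 1) * (2 * r / c)) * (J ^ (k + 1))⁻¹ + r ^ (k + 1) * J * (-(((k:ℝ) + 1) * J ^ k * (2 * r / c)) / (J ^ (k + 1)) ^ 2)) = r ^ k * (((k:ℝ) + 1) ^ 2 * (J ^ (k + 1))⁻¹ - r ^ 2 * (J ^ (k + 1))⁻¹) := by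
          intro J hJ hJe
          have e7 : J * (-(((k:ℝ) + 1) * J ^ k * (2 * r / c)) / (J ^ (k + 1)) ^ 2)
              = -(((k:ℝ) + 1) * (2 * r / c)) * (J ^ (k + 1))⁻¹ := by
            field_simp
            ring
          have e8 : r ^ (k + 1) * J * (-(((k:ℝ) + 1) * J ^ k * (2 * r / c)) / (J ^ (k + 1)) ^ 2)
              = r ^ (k + 1) * (-(((k:ℝ) + 1) * (2 * r / c)) * (J ^ (k + 1))⁻¹) := by
            rw [mul_assoc, e7]
          rw [e8]
          have e9 : ((k:ℝ) + 1) * ((((k:ℝ) + 1) * J + r * (2 * r / c)) + r * (-(((k:ℝ) + 1) * (2 * r / c))))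
              = ((k:ℝ) + 1) ^ 2 - r ^ 2 := by
            rw [hJe]; field_simp; rw [← hcc]; ring
          linear_combination (r ^ k * (J ^ (k + 1))⁻¹) * e9
        have e10 := e6 _ hJ rfl
        rw [← e10]
      · obtain ⟨m, rfl⟩ : ∃ m, N = m + 3 := ⟨N - 3, by omega⟩
        have hlim : Tendsto (fun r : ℝ => ((m + 3 : ℕ):ℝ) * c ^ (m + 2) * r⁻¹) atTop (nhds 0) := by
          simpa using tendsto_inv_atTop_zero.const_mul (((m + 3 : ℕ):ℝ) * c ^ (m + 2))
        refine squeeze_zero' ?_ ?_ hlim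
        · filter_upwards [eventually_ge_atTop 1] with r hr
          have : (0:ℝ) < 1 + r ^ 2 / c := by positivity
          positivity
        · filter_upwards [eventually_ge_atTop 1] with r hr
          have hJ : (0:ℝ) < 1 + r ^ 2 / c := by positivity
          have hJ2 : r ^ 2 ≤ c * (1 + r ^ 2 / c) := by
            have : c * (1 + r ^ 2 / c) = c + r ^ 2 := by field_simp
            linarith
          generalize 1 + r ^ 2 / c = J at hJ hJ2 ⊢
          have hr0 : 0 < r := by linarith
          have e6 : r ^ (m + 3) * J * (J ^ (m + 3))⁻¹ = r ^ (m + 3) * (J ^ (m + 2))⁻¹ := by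
            rw [pow_succ J (m + 2)]; field_simp
          rw [e6, mul_assoc]
          refine mul_le_mul_of_nonneg_left ?_ (by positivity)
          rw [← div_eq_mul_inv, ← div_eq_mul_inv, div_le_div_iff₀ (by positivity) hr0, ← pow_succ,
            ← mul_pow]
          calc r ^ (m + 3 + 1) ≤ r ^ (2 * (m + 2)) := pow_le_pow_right₀ hr (by omega)
            _ = (r ^ 2) ^ (m + 2) := pow_mul _ _ _
            _ ≤ _ := pow_le_pow_left₀ (by positivity) hJ2 _
    rw [key]
    simp [show N ≠ 0 by omega]
  rw [integral_sub ((int_J0 hN).const_mul _) (int_J2 hN), integral_const_mul] at e0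
  linarith

end WW


lemma hcs_sq {X : Type*} [TopologicalSpace X] {f : X → ℝ} (hf : HasCompactSupport f) :
    HasCompactSupport fun x => f x ^ 2 := by
  refine hf.mono fun x hx hx0 => hx ?_
  simp [hx0]

lemma hcs_cut {X : Type*} [TopologicalSpace X] {f g : X → ℝ} (hf : HasCompactSupport g) :
    HasCompactSupport fun x => (f x * g x) ^ 2 := by
  refine hf.mono fun x hx hx0 => hx ?_
  simp [hx0]

lemma KnotheE.push_real {n : ℕ} {F G : EuclideanSpace ℝ (Fin n) → ℝ} {T p} (hK : KnotheE F G T p)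
    (hF : GoodE F) (hG : GoodE G) {φ : EuclideanSpace ℝ (Fin n) → ℝ} (hφ : Continuous φ)
    (hφ0 : ∀ x, 0 ≤ φ x) (hi : Integrable (fun x => φ x * G x)) :
    Integrable (fun x => φ (T x) * F x) ∧ ∫ x, φ (T x) * F x = ∫ x, φ x * G x := by
  have c2 : Continuous (WithLp.ofLp : EuclideanSpace ℝ (Fin n) → (Fin n → ℝ)) :=
    PiLp.continuous_ofLp 2 _
  have hFc : Continuous F := hF.cont.comp c2
  have hGc : Continuous G := hG.cont.comp c2
  have hF0 : ∀ x, 0 ≤ F x := fun x => (hF.pos x.ofLp).le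
  have hG0 : ∀ x, 0 ≤ G x := fun x => (hG.pos x.ofLp).le
  have h := hK.push (fun x => ENNReal.ofReal (φ x)) hφ.measurable.ennreal_ofReal
  simp only [← ENNReal.ofReal_mul (hφ0 _)] at h
  have n1 : ∀ x, 0 ≤ φ (T x) * F x := fun x => mul_nonneg (hφ0 _) (hF0 _)
  have n2 : ∀ x, 0 ≤ φ x * G x := fun x => mul_nonneg (hφ0 _) (hG0 _)
  have m1 : Continuous (fun x => φ (T x) * F x) := (hφ.comp hK.cont).mul hFc
  constructor
  · refine ⟨m1.aestronglyMeasurable, ?_⟩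
    rw [hasFiniteIntegral_iff_ofReal (ae_of_all _ n1), h,
      ← hasFiniteIntegral_iff_ofReal (ae_of_all _ n2)]
    exact hi.2
  · rw [integral_eq_lintegral_of_nonneg_ae (ae_of_all _ n1) m1.aestronglyMeasurable,
      integral_eq_lintegral_of_nonneg_ae (ae_of_all _ n2) hi.1, h]

section
variable {N : ℕ} (hN : 3 ≤ N)
include hN

lemma goodW : GoodE (fun x : EuclideanSpace ℝ (Fin N) => (JJ N x ^ N)⁻¹) := by
  obtain ⟨h1, h2, h3, h4, h5⟩ := cpos hN
  have c1 : Continuous (WithLp.toLp 2 : (Fin N → ℝ) → EuclideanSpace ℝ (Fin N)) :=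
    PiLp.continuous_toLp 2 _
  have hc := (JJ_contDiff hN).continuous
  refine ⟨?_, fun x => inv_pos.2 (pow_pos (JJ_pos hN _) _), ((N:ℝ) * ((N:ℝ) - 2)) ^ N, fun x => ?_⟩
  · have : Continuous (fun x : EuclideanSpace ℝ (Fin N) => (JJ N x ^ N)⁻¹) :=
      (hc.pow N).inv₀ fun x => (pow_pos (JJ_pos hN x) _).ne'
    exact this.comp c1
  · have hJ := JJ_pos hN (WithLp.toLp 2 x)
    have hle : ∀ i, (1 + x i ^ 2) ≤ ((N:ℝ) * ((N:ℝ) - 2)) * JJ N (WithLp.toLp 2 x) := fun i => by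
      have h := JJ_ge hN (WithLp.toLp 2 x)
      rw [div_le_iff₀' h1] at h
      refine le_trans ?_ h
      have hi := PiLp.norm_apply_le (p := 2) (WithLp.toLp 2 x : EuclideanSpace ℝ (Fin N)) i
      have : x i ^ 2 ≤ ‖(WithLp.toLp 2 x : EuclideanSpace ℝ (Fin N))‖ ^ 2 := by
        rw [← sq_abs (x i)]
        exact pow_le_pow_left₀ (abs_nonneg _) (by simpa using hi) 2
      linarith
    have hp : ∏ i, (1 + x i ^ 2) ≤ (((N:ℝ) * ((N:ℝ) - 2)) * JJ N (WithLp.toLp 2 x)) ^ N := by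
      have := Finset.prod_le_prod (s := Finset.univ) (f := fun i => 1 + x i ^ 2)
        (g := fun _ : Fin N => ((N:ℝ) * ((N:ℝ) - 2)) * JJ N (WithLp.toLp 2 x))
        (fun i _ => by positivity) (fun i _ => hle i)
      simpa using this
    have hp0 : 0 < ∏ i, (1 + x i ^ 2) := Finset.prod_pos fun i _ => by positivity
    rw [Finset.prod_inv_distrib, ← div_eq_mul_inv, le_div_iff₀ hp0, inv_mul_le_iff₀ (by positivity)]
    rw [mul_pow] at hp
    linarith

lemma goodF {w : EuclideanSpace ℝ (Fin N) → ℝ} (hw : Continuous w) (hpos : ∀ x, 0 < w x)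
    (hb : ∃ C, ∀ x, w x ≤ C * W N x) {κ : ℝ} (hκ : 0 < κ) :
    GoodE (fun x => κ * w x ^ (2 * (N : ℝ) / ((N : ℝ) - 2))) := by
  obtain ⟨h1, h2, h3, h4, h5⟩ := cpos hN
  have c1 : Continuous (WithLp.toLp 2 : (Fin N → ℝ) → EuclideanSpace ℝ (Fin N)) :=
    PiLp.continuous_toLp 2 _
  obtain ⟨C, hC⟩ := hb
  have hC0 : 0 ≤ C := by
    have := (hpos 0).trans_le (hC 0)
    exact (pos_of_mul_pos_left this (W_pos hN 0).le).le
  obtain ⟨K, hK⟩ := (goodW hN).bd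
  refine ⟨?_, fun x => mul_pos hκ (Real.rpow_pos_of_pos (hpos _) _),
    κ * (C ^ (2 * (N : ℝ) / ((N : ℝ) - 2)) * K), fun x => ?_⟩
  · have : Continuous (fun x => κ * w x ^ (2 * (N : ℝ) / ((N : ℝ) - 2))) :=
      continuous_const.mul (hw.rpow_const fun x => Or.inl (hpos x).ne')
    exact this.comp c1
  · rw [mul_assoc]
    refine mul_le_mul_of_nonneg_left ?_ hκ.le
    have := Real.rpow_le_rpow (hpos (WithLp.toLp 2 x)).le (hC _)
      (by positivity : 0 ≤ 2 * (N : ℝ) / ((N : ℝ) - 2))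
    rw [Real.mul_rpow hC0 (W_pos hN _).le, W_rpow hN] at this
    refine this.trans ?_
    rw [mul_assoc]
    exact mul_le_mul_of_nonneg_left (hK x) (by positivity)

lemma sob_alg {A a G β : ℝ} (hA : 0 < A) (ha : 0 < a) (hG : 0 ≤ G) (hβ : 0 < β)
    (h : (N:ℝ) * (A / a) ^ (1 / (N:ℝ)) * ((A / a)⁻¹ * (β * A)) ≤ β * √G * √((N:ℝ) ^ 2 * A / (A / a))) :
    a ≤ A * (G / A) ^ ((N : ℝ) / ((N : ℝ) - 2)) := by
  obtain ⟨h1, h2, h3, h4, h5⟩ := cpos hN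
  obtain ⟨κ, hκ⟩ : ∃ κ, κ = A / a := ⟨_, rfl⟩
  have hκ0 : 0 < κ := by rw [hκ]; positivity
  rw [← hκ] at h
  have hs := pow_le_pow_left₀ (by positivity) h 2
  rw [mul_pow (β * √G), mul_pow β, Real.sq_sqrt hG, Real.sq_sqrt (by positivity)] at hs
  have e : κ ^ (2 / (N:ℝ) - 1) = (κ ^ (1 / (N:ℝ))) ^ 2 * κ⁻¹ := by
    rw [Real.rpow_sub hκ0, Real.rpow_one, ← Real.rpow_natCast, ← Real.rpow_mul hκ0.le, div_eq_mul_inv]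
    congr 2; push_cast; ring
  have hle : κ ^ (2 / (N:ℝ) - 1) ≤ G / A := by
    rw [e, le_div_iff₀ hA]
    generalize κ ^ (1 / (N:ℝ)) = t at hs
    have hc : 0 < β ^ 2 * (N:ℝ) ^ 2 * A / κ := by positivity
    refine le_of_mul_le_mul_left ?_ hc
    calc _ = ((N:ℝ) * t * (κ⁻¹ * (β * A))) ^ 2 := by field_simp
      _ ≤ _ := hs
      _ = _ := by field_simp
  have h6 := Real.rpow_le_rpow (by positivity) hle (by positivity : 0 ≤ (N : ℝ) / ((N : ℝ) - 2))
  rw [← Real.rpow_mul hκ0.le, show (2 / (N:ℝ) - 1) * ((N : ℝ) / ((N : ℝ) - 2)) = -1 by field_simp; ring,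
    Real.rpow_neg_one, hκ, inv_div, div_le_iff₀' hA] at h6
  exact h6

set_option maxHeartbeats 2000000 in
theorem sobolev_good {w : EuclideanSpace ℝ (Fin N) → ℝ} (hw : ContDiff ℝ 1 w) (hpos : ∀ x, 0 < w x)
    (hb : ∃ C, ∀ x, w x ≤ C * W N x) (hg : Integrable fun x => ‖fderiv ℝ w x‖ ^ 2)
    {A : ℝ} (hA : A = ∫ x : EuclideanSpace ℝ (Fin N), (JJ N x ^ N)⁻¹) :
    Integrable (fun x => w x ^ (2 * (N : ℝ) / ((N : ℝ) - 2))) ∧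
    ∫ x, w x ^ (2 * (N : ℝ) / ((N : ℝ) - 2))
      ≤ A * ((∫ x, ‖fderiv ℝ w x‖ ^ 2) / A) ^ ((N : ℝ) / ((N : ℝ) - 2)) := by
  obtain ⟨h1, h2, h3, h4, h5⟩ := cpos hN
  set q : ℝ := 2 * (N : ℝ) / ((N : ℝ) - 2) with hq
  have hwc := hw.continuous
  have hdc : Continuous (fderiv ℝ w) := hw.continuous_fderiv one_ne_zero
  have intE : ∀ {F : EuclideanSpace ℝ (Fin N) → ℝ}, GoodE F → Integrable F := fun {F} hF => by
    have := hF.int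
    exact ((mp_toLp N).integrable_comp_emb (me_toLp N) (g := F)).1 this
  have posE : ∀ {F : EuclideanSpace ℝ (Fin N) → ℝ}, GoodE F → 0 < ∫ x, F x := fun {F} hF => by
    have hp : ∀ x, 0 < F x := fun x => hF.pos x.ofLp
    rw [integral_pos_iff_support_of_nonneg (fun s => (hp s).le) (intE hF)]
    have : Function.support F = univ := by
      ext s; simp [(hp s).ne']
    rw [this]; exact isOpen_univ.measure_pos _ univ_nonempty
  have g1 : GoodE (fun x => w x ^ q) := by
    have := goodF hN hwc hpos hb one_pos
    simpa using this
  have hwi := intE g1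
  have hA0 : 0 < A := by rw [hA]; exact posE (goodW hN)
  set a : ℝ := ∫ x, w x ^ q with ha
  have ha0 : 0 < a := posE g1
  set κ : ℝ := A / a with hκ
  have hκ0 : 0 < κ := by positivity
  have g2 : GoodE (fun x => κ * w x ^ q) := goodF hN hwc hpos hb hκ0
  refine ⟨hwi, ?_⟩
  obtain ⟨T, p, hK⟩ := knotheE_exists g2 (goodW hN) (by
    rw [integral_const_mul, ← ha, hκ, ← hA]; field_simp)
  set β : ℝ := 2 * ((N:ℝ) - 1) / ((N:ℝ) - 2) with hβ
  have hβ0 : 0 < β := by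
    have : 0 < (N:ℝ) - 1 := by linarith
    positivity
  set M : ℝ := ∫ x : EuclideanSpace ℝ (Fin N), ‖x‖ ^ 2 * (JJ N x ^ N)⁻¹ with hM
  have hMA : M = (N:ℝ) ^ 2 * A := by rw [hM, pohozaev hN, hA]
  have hJc := (JJ_contDiff hN).continuous
  -- pushforward of |y|^2
  obtain ⟨i2, e2⟩ := hK.push_real g2 (goodW hN) (φ := fun x => ‖x‖ ^ 2) (by fun_prop)
    (fun x => by positivity) (int_J2 hN)
  obtain ⟨i1, e1⟩ := hK.push_real g2 (goodW hN) (φ := JJ N) hJc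
    (fun x => (JJ_pos hN x).le) (int_J1 hN)
  have hB : ∫ x : EuclideanSpace ℝ (Fin N), JJ N x * (JJ N x ^ N)⁻¹ = β * A := by
    have : ∀ x : EuclideanSpace ℝ (Fin N), JJ N x * (JJ N x ^ N)⁻¹
        = (JJ N x ^ N)⁻¹ + ((N:ℝ) * ((N:ℝ) - 2))⁻¹ * (‖x‖ ^ 2 * (JJ N x ^ N)⁻¹) := by
      intro x
      have hJ : JJ N x = 1 + ‖x‖ ^ 2 / ((N:ℝ) * ((N:ℝ) - 2)) := rfl
      generalize (JJ N x ^ N)⁻¹ = t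
      rw [hJ]
      ring
    simp only [this]
    rw [integral_add (int_J0 hN) ((int_J2 hN).const_mul _), integral_const_mul, ← hM, ← hA, hMA, hβ]
    field_simp
    ring
  rw [hB] at e1
  rw [← hM] at e2
  have i2' : Integrable (fun x => (w x ^ (q / 2) * ‖T x‖) ^ 2) := by
    refine (i2.const_mul κ⁻¹).congr (ae_of_all _ fun x => ?_)
    have : (w x ^ (q / 2)) ^ 2 = w x ^ q := by
      rw [← Real.rpow_natCast, ← Real.rpow_mul (hpos x).le]; congr 1; push_cast; ring
    simp only [mul_pow, this]
    field_simp
  have e2' : ∫ x, (w x ^ (q / 2) * ‖T x‖) ^ 2 = M / κ := by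
    rw [div_eq_inv_mul M κ, ← e2, ← integral_const_mul]
    refine integral_congr_ae (ae_of_all _ fun x => ?_)
    have : (w x ^ (q / 2)) ^ 2 = w x ^ q := by
      rw [← Real.rpow_natCast, ← Real.rpow_mul (hpos x).le]; congr 1; push_cast; ring
    simp only [mul_pow, this]
    field_simp
  -- AM-GM
  have amgm : ∀ x, (N:ℝ) * (κ ^ (1 / (N:ℝ)) * w x ^ (q / N) * JJ N (T x)) ≤ ∑ i, p i x := by
    intro x
    have hJ := JJ_pos hN (T x)
    have h := Real.geom_mean_le_arith_mean_weighted Finset.univ (fun _ : Fin N => 1 / (N:ℝ))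
      (fun i => p i x) (fun i _ => by positivity) (by simp; field_simp) (fun i _ => (hK.ppos i x).le)
    rw [Real.finset_prod_rpow _ _ (fun i _ => (hK.ppos i x).le), ← Finset.mul_sum] at h
    have hj := hK.jac x
    have hpr : ∏ i, p i x = κ * w x ^ q * JJ N (T x) ^ N := by
      rw [← hj]; field_simp
    rw [hpr, Real.mul_rpow (by have := hpos x; positivity) (by positivity),
      Real.mul_rpow hκ0.le (by have := hpos x; positivity), ← Real.rpow_mul (hpos x).le,
      ← Real.rpow_natCast (JJ N (T x)), ← Real.rpow_mul hJ.le, mul_one_div, mul_one_div,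
      div_self h3.ne', Real.rpow_one, one_div_mul_eq_div, le_div_iff₀ h3] at h
    linarith
  obtain ⟨χ, C, hC, hχ⟩ := exists_cutoff N
  set g : ℝ := √(∫ x, ‖fderiv ℝ w x‖ ^ 2) with hgdef
  have step : ∀ R > 0, (N:ℝ) * κ ^ (1 / (N:ℝ)) * (κ⁻¹ * ∫ x, χ R x * (JJ N (T x) * (κ * w x ^ q)))
      ≤ (β * g + √(∫ x, (|w x| * ‖fderiv ℝ (χ R) x‖) ^ 2)) * √(M / κ) := by
    intro R hR
    obtain ⟨hcd, hcs, hc0, hc1, -⟩ := hχ R hR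
    have hcdc : Continuous (fderiv ℝ (χ R)) := hcd.continuous_fderiv one_ne_zero
    set h : EuclideanSpace ℝ (Fin N) → ℝ := fun x => χ R x * w x ^ β with hh
    have hhd : ContDiff ℝ 1 h := hcd.mul (hw.rpow_const_of_ne fun x => (hpos x).ne')
    have hhs : HasCompactSupport h := hcs.mul_right
    have hib := hK.ibp hhd hhs
    have hsum : Continuous fun x => ∑ i, p i x := continuous_finsetSum _ fun i _ => hK.pcont i
    have hhi : Integrable fun x => h x * ∑ i, p i x :=
      (hhd.continuous.mul hsum).integrable_of_hasCompactSupport hhs.mul_right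
    have hqp : ∀ x, w x ^ β * w x ^ (q / N) = w x ^ q := fun x => by
      rw [← Real.rpow_add (hpos x)]; congr 1; rw [hβ, hq]; field_simp; ring
    have hl : (N:ℝ) * κ ^ (1 / (N:ℝ)) * (κ⁻¹ * ∫ x, χ R x * (JJ N (T x) * (κ * w x ^ q)))
        ≤ ∫ x, h x * ∑ i, p i x := by
      rw [← integral_const_mul, ← integral_const_mul]
      refine integral_mono_of_nonneg (ae_of_all _ fun x => ?_) hhi (ae_of_all _ fun x => ?_)
      · have := hc0 x
        have := JJ_pos hN (T x)
        have := hpos x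
        positivity
      · have hx0 : 0 ≤ h x := mul_nonneg (hc0 x) (Real.rpow_nonneg (hpos x).le _)
        refine le_trans (le_of_eq ?_) (mul_le_mul_of_nonneg_left (amgm x) hx0)
        simp only [hh, ← hqp x]
        field_simp
    rw [hib, ← integral_neg] at hl
    refine hl.trans ?_
    have hder : ∀ x, fderiv ℝ h x = χ R x • ((β * w x ^ (β - 1)) • fderiv ℝ w x)
        + w x ^ β • fderiv ℝ (χ R) x := by
      intro x
      have d1 := ((hw.differentiable one_ne_zero) x).hasFDerivAt.rpow_const (p := β)
        (Or.inl (hpos x).ne')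
      have d2 := ((hcd.differentiable one_ne_zero) x).hasFDerivAt.mul d1
      exact d2.fderiv
    have hβq : β - 1 = q / 2 := by rw [hβ, hq]; field_simp; ring
    have hbw : ∀ x, w x ^ β = w x * w x ^ (q / 2) := fun x => by
      rw [← hβq, ← Real.rpow_one_add' (hpos x).le (by rw [add_sub_cancel]; exact hβ0.ne')]
      congr 1; ring
    set Z : EuclideanSpace ℝ (Fin N) → ℝ := fun x => w x ^ (q / 2) * ‖T x‖ with hZ
    have hZc : Continuous Z := (hwc.rpow_const fun x => Or.inl (hpos x).ne').mul hK.cont.norm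
    have hZ0 : ∀ x, 0 ≤ Z x := fun x => mul_nonneg (Real.rpow_nonneg (hpos x).le _) (norm_nonneg _)
    have hpt : ∀ x, - fderiv ℝ h x (T x) ≤ β * (‖fderiv ℝ w x‖ * Z x)
        + (|w x| * ‖fderiv ℝ (χ R) x‖) * Z x := by
      intro x
      have t1 : -(fderiv ℝ w x (T x)) ≤ ‖fderiv ℝ w x‖ * ‖T x‖ :=
        (neg_le_abs _).trans ((fderiv ℝ w x).le_opNorm _)
      have t2 : -(fderiv ℝ (χ R) x (T x)) ≤ ‖fderiv ℝ (χ R) x‖ * ‖T x‖ :=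
        (neg_le_abs _).trans ((fderiv ℝ (χ R) x).le_opNorm _)
      have hwq : 0 < w x ^ (q / 2) := Real.rpow_pos_of_pos (hpos x) _
      rw [hder x, hβq, hbw x, abs_of_pos (hpos x)]
      simp only [add_apply, smul_apply, smul_eq_mul, hZ, ContinuousLinearMap.add_apply,
        ContinuousLinearMap.smul_apply]
      have s1 : χ R x * (β * w x ^ (q / 2) * (-(fderiv ℝ w x (T x))))
          ≤ β * w x ^ (q / 2) * (‖fderiv ℝ w x‖ * ‖T x‖) := by
        have u1 : β * w x ^ (q / 2) * (-(fderiv ℝ w x (T x))) ≤ β * w x ^ (q / 2) * (‖fderiv ℝ w x‖ * ‖T x‖) :=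
          mul_le_mul_of_nonneg_left t1 (by positivity)
        have u2 : 0 ≤ β * w x ^ (q / 2) * (‖fderiv ℝ w x‖ * ‖T x‖) := by positivity
        calc _ ≤ χ R x * (β * w x ^ (q / 2) * (‖fderiv ℝ w x‖ * ‖T x‖)) :=
              mul_le_mul_of_nonneg_left u1 (hc0 x)
          _ ≤ _ := mul_le_of_le_one_left u2 (hc1 x)
      have s2 : w x * w x ^ (q / 2) * (-(fderiv ℝ (χ R) x (T x)))
          ≤ w x * w x ^ (q / 2) * (‖fderiv ℝ (χ R) x‖ * ‖T x‖) :=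
        mul_le_mul_of_nonneg_left t2 (mul_pos (hpos x) hwq).le
      linarith
    have sqc : Integrable fun x => (|w x| * ‖fderiv ℝ (χ R) x‖) ^ 2 := by
      refine ((hwc.abs.mul hcdc.norm).pow 2).integrable_of_hasCompactSupport ?_
      have : HasCompactSupport fun x => ‖fderiv ℝ (χ R) x‖ := (hcs.fderiv ℝ).norm
      exact hcs_cut (f := fun x => |w x|) this
    obtain ⟨j1, k1⟩ := cs (f := fun x => ‖fderiv ℝ w x‖) (g := Z) (μ := volume)
      (fun x => norm_nonneg _) hZ0 hdc.norm.aestronglyMeasurable hZc.aestronglyMeasurable hg i2'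
    obtain ⟨j2, k2⟩ := cs (f := fun x => |w x| * ‖fderiv ℝ (χ R) x‖) (g := Z) (μ := volume)
      (fun x => by positivity) hZ0 (hwc.abs.mul hcdc.norm).aestronglyMeasurable
      hZc.aestronglyMeasurable sqc i2'
    rw [e2'] at k1 k2
    have hnegi : Integrable fun x => - fderiv ℝ h x (T x) := by
      refine (((hhd.continuous_fderiv one_ne_zero).clm_apply hK.cont).neg).integrable_of_hasCompactSupport ?_
      refine (hhs.fderiv ℝ).mono fun x hx hx0 => hx ?_
      simp [hx0]
    have hmono := integral_mono hnegi ((j1.const_mul β).add j2) hpt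
    refine hmono.trans ?_
    simp only [Pi.add_apply]
    rw [integral_add (j1.const_mul β) j2, integral_const_mul]
    have := mul_le_mul_of_nonneg_left k1 hβ0.le
    rw [← hgdef] at this
    linarith
  -- pass to the limit
  have lim1 : Tendsto (fun R => ∫ x, χ R x * (JJ N (T x) * (κ * w x ^ q))) atTop
      (nhds (β * A)) := by
    rw [← e1]
    refine tendsto_integral_filter_of_dominated_convergence (fun x => JJ N (T x) * (κ * w x ^ q))
      ?_ ?_ i1 ?_
    · filter_upwards [eventually_gt_atTop 0] with R hR
      exact ((hχ R hR).1.continuous.aestronglyMeasurable).mul i1.1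
    · filter_upwards [eventually_gt_atTop 0] with R hR
      refine ae_of_all _ fun x => ?_
      obtain ⟨-, -, hc0, hc1, -⟩ := hχ R hR
      have q1 := hc0 x
      have q2 := JJ_pos hN (T x)
      have q3 := hpos x
      rw [Real.norm_of_nonneg (by positivity)]
      exact mul_le_of_le_one_left (by positivity) (hc1 x)
    · refine ae_of_all _ fun x => ?_
      refine tendsto_const_nhds.congr' ?_
      filter_upwards [eventually_ge_atTop ‖x‖, eventually_gt_atTop 0] with R hR hR0
      rw [(hχ R hR0).2.2.2.2.1 x hR, one_mul]
  have hwabs : Integrable (fun x => |w x| ^ (2 * (N : ℝ) / ((N : ℝ) - 2))) := by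
    refine hwi.congr (ae_of_all _ fun x => ?_)
    simp only [abs_of_pos (hpos x), hq]
  have lim2 := cut_tendsto hN hC hχ hwc hwabs
  have lim3 := ((((Real.continuous_sqrt.tendsto 0).comp lim2).const_add (β * g)).mul_const √(M / κ))
  have lim4 := (lim1.const_mul κ⁻¹).const_mul ((N:ℝ) * κ ^ (1 / (N:ℝ)))
  have fin := le_of_tendsto_of_tendsto lim4 lim3
    ((eventually_gt_atTop 0).mono fun R hR => step R hR)
  rw [Real.sqrt_zero, add_zero, hMA] at fin
  -- algebra
  exact sob_alg hN hA0 ha0 (integral_nonneg fun x => by positivity) hβ0 fin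

end


lemma norm_grad_eq {N : ℕ} (v : EuclideanSpace ℝ (Fin N) → ℝ) (x) :
    ‖gradient v x‖ = ‖fderiv ℝ v x‖ := by
  unfold gradient; simp

section
variable {N : ℕ} (hN : 3 ≤ N)
include hN

lemma W_fderiv_int : Integrable (fun x => ‖fderiv ℝ (W N) x‖ ^ 2) := by
  simp only [← norm_grad_eq, W_grad hN]
  refine ((int_J2 hN).const_mul ((N:ℝ) ^ 2)⁻¹).congr (ae_of_all _ fun x => ?_)
  simp only []
  ring

lemma W_grad_total : ∫ x, ‖gradient (W N) x‖ ^ 2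
    = ∫ x : EuclideanSpace ℝ (Fin N), (JJ N x ^ N)⁻¹ := by
  obtain ⟨h1, h2, h3, h4, h5⟩ := cpos hN
  have : ∀ x : EuclideanSpace ℝ (Fin N), ‖gradient (W N) x‖ ^ 2
      = ((N:ℝ) ^ 2)⁻¹ * (‖x‖ ^ 2 * (JJ N x ^ N)⁻¹) := fun x => by rw [W_grad hN]; ring
  simp only [this]
  rw [integral_const_mul, pohozaev hN]
  field_simp

lemma A_pos : 0 < ∫ x : EuclideanSpace ℝ (Fin N), (JJ N x ^ N)⁻¹ := by
  have hp : ∀ x : EuclideanSpace ℝ (Fin N), 0 < (JJ N x ^ N)⁻¹ :=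
    fun x => inv_pos.2 (pow_pos (JJ_pos hN _) _)
  rw [integral_pos_iff_support_of_nonneg (fun s => (hp s).le) (int_J0 hN)]
  have : Function.support (fun x : EuclideanSpace ℝ (Fin N) => (JJ N x ^ N)⁻¹) = univ := by
    ext s
    simp only [Function.mem_support, mem_univ, iff_true]
    exact (hp s).ne'
  rw [this]; exact isOpen_univ.measure_pos _ univ_nonempty

set_option maxHeartbeats 1000000 in
theorem sobolev_cpt {φ : EuclideanSpace ℝ (Fin N) → ℝ} (hφ : ContDiff ℝ 1 φ)
    (hs : HasCompactSupport φ)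
    {A : ℝ} (hA : A = ∫ x : EuclideanSpace ℝ (Fin N), (JJ N x ^ N)⁻¹) :
    ∫ x, |φ x| ^ (2 * (N : ℝ) / ((N : ℝ) - 2))
      ≤ A * ((∫ x, ‖fderiv ℝ φ x‖ ^ 2) / A) ^ ((N : ℝ) / ((N : ℝ) - 2)) := by
  obtain ⟨h1, h2, h3, h4, h5⟩ := cpos hN
  have hA0 : 0 < A := by rw [hA]; exact A_pos hN
  have hWc := W_contDiff hN
  have hWp := W_pos hN
  have hφi : Integrable (fun x => ‖fderiv ℝ φ x‖ ^ 2) := by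
    have hdc : Continuous (fderiv ℝ φ) := hφ.continuous_fderiv one_ne_zero
    refine (hdc.norm.pow 2).integrable_of_hasCompactSupport ?_
    have : HasCompactSupport fun x => ‖fderiv ℝ φ x‖ := (hs.fderiv ℝ).norm
    exact hcs_sq this
  have hWi := W_fderiv_int hN
  obtain ⟨K, hK⟩ : ∃ K, ∀ x, |φ x| ≤ K * W N x := by
    have hc : Continuous fun x => φ x / W N x := hφ.continuous.div hWc.continuous fun x => (hWp x).ne'
    have hcs : HasCompactSupport fun x => φ x / W N x := by
      simp only [div_eq_mul_inv]; exact hs.mul_right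
    obtain ⟨K, hK⟩ := hc.bounded_above_of_compact_support hcs
    refine ⟨K, fun x => ?_⟩
    have := hK x
    rw [Real.norm_eq_abs, abs_div, abs_of_pos (hWp x), div_le_iff₀ (hWp x)] at this
    exact this
  have key : ∀ δ > 0, ∫ x, |φ x| ^ (2 * (N : ℝ) / ((N : ℝ) - 2))
      ≤ A * ((∫ x, ‖fderiv ℝ φ x‖ ^ 2) / A + δ ^ 2 * ((∫ x, ‖fderiv ℝ (W N) x‖ ^ 2) / A))
        ^ ((N : ℝ) / ((N : ℝ) - 2)) := by
    intro δ hδ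
    have hsp : ∀ x, 0 < φ x ^ 2 + δ ^ 2 * W N x ^ 2 := fun x => by have := hWp x; positivity
    set w : EuclideanSpace ℝ (Fin N) → ℝ := fun x => √(φ x ^ 2 + δ ^ 2 * W N x ^ 2) with hw
    have hwp : ∀ x, 0 < w x := fun x => Real.sqrt_pos.2 (hsp x)
    have hwsq : ∀ x, w x ^ 2 = φ x ^ 2 + δ ^ 2 * W N x ^ 2 := fun x => Real.sq_sqrt (hsp x).le
    have hWc1 : ContDiff ℝ 1 (W N) := hWc.of_le (by simp)
    have hwd : ContDiff ℝ 1 w :=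
      ((hφ.pow 2).add (contDiff_const.mul (hWc1.pow 2))).sqrt fun x => (hsp x).ne'
    have hder : ∀ x, w x • fderiv ℝ w x = φ x • fderiv ℝ φ x + (δ ^ 2 * W N x) • fderiv ℝ (W N) x := by
      intro x
      have d1 := ((hwd.differentiable one_ne_zero) x).hasFDerivAt.pow 2
      have d2 := (((hφ.differentiable one_ne_zero) x).hasFDerivAt.pow 2).add
        ((((hWc1.differentiable one_ne_zero) x).hasFDerivAt.pow 2).const_mul (δ ^ 2))
      have e : (fun x => w x ^ 2) = fun x => φ x ^ 2 + δ ^ 2 * W N x ^ 2 := funext hwsq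
      have := (show HasFDerivAt (fun x => φ x ^ 2 + δ ^ 2 * W N x ^ 2) _ x from e ▸ d1).unique d2
      ext y
      have h := congrArg (fun L => L y) this
      simp at h ⊢
      linarith
    have hbd : ∀ x, ‖fderiv ℝ w x‖ ^ 2 ≤ ‖fderiv ℝ φ x‖ ^ 2 + δ ^ 2 * ‖fderiv ℝ (W N) x‖ ^ 2 := by
      intro x
      have hn := congrArg norm (hder x)
      rw [norm_smul, Real.norm_of_nonneg (hwp x).le] at hn
      have h1 : w x * ‖fderiv ℝ w x‖ ≤ |φ x| * ‖fderiv ℝ φ x‖ + (δ ^ 2 * W N x) * ‖fderiv ℝ (W N) x‖ := by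
        rw [hn]
        refine (norm_add_le _ _).trans ?_
        rw [norm_smul, norm_smul, Real.norm_eq_abs,
          Real.norm_of_nonneg (by have := hWp x; positivity : 0 ≤ δ ^ 2 * W N x)]
      have h2 := pow_le_pow_left₀ (mul_nonneg (hwp x).le (norm_nonneg _)) h1 2
      rw [mul_pow, hwsq] at h2
      have hs := hsp x
      have h3 := sq_abs (φ x)
      rw [← h3] at h2 hs
      generalize |φ x| = f at *
      generalize ‖fderiv ℝ φ x‖ = f' at *
      generalize ‖fderiv ℝ (W N) x‖ = W' at *
      generalize ‖fderiv ℝ w x‖ = w' at *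
      refine le_of_mul_le_mul_left ?_ hs
      nlinarith [sq_nonneg (δ * (f * W' - W N x * f'))]
    have hdom : Integrable (fun x => ‖fderiv ℝ φ x‖ ^ 2 + δ ^ 2 * ‖fderiv ℝ (W N) x‖ ^ 2) :=
      hφi.add (hWi.const_mul _)
    have hwi : Integrable (fun x => ‖fderiv ℝ w x‖ ^ 2) := by
      refine hdom.mono' ((hwd.continuous_fderiv one_ne_zero).norm.pow 2).aestronglyMeasurable
        (ae_of_all _ fun x => ?_)
      rw [Real.norm_of_nonneg (by positivity)]
      exact hbd x
    have hwb : ∃ C, ∀ x, w x ≤ C * W N x := by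
      refine ⟨K + δ, fun x => ?_⟩
      have hk := hK x
      have h0 := abs_nonneg (φ x)
      have hWx := hWp x
      have hK0 : 0 ≤ K := nonneg_of_mul_nonneg_left (h0.trans hk) hWx
      refine Real.sqrt_le_iff.2 ⟨by positivity, ?_⟩
      rw [← sq_abs (φ x)]
      have h4 : |φ x| ^ 2 ≤ (K * W N x) ^ 2 := pow_le_pow_left₀ h0 hk 2
      have h5 : 0 ≤ K * W N x * (δ * W N x) := by positivity
      nlinarith
    obtain ⟨i1, i2⟩ := sobolev_good hN hwd hwp hwb hwi hA
    have hq0 : 0 ≤ 2 * (N : ℝ) / ((N : ℝ) - 2) := by positivity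
    have hl : ∫ x, |φ x| ^ (2 * (N : ℝ) / ((N : ℝ) - 2)) ≤ ∫ x, w x ^ (2 * (N : ℝ) / ((N : ℝ) - 2)) := by
      refine integral_mono_of_nonneg (ae_of_all _ fun x => by positivity) i1 (ae_of_all _ fun x => ?_)
      refine Real.rpow_le_rpow (abs_nonneg _) (Real.le_sqrt_of_sq_le ?_) hq0
      rw [sq_abs]
      have := sq_nonneg (δ * W N x)
      nlinarith
    refine hl.trans (i2.trans ?_)
    refine mul_le_mul_of_nonneg_left (Real.rpow_le_rpow ?_ ?_ (by positivity)) hA0.le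
    · exact div_nonneg (integral_nonneg fun x => by positivity) hA0.le
    · rw [← mul_div_assoc, ← add_div]
      refine div_le_div_of_nonneg_right ?_ hA0.le
      rw [← integral_const_mul, ← integral_add hφi (hWi.const_mul _)]
      exact integral_mono hwi hdom hbd
  have hlim : Tendsto (fun δ : ℝ => A * ((∫ x, ‖fderiv ℝ φ x‖ ^ 2) / A
      + δ ^ 2 * ((∫ x, ‖fderiv ℝ (W N) x‖ ^ 2) / A)) ^ ((N : ℝ) / ((N : ℝ) - 2))) (nhdsWithin 0 (Ioi 0))
      (nhds (A * ((∫ x, ‖fderiv ℝ φ x‖ ^ 2) / A) ^ ((N : ℝ) / ((N : ℝ) - 2)))) := by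
    have hcont : Continuous (fun δ : ℝ => A * ((∫ x, ‖fderiv ℝ φ x‖ ^ 2) / A
      + δ ^ 2 * ((∫ x, ‖fderiv ℝ (W N) x‖ ^ 2) / A)) ^ ((N : ℝ) / ((N : ℝ) - 2))) := by
      refine continuous_const.mul (Continuous.rpow_const (by fun_prop) fun x => Or.inr (by positivity))
    have := hcont.tendsto 0
    simp only [ne_eq, OfNat.ofNat_ne_zero, not_false_eq_true, zero_pow, zero_mul, add_zero] at this
    exact this.mono_left nhdsWithin_le_nhds
  exact ge_of_tendsto hlim (by filter_upwards [self_mem_nhdsWithin] with δ hδ using key δ hδ)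

set_option maxHeartbeats 1000000 in
theorem sobolev_gen {v : EuclideanSpace ℝ (Fin N) → ℝ} (hv : ContDiff ℝ 1 v)
    (hg : Integrable fun x => ‖fderiv ℝ v x‖ ^ 2)
    (hvi : Integrable (fun x => |v x| ^ (2 * (N : ℝ) / ((N : ℝ) - 2))))
    {A : ℝ} (hA : A = ∫ x : EuclideanSpace ℝ (Fin N), (JJ N x ^ N)⁻¹) :
    ∫ x, |v x| ^ (2 * (N : ℝ) / ((N : ℝ) - 2))
      ≤ A * ((∫ x, ‖fderiv ℝ v x‖ ^ 2) / A) ^ ((N : ℝ) / ((N : ℝ) - 2)) := by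
  obtain ⟨h1, h2, h3, h4, h5⟩ := cpos hN
  have hA0 : 0 < A := by rw [hA]; exact A_pos hN
  obtain ⟨χ, C, hC, hχ⟩ := exists_cutoff N
  have hvc := hv.continuous
  have hdc : Continuous (fderiv ℝ v) := hv.continuous_fderiv one_ne_zero
  have hq0 : 0 < 2 * (N : ℝ) / ((N : ℝ) - 2) := by positivity
  set G : ℝ := ∫ x, ‖fderiv ℝ v x‖ ^ 2 with hG
  have hG0 : 0 ≤ G := integral_nonneg fun x => by positivity
  set e : ℝ → ℝ := fun R => ∫ x, (|v x| * ‖fderiv ℝ (χ R) x‖) ^ 2 with he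
  have step : ∀ R > 0, ∫ x, |χ R x * v x| ^ (2 * (N : ℝ) / ((N : ℝ) - 2))
      ≤ A * ((G + 2 * (√G * √(e R)) + e R) / A) ^ ((N : ℝ) / ((N : ℝ) - 2)) := by
    intro R hR
    obtain ⟨hcd, hcs, hc0, hc1, -⟩ := hχ R hR
    have hcdc : Continuous (fderiv ℝ (χ R)) := hcd.continuous_fderiv one_ne_zero
    have hcd1 : ContDiff ℝ 1 (χ R) := hcd.of_le (by simp)
    have hhd : ContDiff ℝ 1 (fun x => χ R x * v x) := hcd1.mul hv
    have hhs : HasCompactSupport (fun x => χ R x * v x) := hcs.mul_right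
    refine (sobolev_cpt hN hhd hhs hA).trans ?_
    refine mul_le_mul_of_nonneg_left (Real.rpow_le_rpow ?_ ?_ (by positivity)) hA0.le
    · exact div_nonneg (integral_nonneg fun x => by positivity) hA0.le
    refine div_le_div_of_nonneg_right ?_ hA0.le
    have sqc : Integrable fun x => (|v x| * ‖fderiv ℝ (χ R) x‖) ^ 2 := by
      refine ((hvc.abs.mul hcdc.norm).pow 2).integrable_of_hasCompactSupport ?_
      have : HasCompactSupport fun x => ‖fderiv ℝ (χ R) x‖ := (hcs.fderiv ℝ).norm
      exact hcs_cut (f := fun x => |v x|) this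
    obtain ⟨j1, k1⟩ := cs (f := fun x => ‖fderiv ℝ v x‖)
      (g := fun x => |v x| * ‖fderiv ℝ (χ R) x‖) (μ := volume)
      (fun x => norm_nonneg _) (fun x => by positivity) hdc.norm.aestronglyMeasurable
      (hvc.abs.mul hcdc.norm).aestronglyMeasurable hg sqc
    have hpt : ∀ x, ‖fderiv ℝ (fun x => χ R x * v x) x‖ ^ 2 ≤ ‖fderiv ℝ v x‖ ^ 2
        + 2 * (‖fderiv ℝ v x‖ * (|v x| * ‖fderiv ℝ (χ R) x‖)) + (|v x| * ‖fderiv ℝ (χ R) x‖) ^ 2 := by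
      intro x
      have d := (((hcd1.differentiable one_ne_zero) x).hasFDerivAt.mul
        ((hv.differentiable one_ne_zero) x).hasFDerivAt).fderiv
      have hle : ‖fderiv ℝ (fun x => χ R x * v x) x‖ ≤ ‖fderiv ℝ v x‖ + |v x| * ‖fderiv ℝ (χ R) x‖ := by
        have d' : fderiv ℝ (fun x => χ R x * v x) x = χ R x • fderiv ℝ v x + v x • fderiv ℝ (χ R) x := d
        rw [d']
        refine (norm_add_le _ _).trans ?_
        rw [norm_smul, norm_smul, Real.norm_of_nonneg (hc0 x), Real.norm_eq_abs]
        have := mul_le_of_le_one_left (norm_nonneg (fderiv ℝ v x)) (hc1 x)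
        linarith
      have := pow_le_pow_left₀ (norm_nonneg _) hle 2
      refine this.trans (le_of_eq ?_)
      ring
    have hi1 : Integrable fun x => ‖fderiv ℝ v x‖ ^ 2
        + 2 * (‖fderiv ℝ v x‖ * (|v x| * ‖fderiv ℝ (χ R) x‖)) := hg.add (j1.const_mul 2)
    have := integral_mono_of_nonneg (ae_of_all volume fun x => by positivity) (hi1.add sqc)
      (ae_of_all _ hpt)
    refine this.trans ?_
    simp only [Pi.add_apply]
    rw [integral_add hi1 sqc, integral_add hg (j1.const_mul 2), integral_const_mul]
    have := mul_le_mul_of_nonneg_left k1 (by norm_num : (0:ℝ) ≤ 2)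
    linarith
  have lim1 : Tendsto (fun R => ∫ x, |χ R x * v x| ^ (2 * (N : ℝ) / ((N : ℝ) - 2))) atTop
      (nhds (∫ x, |v x| ^ (2 * (N : ℝ) / ((N : ℝ) - 2)))) := by
    refine tendsto_integral_filter_of_dominated_convergence
      (fun x => |v x| ^ (2 * (N : ℝ) / ((N : ℝ) - 2))) ?_ ?_ hvi ?_
    · filter_upwards [eventually_gt_atTop 0] with R hR
      exact (((hχ R hR).1.continuous.mul hvc).abs.rpow_const
        fun x => Or.inr hq0.le).aestronglyMeasurable
    · filter_upwards [eventually_gt_atTop 0] with R hR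
      refine ae_of_all _ fun x => ?_
      obtain ⟨-, -, hc0, hc1, -⟩ := hχ R hR
      rw [Real.norm_of_nonneg (by positivity)]
      refine Real.rpow_le_rpow (abs_nonneg _) ?_ hq0.le
      rw [abs_mul, abs_of_nonneg (hc0 x)]
      exact mul_le_of_le_one_left (abs_nonneg _) (hc1 x)
    · refine ae_of_all _ fun x => ?_
      refine tendsto_const_nhds.congr' ?_
      filter_upwards [eventually_ge_atTop ‖x‖, eventually_gt_atTop 0] with R hR hR0
      rw [(hχ R hR0).2.2.2.2.1 x hR, one_mul]
  have lim2 : Tendsto e atTop (nhds 0) := cut_tendsto hN hC hχ hvc hvi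
  have hcont : Continuous (fun t : ℝ => A * ((G + 2 * (√G * √t) + t) / A) ^ ((N : ℝ) / ((N : ℝ) - 2))) := by
    refine continuous_const.mul (Continuous.rpow_const (by fun_prop) fun x => Or.inr (by positivity))
  have lim3 := (hcont.tendsto 0).comp lim2
  simp only [Real.sqrt_zero, mul_zero, add_zero] at lim3
  exact le_of_tendsto_of_tendsto lim1 lim3 ((eventually_gt_atTop 0).mono fun R hR => step R hR)

end

/-- Claim 2.2, second part: there are constants `c > 0` and `ε₀ > 0` such that any `v`
with `ε ≤ ‖∇v‖² ≤ (N/(N-2))^((N-2)/2) ‖∇W‖² - ε` (for `0 < ε ≤ ε₀`) has `E(v,0) ≥ cε`. -/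
theorem stmt1 (N : ℕ) (hN : N = 3 ∨ N = 4 ∨ N = 5) :
    ∃ c > (0 : ℝ), ∃ ε₀ > (0 : ℝ), ∀ ε : ℝ, 0 < ε → ε ≤ ε₀ →
      ∀ v : EuclideanSpace ℝ (Fin N) → ℝ,
        ContDiff ℝ 1 v →
        Integrable (fun x => ‖gradient v x‖ ^ 2) →
        Integrable (fun x => |v x| ^ (2 * (N : ℝ) / ((N : ℝ) - 2))) →
        ε ≤ (∫ x, ‖gradient v x‖ ^ 2) →
        (∫ x, ‖gradient v x‖ ^ 2)
          ≤ ((N : ℝ) / ((N : ℝ) - 2)) ^ (((N : ℝ) - 2) / 2)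
              * (∫ x, ‖gradient (W N) x‖ ^ 2) - ε →
        c * ε ≤ energy N v 0 := by
  have hN3 : 3 ≤ N := by omega
  have hN5 : (N:ℝ) ≤ 5 := by exact_mod_cast (by omega : N ≤ 5)
  obtain ⟨h1, h2, h3, h4, h5⟩ := cpos hN3
  obtain ⟨A, hA⟩ : ∃ A, A = ∫ x : EuclideanSpace ℝ (Fin N), (JJ N x ^ N)⁻¹ := ⟨_, rfl⟩
  have hA0 : 0 < A := by rw [hA]; exact A_pos hN3
  rw [W_grad_total hN3, ← hA]
  obtain ⟨k, hk⟩ : ∃ k, k = ((N : ℝ) / ((N : ℝ) - 2)) ^ (((N : ℝ) - 2) / 2) := ⟨_, rfl⟩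
  have hk0 : 0 < k := by rw [hk]; positivity
  have hkθ : k ^ (2 / ((N:ℝ) - 2)) = (N : ℝ) / ((N : ℝ) - 2) := by
    rw [hk, ← Real.rpow_mul (by positivity)]
    rw [show ((N : ℝ) - 2) / 2 * (2 / ((N:ℝ) - 2)) = 1 by field_simp, Real.rpow_one]
  rw [← hk]
  refine ⟨1 / 6, by norm_num, k * A / 2, by positivity, ?_⟩
  intro ε hε hε0 v hv hg hvi hy1 hy2
  have hs := sobolev_gen hN3 hv (by simpa only [norm_grad_eq] using hg) hvi hA
  simp only [← norm_grad_eq] at hs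
  unfold energy
  simp only [Pi.zero_apply, ne_eq, OfNat.ofNat_ne_zero, not_false_eq_true, zero_pow,
    integral_zero, mul_zero, zero_add]
  generalize (∫ x, ‖gradient v x‖ ^ 2) = y at *
  generalize (∫ x, |v x| ^ (2 * (N : ℝ) / ((N : ℝ) - 2))) = S at *
  have hy0 : 0 < y := hε.trans_le hy1
  have hY : 0 < k * A := by positivity
  have hz0 : 0 < y / (k * A) := by positivity
  have hz1 : y / (k * A) ≤ 1 := by rw [div_le_one hY]; linarith
  have hS : ((N:ℝ) - 2) / N * S ≤ y * (y / (k * A)) ^ (2 / ((N:ℝ) - 2)) := by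
    have e1 : A * (y / A) ^ ((N : ℝ) / ((N : ℝ) - 2))
        = y * ((N : ℝ) / ((N : ℝ) - 2)) * (y / (k * A)) ^ (2 / ((N:ℝ) - 2)) := by
      rw [show (N : ℝ) / ((N : ℝ) - 2) = 1 + 2 / ((N:ℝ) - 2) by field_simp; ring,
        Real.rpow_add (by positivity), Real.rpow_one,
        show (1 + 2 / ((N:ℝ) - 2)) = (N : ℝ) / ((N : ℝ) - 2) by field_simp; ring, ← hkθ,
        mul_assoc y, ← Real.mul_rpow hk0.le hz0.le]
      rw [show k * (y / (k * A)) = y / A by field_simp]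
      field_simp
    rw [e1] at hs
    refine (mul_le_mul_of_nonneg_left hs (by positivity : 0 ≤ ((N:ℝ) - 2) / N)).trans (le_of_eq ?_)
    field_simp
  have hθ : (y / (k * A)) ^ (2 / ((N:ℝ) - 2)) ≤ 1 - 2 / 3 * (1 - y / (k * A)) := by
    have a1 : (y / (k * A)) ^ (2 / ((N:ℝ) - 2)) ≤ (y / (k * A)) ^ (2 / 3 : ℝ) := by
      refine Real.rpow_le_rpow_of_exponent_ge hz0 hz1 ?_
      rw [div_le_div_iff₀ (by norm_num) (by linarith)]
      linarith
    have a2 := rpow_one_add_le_one_add_mul_self (s := y / (k * A) - 1) (by linarith)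
      (p := 2 / 3) (by norm_num) (by norm_num)
    rw [add_sub_cancel] at a2
    linarith
  have hE : y * (1 - y / (k * A)) ≥ ε / 2 := by
    rw [show y * (1 - y / (k * A)) = y * (k * A - y) / (k * A) by field_simp, ge_iff_le,
      le_div_iff₀ hY]
    generalize k * A = Y at *
    rcases le_total y (Y / 2) with h | h
    · nlinarith
    · nlinarith
  have hm := mul_le_mul_of_nonneg_left hθ hy0.le
  have hr : ((N:ℝ) - 2) / (2 * N) * S = 1 / 2 * (((N:ℝ) - 2) / N * S) := by field_simp
  rw [hr]
  nlinarith

end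
end
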